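/- Let ω be an irrational number of bounded type. For every κ > 0 there exist a 1-periodic C^∞ function v : ℝ → ℝ and a sequence (v_n) of 1-periodic C^∞ functions v_n : ℝ → ℝ such that: (i) L(S_v) ≥ κ; (ii) for every n, L(S_{v_n}) = 0, i.e. the sequence (1/m)∫₀¹ log‖S_{v_n}^m(x)‖ dx tends to 0 as m → ∞; and (iii) for every l ∈ ℕ, ‖v_n − v‖_{C^l} → 0 as n → ∞. -/

import Mathlib

open Real MeasureTheory Filter

/-- Operator norm of a 2×2 real matrix, acting on Euclidean space. -/
noncomputable def opNorm (A : Matrix (Fin 2) (Fin 2) ℝ) : ℝ :=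
  ‖(Matrix.toEuclideanCLM (𝕜 := ℝ) A : EuclideanSpace ℝ (Fin 2) →L[ℝ] EuclideanSpace ℝ (Fin 2))‖

/-- Iterates of the quasi-periodic cocycle: A^n(x) = A(x+(n-1)ω)⋯A(x+ω)A(x). -/
noncomputable def cocycle (ω : ℝ) (A : ℝ → Matrix (Fin 2) (Fin 2) ℝ) :
    ℕ → ℝ → Matrix (Fin 2) (Fin 2) ℝ
  | 0, _ => 1
  | n + 1, x => A (x + n * ω) * cocycle ω A n x

/-- Finite Lyapunov exponents L_n(A) = (1/n) ∫₀¹ log ‖A^n(x)‖ dx. -/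
noncomputable def LEn (ω : ℝ) (A : ℝ → Matrix (Fin 2) (Fin 2) ℝ) (n : ℕ) : ℝ :=
  (1 / n) * ∫ x in (0:ℝ)..1, Real.log (opNorm (cocycle ω A n x))

/-- The Schrödinger cocycle S_v(x) = [[v(x), -1],[1,0]]. -/
def SchrodingerCocycle (v : ℝ → ℝ) (x : ℝ) : Matrix (Fin 2) (Fin 2) ℝ := !![v x, -1; 1, 0]

/-- The denominators of the continued fraction convergents of ω. -/
noncomputable def cfDen (ω : ℝ) (k : ℕ) : ℝ := (GenContFract.of ω).dens k


theorem opNorm_mul (A B : Matrix (Fin 2) (Fin 2) ℝ) : opNorm (A * B) ≤ opNorm A * opNorm B := by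
  unfold opNorm
  rw [map_mul]
  exact norm_mul_le _ _

theorem opNorm_continuous : Continuous opNorm := by
  unfold opNorm
  apply Continuous.norm
  exact LinearMap.continuous_of_finiteDimensional
    ((Matrix.toEuclideanCLM (n := Fin 2) (𝕜 := ℝ)).toAlgEquiv.toLinearMap)

theorem entry_le_opNorm (A : Matrix (Fin 2) (Fin 2) ℝ) (i j : Fin 2) : |A i j| ≤ opNorm A := by
  unfold opNorm
  have h1 := (Matrix.toEuclideanCLM (𝕜 := ℝ) A).le_opNorm (EuclideanSpace.single j (1:ℝ))
  have h2 := PiLp.norm_apply_le ((Matrix.toEuclideanCLM (𝕜 := ℝ) A) (EuclideanSpace.single j (1:ℝ))) i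
  rw [PiLp.norm_single] at h1
  have h3 : ((Matrix.toEuclideanCLM (𝕜 := ℝ) A) (EuclideanSpace.single j (1:ℝ))) i = A i j := by
    rw [Matrix.ofLp_toEuclideanCLM]
    simp
  rw [h3] at h2
  simp only [norm_one, mul_one] at h1
  exact h2.trans h1

theorem opNorm_le_sum (A : Matrix (Fin 2) (Fin 2) ℝ) :
    opNorm A ≤ |A 0 0| + |A 0 1| + |A 1 0| + |A 1 1| := by
  unfold opNorm
  refine ContinuousLinearMap.opNorm_le_bound _ (by positivity) ?_
  intro x
  have hx : ∀ i, |x i| ≤ ‖x‖ := fun i => PiLp.norm_apply_le x i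
  have key : ∀ y : EuclideanSpace ℝ (Fin 2), ‖y‖ ≤ |y 0| + |y 1| := by
    intro y
    rw [EuclideanSpace.norm_eq]
    apply Real.sqrt_le_iff.mpr
    constructor
    · positivity
    · simp [Fin.sum_univ_two]
      nlinarith [abs_nonneg (y 0), abs_nonneg (y 1), sq_abs (y 0), sq_abs (y 1)]
  refine (key _).trans ?_
  have e : ∀ i, ((Matrix.toEuclideanCLM (𝕜 := ℝ) A) x) i = A i 0 * x 0 + A i 1 * x 1 := by
    intro i
    rw [Matrix.ofLp_toEuclideanCLM]
    simp [Matrix.mulVec, dotProduct, Fin.sum_univ_two]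
  rw [e, e]
  have t : ∀ i, |A i 0 * x 0 + A i 1 * x 1| ≤ (|A i 0| + |A i 1|) * ‖x‖ := by
    intro i
    calc |A i 0 * x 0 + A i 1 * x 1| ≤ |A i 0 * x 0| + |A i 1 * x 1| := abs_add_le _ _
      _ = |A i 0| * |x 0| + |A i 1| * |x 1| := by rw [abs_mul, abs_mul]
      _ ≤ |A i 0| * ‖x‖ + |A i 1| * ‖x‖ := by
        gcongr <;> apply hx
      _ = _ := by ring
  have := t 0
  have := t 1
  linarith

theorem opNorm_pos_of_det {A : Matrix (Fin 2) (Fin 2) ℝ} (h : A.det = 1) :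
    1 / 2 ≤ opNorm A := by
  rw [Matrix.det_fin_two] at h
  have a := entry_le_opNorm A 0 0
  have b := entry_le_opNorm A 0 1
  have c := entry_le_opNorm A 1 0
  have d := entry_le_opNorm A 1 1
  have h0 : 0 ≤ opNorm A := (abs_nonneg _).trans a
  by_contra hc
  push Not at hc
  have h1 : |A 0 0 * A 1 1| ≤ opNorm A * opNorm A := by
    rw [abs_mul]; exact mul_le_mul a d (abs_nonneg _) h0
  have h2 : |A 0 1 * A 1 0| ≤ opNorm A * opNorm A := by
    rw [abs_mul]; exact mul_le_mul b c (abs_nonneg _) h0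
  have := abs_le.mp h1
  have := abs_le.mp h2
  nlinarith

theorem cocycle_det (ω : ℝ) (v : ℝ → ℝ) (n : ℕ) (x : ℝ) :
    (cocycle ω (SchrodingerCocycle v) n x).det = 1 := by
  induction n with
  | zero => simp [cocycle]
  | succ n ih =>
    rw [cocycle, Matrix.det_mul, ih]
    simp [SchrodingerCocycle, Matrix.det_fin_two]

theorem cocycle_continuous (ω : ℝ) (v : ℝ → ℝ) (hv : Continuous v) (n : ℕ) :
    Continuous (cocycle ω (SchrodingerCocycle v) n) := by
  induction n with
  | zero =>
    have : cocycle ω (SchrodingerCocycle v) 0 = fun _ => 1 := by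
      funext x; simp [cocycle]
    rw [this]; exact continuous_const
  | succ n ih =>
    have : cocycle ω (SchrodingerCocycle v) (n+1) =
      fun x => SchrodingerCocycle v (x + n * ω) * cocycle ω (SchrodingerCocycle v) n x := by
      funext x; simp [cocycle]
    rw [this]
    apply Continuous.mul _ ih
    have h2 : Continuous (SchrodingerCocycle v) := by
      unfold SchrodingerCocycle
      apply continuous_matrix
      intro i j
      fin_cases i <;> fin_cases j <;> simp <;> fun_prop
    exact h2.comp (by fun_prop)

theorem cocycle_add (ω : ℝ) (A : ℝ → Matrix (Fin 2) (Fin 2) ℝ) (m n : ℕ) (x : ℝ) :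
    cocycle ω A (m + n) x = cocycle ω A m (x + n * ω) * cocycle ω A n x := by
  induction m with
  | zero => simp [cocycle]
  | succ m ih =>
    rw [show m + 1 + n = (m + n) + 1 by ring, cocycle, ih, cocycle, Matrix.mul_assoc]
    congr 2
    push_cast; ring

theorem cocycle_periodic (ω : ℝ) (v : ℝ → ℝ) (hv : Function.Periodic v 1) (n : ℕ) :
    Function.Periodic (cocycle ω (SchrodingerCocycle v) n) 1 := by
  intro x
  induction n with
  | zero => simp [cocycle]
  | succ n ih =>
    rw [cocycle, cocycle, ih]
    congr 1
    unfold SchrodingerCocycle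
    rw [show x + 1 + n * ω = x + n * ω + 1 by ring, hv]

theorem logNorm_continuous (ω : ℝ) (v : ℝ → ℝ) (hv : Continuous v) (n : ℕ) :
    Continuous (fun x => Real.log (opNorm (cocycle ω (SchrodingerCocycle v) n x))) := by
  apply Continuous.log
  · exact opNorm_continuous.comp (cocycle_continuous ω v hv n)
  · intro x
    have := opNorm_pos_of_det (cocycle_det ω v n x)
    linarith

theorem integral_shift (g : ℝ → ℝ) (hp : Function.Periodic g 1) (a : ℝ) :
    ∫ x in (0:ℝ)..1, g (x + a) = ∫ x in (0:ℝ)..1, g x := by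
  rw [intervalIntegral.integral_comp_add_right g a]
  have := hp.intervalIntegral_add_eq a 0
  simpa [add_comm] using this

theorem LE_exists (ω : ℝ) (v : ℝ → ℝ) (hv : Continuous v) (hp : Function.Periodic v 1) :
    ∃ L, Tendsto (fun m => LEn ω (SchrodingerCocycle v) m) atTop (nhds L) := by
  set u : ℕ → ℝ := fun m => ∫ x in (0:ℝ)..1, Real.log (opNorm (cocycle ω (SchrodingerCocycle v) m x)) with hu
  have hsub : Subadditive u := by
    intro m n
    have hc := fun n => logNorm_continuous ω v hv n
    have hsh : ∫ x in (0:ℝ)..1, Real.log (opNorm (cocycle ω (SchrodingerCocycle v) m (x + n * ω))) = u m := by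
      refine integral_shift (fun x => Real.log (opNorm (cocycle ω (SchrodingerCocycle v) m x))) ?_ _
      intro x
      simp only [cocycle_periodic ω v hp m x]
    have hcs : Continuous (fun x => Real.log (opNorm (cocycle ω (SchrodingerCocycle v) m (x + n * ω)))) :=
      (hc m).comp (by fun_prop : Continuous fun x : ℝ => x + n * ω)
    rw [← hsh]
    simp only [hu]
    rw [← intervalIntegral.integral_add (hcs.intervalIntegrable _ _) ((hc n).intervalIntegrable _ _)]
    apply intervalIntegral.integral_mono_on (by norm_num) ((hc _).intervalIntegrable _ _)
      ((hcs.add (hc n)).intervalIntegrable _ _)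
    intro x _
    have p1 := opNorm_pos_of_det (cocycle_det ω v n x)
    have p2 := opNorm_pos_of_det (cocycle_det ω v m (x + n * ω))
    have p3 := opNorm_pos_of_det (cocycle_det ω v (m+n) x)
    show _ ≤ Real.log _ + Real.log _
    rw [← Real.log_mul (by linarith) (by linarith)]
    apply Real.log_le_log (by linarith)
    rw [cocycle_add]
    exact opNorm_mul _ _
  refine ⟨hsub.lim, ?_⟩
  have hb : BddBelow (Set.range fun n => u n / n) := by
    refine ⟨-Real.log 2, ?_⟩
    rintro _ ⟨n, rfl⟩
    have h1 : -Real.log 2 ≤ u n := by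
      have : ∫ x in (0:ℝ)..1, -Real.log 2 ≤ u n := by
        apply intervalIntegral.integral_mono_on (by norm_num) (by simp)
          ((logNorm_continuous ω v hv n).intervalIntegrable _ _)
        intro x _
        have p1 := opNorm_pos_of_det (cocycle_det ω v n x)
        rw [← Real.log_inv]
        apply Real.log_le_log (by norm_num)
        linarith
      simpa using this
    have l2 : 0 ≤ Real.log 2 := Real.log_nonneg (by norm_num)
    rcases Nat.eq_zero_or_pos n with h | h
    · subst h; simp [l2]
    · have hn : (1:ℝ) ≤ n := by exact_mod_cast h
      show _ ≤ u n / n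
      rw [le_div_iff₀ (by linarith)]
      nlinarith
  have := hsub.tendsto_lim hb
  refine this.congr ?_
  intro n
  simp only [LEn, hu]
  ring


theorem cocycle_succ0 (ω : ℝ) (v : ℝ → ℝ) (n : ℕ) (x : ℝ) (k : Fin 2) :
    cocycle ω (SchrodingerCocycle v) (n+1) x 0 k =
      v (x + n * ω) * cocycle ω (SchrodingerCocycle v) n x 0 k - cocycle ω (SchrodingerCocycle v) n x 1 k := by
  rw [cocycle, Matrix.mul_apply]
  simp [SchrodingerCocycle, Fin.sum_univ_two]
  ring

theorem cocycle_succ1 (ω : ℝ) (v : ℝ → ℝ) (n : ℕ) (x : ℝ) (k : Fin 2) :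
    cocycle ω (SchrodingerCocycle v) (n+1) x 1 k = cocycle ω (SchrodingerCocycle v) n x 0 k := by
  rw [cocycle, Matrix.mul_apply]
  simp [SchrodingerCocycle, Fin.sum_univ_two]

theorem zero_growth (ω : ℝ) (v f : ℝ → ℝ) (a b : ℝ) (ha : 0 < a) (hfa : ∀ x, a ≤ f x) (hfb : ∀ x, f x ≤ b)
    (hv : ∀ x, v x * f x = f (x + ω) + f (x - ω)) (x : ℝ) (k : Fin 2) (n : ℕ) :
    |cocycle ω (SchrodingerCocycle v) n x 0 k| ≤ (b/a)^2 * (n + 1) ∧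
    |cocycle ω (SchrodingerCocycle v) n x 1 k| ≤ (b/a)^2 * (n + 1) := by
  have hab : a ≤ b := (hfa 0).trans (hfb 0)
  have hb : 0 < b := by linarith
  have hR : 1 ≤ b / a := by rw [le_div_iff₀ ha]; linarith
  have fp : ∀ x, 0 < f x := fun x => ha.trans_le (hfa x)
  have W : ∀ n : ℕ, |cocycle ω (SchrodingerCocycle v) n x 0 k * f (x + (n - 1) * ω)
      - cocycle ω (SchrodingerCocycle v) n x 1 k * f (x + n * ω)| ≤ b := by
    intro n
    induction n with
    | zero =>
      have h1 := fp (x + (0 - 1) * ω)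
      have h2 := fp x
      have h3 := hfb (x + (0 - 1) * ω)
      have h4 := hfb x
      rcases (by decide : ∀ k : Fin 2, k = 0 ∨ k = 1) k with rfl | rfl
      · simp [cocycle] at h1 h3 ⊢
        rw [abs_of_pos h1]; exact h3
      · simp [cocycle]
        rw [abs_of_pos h2]; exact h4
    | succ n ih =>
      convert ih using 2
      rw [cocycle_succ0, cocycle_succ1]
      have := hv (x + n * ω)
      rw [show x + n * ω + ω = x + (n+1) * ω by ring, show x + n * ω - ω = x + (n-1) * ω by ring] at this
      push_cast
      rw [show ((n:ℝ) + 1 - 1) = n by ring]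
      linear_combination cocycle ω (SchrodingerCocycle v) n x 0 k * this
  have A : ∀ n : ℕ, |cocycle ω (SchrodingerCocycle v) n x 0 k| / f (x + n * ω) ≤ 1 / a + n * (b / a^2) := by
    intro n
    induction n with
    | zero =>
      have h1 : |cocycle ω (SchrodingerCocycle v) 0 x 0 k| ≤ 1 := by
        rcases (by decide : ∀ k : Fin 2, k = 0 ∨ k = 1) k with rfl | rfl <;> simp [cocycle]
      simp only [Nat.cast_zero, zero_mul, add_zero]
      exact div_le_div₀ zero_le_one h1 ha (hfa x)
    | succ n ih =>
      have h1 := W (n+1)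
      rw [cocycle_succ1] at h1
      push_cast at h1 ⊢
      rw [show ((n:ℝ) + 1 - 1) = n by ring] at h1
      set p := cocycle ω (SchrodingerCocycle v) n x 0 k
      set p' := cocycle ω (SchrodingerCocycle v) (n+1) x 0 k
      set F := f (x + n * ω)
      set F' := f (x + (n + 1) * ω)
      have hF : 0 < F := fp _
      have hF' : 0 < F' := fp _
      have hFa : a ≤ F := hfa _
      have hFa' : a ≤ F' := hfa _
      have h2 : |p'| * F ≤ b + |p| * F' := by
        calc |p'| * F = |p' * F| := by rw [abs_mul, abs_of_pos hF]
          _ = |(p' * F - p * F') + p * F'| := by ring_nf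
          _ ≤ |p' * F - p * F'| + |p * F'| := abs_add_le _ _
          _ ≤ _ := by rw [abs_mul p, abs_of_pos hF']; linarith
      have h3 : |p'| / F' ≤ b / (F * F') + |p| / F := by
        rw [div_add_div _ _ (by positivity) (by positivity), div_le_div_iff₀ (by positivity) (by positivity)]
        have := mul_le_mul_of_nonneg_left h2 (show 0 ≤ F * F' by positivity)
        nlinarith
      have h4 : b / (F * F') ≤ b / a^2 := by
        apply div_le_div_of_nonneg_left hb.le (by positivity)
        nlinarith
      linarith
  have B : ∀ n : ℕ, |cocycle ω (SchrodingerCocycle v) n x 0 k| ≤ (b/a)^2 * (n+1) := by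
    intro n
    have h1 := A n
    rw [div_le_iff₀ (fp _)] at h1
    have h2 : (1 / a + n * (b / a^2)) * f (x + n * ω) ≤ (1 / a + n * (b / a^2)) * b :=
      mul_le_mul_of_nonneg_left (hfb _) (by positivity)
    have h3 : (1 / a + n * (b / a^2)) * b = b/a + n * (b/a)^2 := by
      field_simp
    nlinarith
  refine ⟨B n, ?_⟩
  cases n with
  | zero =>
    have h1 : |cocycle ω (SchrodingerCocycle v) 0 x 1 k| ≤ 1 := by
        rcases (by decide : ∀ k : Fin 2, k = 0 ∨ k = 1) k with rfl | rfl <;> simp [cocycle]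
    simp
    nlinarith
  | succ n =>
    rw [cocycle_succ1]
    refine (B n).trans ?_
    push_cast
    gcongr
    linarith

theorem zero_LE (ω : ℝ) (v f : ℝ → ℝ) (a b : ℝ) (ha : 0 < a) (hfa : ∀ x, a ≤ f x) (hfb : ∀ x, f x ≤ b)
    (hv : ∀ x, v x * f x = f (x + ω) + f (x - ω)) (hc : Continuous v) :
    Tendsto (fun m => LEn ω (SchrodingerCocycle v) m) atTop (nhds 0) := by
  have hab : a ≤ b := (hfa 0).trans (hfb 0)
  have hb : 0 < b := by linarith
  set R := (b/a)^2 with hR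
  have hRp : 0 < R := by positivity
  have up : ∀ m : ℕ, ∀ x, Real.log (opNorm (cocycle ω (SchrodingerCocycle v) m x)) ≤ Real.log (4 * R) + Real.log ((m:ℝ) + 1) := by
    intro m x
    have p1 := opNorm_pos_of_det (cocycle_det ω v m x)
    rw [← Real.log_mul (by positivity) (by positivity)]
    apply Real.log_le_log (by linarith)
    have := opNorm_le_sum (cocycle ω (SchrodingerCocycle v) m x)
    have h0 := zero_growth ω v f a b ha hfa hfb hv x 0 m
    have h1 := zero_growth ω v f a b ha hfa hfb hv x 1 m
    linarith [h0.1, h0.2, h1.1, h1.2]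
  have lo : ∀ m : ℕ, ∀ x, -Real.log 2 ≤ Real.log (opNorm (cocycle ω (SchrodingerCocycle v) m x)) := by
    intro m x
    have p1 := opNorm_pos_of_det (cocycle_det ω v m x)
    rw [← Real.log_inv]
    apply Real.log_le_log (by norm_num)
    linarith
  have ii := fun m => (logNorm_continuous ω v hc m).intervalIntegrable (μ := volume) 0 1
  have lim1 : Tendsto (fun m : ℕ => (1 / (m:ℝ)) * (-Real.log 2)) atTop (nhds 0) := by
    have := (tendsto_one_div_atTop_nhds_zero_nat (𝕜 := ℝ)).mul_const (-Real.log 2)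
    simpa using this
  have lim2 : Tendsto (fun m : ℕ => (1 / (m:ℝ)) * (Real.log (4 * R) + Real.log ((m:ℝ) + 1))) atTop (nhds 0) := by
    have t1 := (tendsto_one_div_atTop_nhds_zero_nat (𝕜 := ℝ)).mul_const (Real.log (4 * R) + Real.log 2)
    have t2 : Tendsto (fun m : ℕ => Real.log (m:ℝ) / (m:ℝ)) atTop (nhds 0) := by
      have := (Real.isLittleO_log_id_atTop.tendsto_div_nhds_zero).comp (tendsto_natCast_atTop_atTop (R := ℝ))
      simpa [Function.comp_def] using this
    have t3 := t1.add t2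
    rw [zero_mul, zero_add] at t3
    refine squeeze_zero' ?_ ?_ t3
    · filter_upwards [eventually_ge_atTop 1] with m hm
      have hR4 : 1 ≤ 4 * R := by
        have : 1 ≤ b / a := by rw [le_div_iff₀ ha]; linarith
        nlinarith
      have := Real.log_nonneg hR4
      have h2 := Real.log_nonneg (show (1:ℝ) ≤ (m:ℝ) + 1 by linarith [Nat.cast_nonneg (α := ℝ) m])
      positivity
    · filter_upwards [eventually_ge_atTop 1] with m hm
      have hm' : (1:ℝ) ≤ m := by exact_mod_cast hm
      have : Real.log ((m:ℝ) + 1) ≤ Real.log 2 + Real.log m := by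
        rw [← Real.log_mul (by norm_num) (by linarith)]
        apply Real.log_le_log <;> linarith
      rw [show 1 / (m:ℝ) * (Real.log (4 * R) + Real.log 2) + Real.log m / m = 1 / (m:ℝ) * (Real.log (4 * R) + (Real.log 2 + Real.log m)) by ring]
      gcongr
  refine tendsto_of_tendsto_of_tendsto_of_le_of_le lim1 lim2 ?_ ?_
  · intro m
    simp only [LEn]
    gcongr
    have : ∫ x in (0:ℝ)..1, -Real.log 2 ≤ ∫ x in (0:ℝ)..1, Real.log (opNorm (cocycle ω (SchrodingerCocycle v) m x)) := by
      apply intervalIntegral.integral_mono_on (by norm_num) (by simp) (ii m)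
      intro x _; exact lo m x
    simpa using this
  · intro m
    simp only [LEn]
    gcongr
    have : ∫ x in (0:ℝ)..1, Real.log (opNorm (cocycle ω (SchrodingerCocycle v) m x)) ≤ ∫ x in (0:ℝ)..1, (Real.log (4 * R) + Real.log ((m:ℝ) + 1)) := by
      apply intervalIntegral.integral_mono_on (by norm_num) (ii m) (by simp)
      intro x _; exact up m x
    simpa using this

/-- Comparison of Dirichlet determinants. -/
theorem det_compare (ω : ℝ) (f v0 q q' θ : ℝ → ℝ) (hf : ∀ x, 0 < f x)
    (hv : ∀ x, v0 x * f x = f (x + ω) + f (x - ω)) (hq : ∀ x, 0 ≤ q x) (hθ : ∀ x, 0 ≤ θ x)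
    (hq' : ∀ x, Real.exp (-θ x) * q x ≤ q' x) (x : ℝ) (m : ℕ) :
    0 < cocycle ω (SchrodingerCocycle (fun y => v0 y + q y)) m x 0 0 ∧
    Real.exp (-∑ i ∈ Finset.range m, θ (x + i * ω)) * cocycle ω (SchrodingerCocycle (fun y => v0 y + q y)) m x 0 0
      ≤ cocycle ω (SchrodingerCocycle (fun y => v0 y + q' y)) m x 0 0 := by
  set V := fun y => v0 y + q y with hV
  set V' := fun y => v0 y + q' y with hV'
  set a := fun n : ℕ => cocycle ω (SchrodingerCocycle V) n x 0 0 with ha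
  set b := fun n : ℕ => cocycle ω (SchrodingerCocycle V) n x 1 0 with hb
  set a' := fun n : ℕ => cocycle ω (SchrodingerCocycle V') n x 0 0 with ha'
  set b' := fun n : ℕ => cocycle ω (SchrodingerCocycle V') n x 1 0 with hb'
  set F := fun n : ℝ => f (x + n * ω) with hF
  set G := fun n : ℕ => Real.exp (-∑ i ∈ Finset.range n, θ (x + i * ω)) with hG
  suffices H : ∀ n : ℕ, 0 < a n ∧ 0 < a n * F (n-1) - b n * F n ∧ G n * a n ≤ a' n ∧
      G n * (a n * F (n-1) - b n * F n) ≤ a' n * F (n-1) - b' n * F n from ⟨(H m).1, (H m).2.2.1⟩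
  intro n
  induction n with
  | zero =>
    have := hf (x - ω)
    simp [ha, hb, ha', hb', hG, cocycle, hF]
    convert this using 2
    ring
  | succ n ih =>
    obtain ⟨i1, i2, i3, i4⟩ := ih
    have Fp : ∀ n, 0 < F n := fun n => hf _
    have h0 : v0 (x + n * ω) * F n = F (n+1) + F (n-1) := by
      have := hv (x + n * ω)
      simp only [hF]
      convert this using 3 <;> ring
    have hq0 := hq (x + n * ω)
    have hqq := hq' (x + n * ω)
    have hθ0 := hθ (x + n * ω)
    have hGs : G (n+1) = G n * Real.exp (-θ (x + n * ω)) := by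
      simp only [hG]
      rw [Finset.sum_range_succ, neg_add, Real.exp_add]
    have hGp : 0 < G n := Real.exp_pos _
    have he : Real.exp (-θ (x + n * ω)) ≤ 1 := Real.exp_le_one_iff.mpr (by linarith)
    have hep : 0 < Real.exp (-θ (x + n * ω)) := Real.exp_pos _
    have e1 : a (n+1) = (v0 (x + n * ω) + q (x + n * ω)) * a n - b n := cocycle_succ0 ω V n x 0
    have e2 : b (n+1) = a n := cocycle_succ1 ω V n x 0
    have e1' : a' (n+1) = (v0 (x + n * ω) + q' (x + n * ω)) * a' n - b' n := cocycle_succ0 ω V' n x 0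
    have e2' : b' (n+1) = a' n := cocycle_succ1 ω V' n x 0
    push_cast
    rw [show ((n:ℝ) + 1 - 1) = n by ring]
    set qn := q (x + n * ω)
    set qn' := q' (x + n * ω)
    set ε := Real.exp (-θ (x + n * ω))
    set v := v0 (x + n * ω)
    have P1 : a (n+1) * F n - b (n+1) * F (n+1) = (a n * F (n-1) - b n * F n) + qn * a n * F n := by
      rw [e1, e2]; linear_combination a n * h0
    have P1' : a' (n+1) * F n - b' (n+1) * F (n+1) = (a' n * F (n-1) - b' n * F n) + qn' * a' n * F n := by
      rw [e1', e2']; linear_combination a' n * h0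
    have Q2 : 0 < a (n+1) * F n - b (n+1) * F (n+1) := by
      rw [P1]
      have : 0 ≤ qn * a n * F n := mul_nonneg (mul_nonneg hq0 i1.le) (Fp _).le
      linarith
    have Q4 : G (n+1) * (a (n+1) * F n - b (n+1) * F (n+1)) ≤ a' (n+1) * F n - b' (n+1) * F (n+1) := by
      rw [P1, P1', hGs]
      have t1 : G n * ε * (a n * F (n-1) - b n * F n) ≤ G n * (a n * F (n-1) - b n * F n) := by
        have := mul_le_mul_of_nonneg_left he (mul_pos hGp i2).le
        linarith
      have t2 : (ε * qn) * (G n * a n) * F n ≤ qn' * a' n * F n := by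
        apply mul_le_mul_of_nonneg_right _ (Fp _).le
        apply mul_le_mul hqq i3 (mul_pos hGp i1).le (le_trans (mul_nonneg hep.le hq0) hqq)
      linarith
    have R1 : 0 < a (n+1) := by
      rw [e2] at Q2
      have : 0 < a n * F (n+1) := mul_pos i1 (Fp _)
      by_contra h
      push Not at h
      have := mul_nonpos_of_nonpos_of_nonneg h (Fp n).le
      linarith
    refine ⟨R1, Q2, ?_, Q4⟩
    rw [e2, e2'] at Q4
    have t3 : G (n+1) * (a n * F (n+1)) ≤ a' n * F (n+1) := by
      rw [← mul_assoc]
      apply mul_le_mul_of_nonneg_right _ (Fp _).le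
      refine le_trans ?_ i3
      rw [hGs]
      have := mul_le_mul_of_nonneg_left he (mul_pos hGp i1).le
      linarith
    have : G (n+1) * a (n+1) * F n ≤ a' (n+1) * F n := by linarith
    exact le_of_mul_le_mul_right this (Fp n)

theorem entry_continuous (ω : ℝ) (v : ℝ → ℝ) (hv : Continuous v) (n : ℕ) :
    Continuous (fun x => cocycle ω (SchrodingerCocycle v) n x 0 0) :=
  (cocycle_continuous ω v hv n).matrix_elem 0 0

theorem int_compare (ω : ℝ) (f v0 q q' θ : ℝ → ℝ) (hf : ∀ x, 0 < f x)
    (hv : ∀ x, v0 x * f x = f (x + ω) + f (x - ω)) (hq : ∀ x, 0 ≤ q x) (hθ : ∀ x, 0 ≤ θ x)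
    (hq' : ∀ x, Real.exp (-θ x) * q x ≤ q' x) (hv0c : Continuous v0) (hqc : Continuous q)
    (hqc' : Continuous q') (hθc : Continuous θ) (hθp : Function.Periodic θ 1) (m : ℕ) :
    (∫ x in (0:ℝ)..1, Real.log (cocycle ω (SchrodingerCocycle (fun y => v0 y + q y)) m x 0 0))
     - m * (∫ x in (0:ℝ)..1, θ x) ≤
    ∫ x in (0:ℝ)..1, Real.log (cocycle ω (SchrodingerCocycle (fun y => v0 y + q' y)) m x 0 0) := by
  have hc := fun x => det_compare ω f v0 q q' θ hf hv hq hθ hq' x m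
  have hS : (∫ x in (0:ℝ)..1, ∑ i ∈ Finset.range m, θ (x + i * ω)) = m * ∫ x in (0:ℝ)..1, θ x := by
    rw [intervalIntegral.integral_finsetSum]
    · simp_rw [integral_shift θ hθp]
      simp
    · intro i _
      exact (hθc.comp (by fun_prop)).intervalIntegrable _ _
  have hSc : Continuous (fun x => ∑ i ∈ Finset.range m, θ (x + i * ω)) := by fun_prop
  have hp' : ∀ x, 0 < cocycle ω (SchrodingerCocycle (fun y => v0 y + q' y)) m x 0 0 := fun x =>
    lt_of_lt_of_le (mul_pos (Real.exp_pos _) (hc x).1) (hc x).2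
  have c1 : Continuous fun x => Real.log (cocycle ω (SchrodingerCocycle (fun y => v0 y + q y)) m x 0 0) :=
    (entry_continuous ω _ (by fun_prop) m).log (fun x => (hc x).1.ne')
  have c2 : Continuous fun x => Real.log (cocycle ω (SchrodingerCocycle (fun y => v0 y + q' y)) m x 0 0) :=
    (entry_continuous ω _ (by fun_prop) m).log (fun x => (hp' x).ne')
  rw [← hS, ← intervalIntegral.integral_sub (c1.intervalIntegrable _ _) (hSc.intervalIntegrable _ _)]
  apply intervalIntegral.integral_mono_on (by norm_num) ((c1.sub hSc).intervalIntegrable _ _) (c2.intervalIntegrable _ _)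
  intro x _
  have := Real.log_le_log (mul_pos (Real.exp_pos _) (hc x).1) (hc x).2
  rw [Real.log_mul (Real.exp_pos _).ne' (hc x).1.ne', Real.log_exp] at this
  simp only [Pi.sub_apply]
  linarith

theorem base_det (ω : ℝ) (W : ℝ) (hW : 2 ≤ W) (x : ℝ) (m : ℕ) :
    (W - 1)^m ≤ cocycle ω (SchrodingerCocycle (fun _ => W)) m x 0 0 := by
  suffices H : (W - 1)^m ≤ cocycle ω (SchrodingerCocycle (fun _ => W)) m x 0 0 ∧
    cocycle ω (SchrodingerCocycle (fun _ => W)) m x 1 0 ≤ cocycle ω (SchrodingerCocycle (fun _ => W)) m x 0 0 from H.1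
  induction m with
  | zero => simp [cocycle]
  | succ n ih =>
    rw [cocycle_succ0, cocycle_succ1, pow_succ]
    have : 0 ≤ (W-1)^n := pow_nonneg (by linarith) n
    constructor <;> nlinarith [ih.1, ih.2]

theorem LEn_ge_of_int (ω : ℝ) (v : ℝ → ℝ) (hc : Continuous v) (m : ℕ) (hm : 1 ≤ m) (κ : ℝ)
    (hp : ∀ x, 0 < cocycle ω (SchrodingerCocycle v) m x 0 0)
    (h : m * κ ≤ ∫ x in (0:ℝ)..1, Real.log (cocycle ω (SchrodingerCocycle v) m x 0 0)) :
    κ ≤ LEn ω (SchrodingerCocycle v) m := by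
  have hm' : (0:ℝ) < m := by exact_mod_cast hm
  have : ∫ x in (0:ℝ)..1, Real.log (cocycle ω (SchrodingerCocycle v) m x 0 0) ≤
     ∫ x in (0:ℝ)..1, Real.log (opNorm (cocycle ω (SchrodingerCocycle v) m x)) := by
    apply intervalIntegral.integral_mono_on (by norm_num)
      (((entry_continuous ω _ hc m).log (fun x => (hp x).ne')).intervalIntegrable _ _)
      ((logNorm_continuous ω v hc m).intervalIntegrable _ _)
    intro x _
    apply Real.log_le_log (hp x)
    exact (le_abs_self _).trans (entry_le_opNorm _ 0 0)
  unfold LEn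
  rw [one_div, ← div_eq_inv_mul, le_div_iff₀ hm']
  linarith

theorem cocycle_log_bound (ω : ℝ) (v : ℝ → ℝ) (B : ℝ) (hB : ∀ x, |v x| + 2 ≤ B) (m : ℕ) (x : ℝ) :
    |Real.log (opNorm (cocycle ω (SchrodingerCocycle v) m x))| ≤ (m + 1) * Real.log B + Real.log 2 := by
  have h2 : 2 ≤ B := (by linarith [abs_nonneg (v 0)] : 2 ≤ |v 0| + 2).trans (hB 0)
  have lB : 0 ≤ Real.log B := Real.log_nonneg (by linarith)
  have l2 : 0 ≤ Real.log 2 := Real.log_nonneg (by norm_num)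
  have hh : opNorm (cocycle ω (SchrodingerCocycle v) m x) ≤ B^(m+1) := by
    induction m with
    | zero =>
      refine (opNorm_le_sum _).trans ?_
      simp [cocycle]; linarith
    | succ n ih =>
      rw [cocycle]
      refine (opNorm_mul _ _).trans ?_
      rw [pow_succ B (n+1), mul_comm]
      have h3 : opNorm (SchrodingerCocycle v (x + n * ω)) ≤ B := by
        refine (opNorm_le_sum _).trans ?_
        have := hB (x + n * ω)
        simp [SchrodingerCocycle]; linarith
      have h4 : 0 ≤ opNorm (SchrodingerCocycle v (x + n * ω)) := norm_nonneg _
      exact mul_le_mul ih h3 h4 (by positivity)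
  have p1 := opNorm_pos_of_det (cocycle_det ω v m x)
  rw [abs_le]
  constructor
  · have : -Real.log 2 ≤ Real.log (opNorm (cocycle ω (SchrodingerCocycle v) m x)) := by
      rw [← Real.log_inv]
      apply Real.log_le_log (by norm_num)
      linarith
    have : (0:ℝ) ≤ (m+1) * Real.log B := by positivity
    linarith
  · have := Real.log_le_log (by linarith) hh
    rw [Real.log_pow] at this
    push_cast at this
    linarith

theorem LEn_limit (ω : ℝ) (v : ℝ → ℝ) (V : ℕ → ℝ → ℝ) (hc : ∀ k, Continuous (V k))
    (hlim : ∀ x, Tendsto (fun k => V k x) atTop (nhds (v x))) (B : ℝ) (hB : ∀ k x, |V k x| + 2 ≤ B)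
    (m : ℕ) :
    Tendsto (fun k => LEn ω (SchrodingerCocycle (V k)) m) atTop (nhds (LEn ω (SchrodingerCocycle v) m)) := by
  unfold LEn
  apply Tendsto.const_mul
  apply intervalIntegral.tendsto_integral_filter_of_dominated_convergence (fun _ => (m + 1) * Real.log B + Real.log 2)
  · exact Eventually.of_forall fun k => (logNorm_continuous ω (V k) (hc k) m).aestronglyMeasurable
  · exact Eventually.of_forall fun k => Eventually.of_forall fun x _ => cocycle_log_bound ω (V k) B (hB k) m x
  · simp
  · refine Eventually.of_forall fun x _ => ?_
    apply Tendsto.log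
    · refine (opNorm_continuous.tendsto _).comp ?_
      clear hc hB
      induction m with
      | zero => simp [cocycle]
      | succ n ih =>
        simp only [cocycle]
        apply Tendsto.mul _ ih
        unfold SchrodingerCocycle
        refine tendsto_pi_nhds.mpr fun i => tendsto_pi_nhds.mpr fun j => ?_
        fin_cases i <;> fin_cases j <;> simp [hlim]
    · have := opNorm_pos_of_det (cocycle_det ω v m x)
      linarith


theorem dens_int (ω : ℝ) (hω : Irrational ω) (n : ℕ) :
    (∃ a b : ℤ, (GenContFract.of ω).contsAux n = ⟨(a:ℝ), (b:ℝ)⟩) := by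
  have hnt : ∀ n, ¬ (GenContFract.of ω).TerminatedAt n := by
    intro n h
    obtain ⟨q, hq⟩ := GenContFract.exists_rat_eq_of_terminates (v := ω) ⟨n, h⟩
    exact hω ⟨q, hq.symm⟩
  induction n using Nat.strong_induction_on with
  | _ n ih =>
    match n with
    | 0 => exact ⟨1, 0, by simp⟩
    | 1 => exact ⟨⌊ω⌋, 1, by simp⟩
    | n + 2 =>
      obtain ⟨a, b, h1⟩ := ih n (by omega)
      obtain ⟨a', b', h2⟩ := ih (n+1) (by omega)
      obtain ⟨gp, s_nth_eq⟩ : ∃ gp, (GenContFract.of ω).s.get? n = some gp :=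
        Option.ne_none_iff_exists'.1 (hnt n)
      have gp_a : gp.a = 1 := GenContFract.of_partNum_eq_one (GenContFract.partNum_eq_s_a s_nth_eq)
      obtain ⟨z, hz⟩ := GenContFract.exists_int_eq_of_partDen (GenContFract.partDen_eq_s_b s_nth_eq)
      refine ⟨z * a' + a, z * b' + b, ?_⟩
      rw [GenContFract.contsAux_recurrence s_nth_eq h1 h2, gp_a, hz]
      push_cast
      simp

theorem dioph_lower (ω : ℝ) (hω : Irrational ω)
    (M : ℝ) (hM : 1 ≤ M) (hbt : ∀ k : ℕ, cfDen ω (k + 1) ≤ M * cfDen ω k) :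
    ∃ c0 : ℝ, 0 < c0 ∧ c0 ≤ 1 ∧ ∀ j : ℕ, 1 ≤ j → ∀ p : ℤ, c0 / j ≤ |j * ω - p| := by
  have hnt : ∀ n, ¬ (GenContFract.of ω).TerminatedAt n := by
    intro n h
    obtain ⟨q, hq⟩ := GenContFract.exists_rat_eq_of_terminates (v := ω) ⟨n, h⟩
    exact hω ⟨q, hq.symm⟩
  refine ⟨1 / (4 * M^2), by positivity, ?_, ?_⟩
  · rw [div_le_one (by positivity)]; nlinarith
  intro j hj p
  have hj' : (1:ℝ) ≤ j := by exact_mod_cast hj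
  have hfib : ∀ n, (Nat.fib (n+1) : ℝ) ≤ cfDen ω n := fun n =>
    GenContFract.succ_nth_fib_le_of_nth_den (Or.inr (hnt _))
  have hd1 : ∀ n, 1 ≤ cfDen ω n := fun n => le_trans (by exact_mod_cast Nat.fib_pos.mpr (Nat.succ_pos n)) (hfib n)
  have hmono : ∀ n, cfDen ω n ≤ cfDen ω (n+1) := fun n => GenContFract.of_den_mono
  have hex : ∃ n, 2 * (j:ℝ) ≤ cfDen ω n := by
    refine ⟨2 * j + 4, le_trans ?_ (hfib _)⟩
    have := Nat.le_fib_self (n := 2 * j + 4 + 1) (by omega)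
    have : 2 * j ≤ Nat.fib (2 * j + 4 + 1) := by omega
    exact_mod_cast this
  classical
  obtain ⟨n, hn1, hn2⟩ : ∃ n, 2 * (j:ℝ) ≤ cfDen ω n ∧ cfDen ω n ≤ 2 * M * j := by
    refine ⟨Nat.find hex, Nat.find_spec hex, ?_⟩
    rcases h : Nat.find hex with _ | m
    · have := Nat.find_spec hex
      rw [h] at this
      have h0 : cfDen ω 0 = 1 := by simp [cfDen]
      rw [h0]
      nlinarith
    · have := Nat.find_min hex (m := m) (by omega)
      push Not at this
      have := hbt m
      nlinarith
  have key : ∀ k, 2 * (j:ℝ) ≤ cfDen ω k → cfDen ω k ≤ 2 * M^2 * j →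
      (GenContFract.of ω).nums k * j - p * cfDen ω k ≠ 0 → 1 / (4 * M^2) / j ≤ |j * ω - p| := by
    intro k hk1 hk2 hne
    obtain ⟨a, b, hab⟩ := dens_int ω hω (k+1)
    have ea : (GenContFract.of ω).nums k = a := by
      rw [GenContFract.num_eq_conts_a, GenContFract.nth_cont_eq_succ_nth_contAux, hab]
    have eb : cfDen ω k = b := by
      unfold cfDen
      rw [GenContFract.den_eq_conts_b, GenContFract.nth_cont_eq_succ_nth_contAux, hab]
    have h1 : (1:ℝ) ≤ |(a:ℝ) * (j:ℝ) - (p:ℝ) * (b:ℝ)| := by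
      rw [ea, eb] at hne
      have : a * j - p * b ≠ 0 := by exact_mod_cast hne
      have := Int.one_le_abs this
      exact_mod_cast this
    have h2 := GenContFract.abs_sub_convs_le (v := ω) (hnt k)
    have h3 : (GenContFract.of ω).convs k = a / b := by
      rw [GenContFract.conv_eq_num_div_den, ea, ← eb]; rfl
    rw [h3] at h2
    change |ω - a / b| ≤ 1 / (cfDen ω k * cfDen ω (k+1)) at h2
    have hb0 : (0:ℝ) < b := by rw [← eb]; linarith [hd1 k]
    have hb1 : 2 * (j:ℝ) ≤ cfDen ω (k+1) := hk1.trans (hmono k)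
    rw [eb] at h2 hk2 hk1
    have h4 : |b * ω - a| ≤ 1 / (2 * j) := by
      have : |b * ω - a| = b * |ω - a / b| := by
        rw [← abs_of_pos hb0, ← abs_mul, abs_of_pos hb0]; congr 1; field_simp
      rw [this]
      calc b * |ω - a / b| ≤ b * (1 / (b * cfDen ω (k+1))) := by gcongr
        _ = 1 / cfDen ω (k+1) := by field_simp
        _ ≤ 1 / (2 * j) := by gcongr
    -- a j - p b = j (a - bω) + b (jω - p)
    have h5 : (1:ℝ) ≤ 1 / 2 + b * |j * ω - p| := by
      calc (1:ℝ) ≤ |(a:ℝ) * (j:ℝ) - (p:ℝ) * (b:ℝ)| := h1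
        _ = |(-j) * (b * ω - a) + b * (j * ω - p)| := by congr 1; ring
        _ ≤ |(-j:ℝ) * (b * ω - a)| + |b * (j * ω - p)| := abs_add_le _ _
        _ = j * |b * ω - a| + b * |j * ω - p| := by
          rw [abs_mul, abs_mul, abs_neg, abs_of_pos hb0, abs_of_pos (by linarith : (0:ℝ) < j)]
        _ ≤ j * (1 / (2 * j)) + b * |j * ω - p| := by gcongr
        _ = _ := by field_simp
    have h6 : b * |j * ω - p| ≤ 2 * M^2 * j * |j * ω - p| := by gcongr
    rw [div_div, div_le_iff₀ (by positivity)]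
    nlinarith
  by_cases h0 : (GenContFract.of ω).nums n * j - p * cfDen ω n = 0
  · apply key (n+1) (hn1.trans (hmono n))
    · refine (hbt n).trans ?_
      calc M * cfDen ω n ≤ M * (2 * M * j) := by gcongr
        _ = _ := by ring
    · intro h1
      have hdet := (SimpContFract.of ω).determinant (n := n) (hnt n)
      change (GenContFract.of ω).nums n * cfDen ω (n+1) - cfDen ω n * (GenContFract.of ω).nums (n+1) = _ at hdet
      have : (j:ℝ) * (-1)^(n+1) = 0 := by
        rw [← hdet]
        linear_combination cfDen ω (n+1) * h0 - cfDen ω n * h1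
      have hne : (j:ℝ) * (-1)^(n+1) ≠ 0 := by
        apply mul_ne_zero (by linarith)
        apply pow_ne_zero; norm_num
      exact hne this
  · exact key n hn1 (by nlinarith) h0

theorem hit_aux (a : ℝ) (ha : 0 < a) (x : ℝ) : ∃ i : ℕ, (i:ℝ) ≤ 1 / a ∧ ∃ p : ℤ, |x + i * a - p| ≤ a := by
  set t := Int.fract (-x) with ht
  have t0 : 0 ≤ t := Int.fract_nonneg _
  have t1 : t < 1 := Int.fract_lt_one _
  refine ⟨⌊t / a⌋₊, ?_, -⌊-x⌋, ?_⟩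
  · refine (Nat.floor_le (by positivity)).trans ?_
    gcongr
  · have h1 := Nat.floor_le (show 0 ≤ t / a by positivity)
    have h2 := Nat.lt_floor_add_one (t / a)
    rw [le_div_iff₀ ha] at h1
    rw [div_lt_iff₀ ha] at h2
    have h3 : -x - ⌊-x⌋ = t := rfl
    push_cast
    rw [abs_le]
    constructor <;> nlinarith

theorem dioph_hit (ω c0 : ℝ) (hc0 : 0 < c0)
    (h : ∀ j : ℕ, 1 ≤ j → ∀ p : ℤ, c0 / j ≤ |j * ω - p|) (δ : ℝ) (hδ : 0 < δ) (hδ1 : δ ≤ 1) (x : ℝ) :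
    ∃ j : ℕ, (j:ℝ) ≤ (4 / c0) / δ^2 ∧ ∃ p : ℤ, |x + j * ω - p| ≤ δ := by
  set n := ⌈1 / δ⌉₊ with hn
  have hn1 : 1 / δ ≤ n := Nat.le_ceil _
  have hn2 : (n:ℝ) < 1 / δ + 1 := Nat.ceil_lt_add_one (by positivity)
  have hδ2 : 1 ≤ 1 / δ := by rw [le_div_iff₀ hδ]; linarith
  have hn0 : 0 < n := by
    have : (0:ℝ) < n := by linarith
    exact_mod_cast this
  have hn3 : (n:ℝ) ≤ 2 / δ := by rw [show 2 / δ = 1 / δ + 1 / δ by ring]; linarith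
  obtain ⟨k, hk0, hkn, hk⟩ := Real.exists_nat_abs_mul_sub_round_le ω hn0
  set p := round ((k:ℝ) * ω)
  have hlow := h k hk0 p
  have hk0' : (1:ℝ) ≤ k := by exact_mod_cast hk0
  have hkn' : (k:ℝ) ≤ n := by exact_mod_cast hkn
  set a := (k:ℝ) * ω - p with ha
  have hapos : 0 < |a| := lt_of_lt_of_le (by positivity) hlow
  have haδ : |a| ≤ δ := by
    refine hk.trans ?_
    rw [div_le_iff₀ (by positivity)]
    rw [div_le_iff₀ hδ] at hn1
    linarith
  have hinv : 1 / |a| ≤ n / c0 := by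
    rw [div_le_div_iff₀ hapos hc0]
    rw [div_le_iff₀ (by linarith)] at hlow
    nlinarith
  have main : ∃ i : ℕ, (i:ℝ) ≤ 1 / |a| ∧ ∃ q : ℤ, |x + i * a - q| ≤ |a| := by
    rcases abs_cases a with ⟨h1, h2⟩ | ⟨h1, h2⟩
    · rw [h1] at hapos ⊢; exact hit_aux a hapos x
    · rw [h1] at hapos ⊢
      obtain ⟨i, hi, q, hq⟩ := hit_aux (-a) hapos (-x)
      refine ⟨i, hi, -q, ?_⟩
      rw [← abs_neg]
      convert hq using 2
      push_cast; ring
  obtain ⟨i, hi, q, hq⟩ := main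
  refine ⟨i * k, ?_, i * p + q, ?_⟩
  · push_cast
    calc (i:ℝ) * k ≤ (n / c0) * n := by gcongr; exact hi.trans hinv
      _ ≤ (2 / δ / c0) * (2 / δ) := by gcongr
      _ = _ := by field_simp; norm_num
  · refine le_trans (le_of_eq ?_) (hq.trans haδ)
    congr 1
    push_cast
    rw [ha]; ring


/-- Sector around the positive reals. -/
def Cone (t : ℝ) (w : ℂ) : Prop := 0 < w.re ∧ |w.im| ≤ t * w.re

/-- Horizontal strip. -/
def Strip (r : ℝ) : Set ℂ := {z | |z.im| < r}

theorem Strip_open (r : ℝ) : IsOpen (Strip r) :=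
  isOpen_lt (Complex.continuous_im.abs) continuous_const

theorem Strip_shift {r : ℝ} {z : ℂ} (hz : z ∈ Strip r) (a : ℝ) : z + a ∈ Strip r := by
  simpa [Strip] using hz

theorem Strip_real {r : ℝ} (hr : 0 < r) (x : ℝ) : (x : ℂ) ∈ Strip r := by
  simpa [Strip] using hr

theorem Cone.ne_zero {t : ℝ} {w : ℂ} (h : Cone t w) : w ≠ 0 := by
  intro h0; have := h.1; simp [h0] at this

theorem Cone.mono {t t' : ℝ} {w : ℂ} (h : Cone t w) (ht : t ≤ t') : Cone t' w :=
  ⟨h.1, h.2.trans (mul_le_mul_of_nonneg_right ht h.1.le)⟩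

theorem Cone.add {t : ℝ} {z w : ℂ} (h : Cone t z) (h' : Cone t w) : Cone t (z + w) := by
  refine ⟨?_, ?_⟩
  · simp only [Complex.add_re]; linarith [h.1, h'.1]
  · simp only [Complex.add_re, Complex.add_im]
    have := abs_add_le z.im w.im
    linarith [h.2, h'.2]

theorem Cone.inv {t : ℝ} {z : ℂ} (h : Cone t z) : Cone t z⁻¹ := by
  have hn : 0 < Complex.normSq z := Complex.normSq_pos.mpr h.ne_zero
  refine ⟨?_, ?_⟩
  · rw [Complex.inv_re]; exact div_pos h.1 hn
  · rw [Complex.inv_re, Complex.inv_im, abs_div, abs_neg, abs_of_pos hn, ← mul_div_assoc]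
    exact div_le_div_of_nonneg_right h.2 hn.le

theorem Cone.mul {a b t : ℝ} {z w : ℂ} (h : Cone a z) (h' : Cone b w) (hb : 0 ≤ b)
    (hab : a * b < 1) (ht : a + b ≤ t * (1 - a * b)) : Cone t (z * w) := by
  obtain ⟨h1, h2⟩ := h
  obtain ⟨h3, h4⟩ := h'
  have hp : 0 < z.re * w.re := mul_pos h1 h3
  have e1 : |z.im * w.im| ≤ a * b * (z.re * w.re) := by
    rw [abs_mul]
    calc |z.im| * |w.im| ≤ (a * z.re) * (b * w.re) :=
          mul_le_mul h2 h4 (abs_nonneg _) ((abs_nonneg _).trans h2)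
      _ = _ := by ring
  have e2 : |z.re * w.im| ≤ b * (z.re * w.re) := by
    rw [abs_mul, abs_of_pos h1]; nlinarith
  have e3 : |z.im * w.re| ≤ a * (z.re * w.re) := by
    rw [abs_mul, abs_of_pos h3]; nlinarith
  have e1' := (abs_le.mp e1).2
  have t0 : 0 ≤ t := by
    by_contra hc; push Not at hc
    have ha : 0 ≤ a := by
      by_contra hc; push Not at hc
      have := (abs_nonneg _).trans h2
      nlinarith
    nlinarith
  have r1 : (1 - a * b) * (z.re * w.re) ≤ (z * w).re := by
    rw [Complex.mul_re]; nlinarith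
  refine ⟨lt_of_lt_of_le (mul_pos (by linarith) hp) r1, ?_⟩
  rw [Complex.mul_im]
  calc |z.re * w.im + z.im * w.re| ≤ |z.re * w.im| + |z.im * w.re| := abs_add_le _ _
    _ ≤ (a + b) * (z.re * w.re) := by linarith
    _ ≤ t * (1 - a * b) * (z.re * w.re) := by gcongr
    _ = t * ((1 - a * b) * (z.re * w.re)) := by ring
    _ ≤ t * (z * w).re := by gcongr

theorem Cone.ser {t : ℝ} {z w : ℂ} (h : Cone t z) (h' : Cone t w) : Cone t (z * w / (z + w)) := by
  have e : z * w / (z + w) = (z⁻¹ + w⁻¹)⁻¹ := by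
    have := h.ne_zero
    have := h'.ne_zero
    have := (h.add h').ne_zero
    have h3 : w + z ≠ 0 := by rwa [add_comm]
    field_simp
    rw [add_comm]
  rw [e]
  exact (h.inv.add h'.inv).inv

theorem Cone.smul {t : ℝ} {z : ℂ} (h : Cone t z) (E : ℝ) (hE : 0 < E) : Cone t (E * z) := by
  refine ⟨?_, ?_⟩
  · simp; exact mul_pos hE h.1
  · simp [abs_mul, abs_of_pos hE]
    have := mul_le_mul_of_nonneg_left h.2 hE.le
    linarith

theorem Cone.norm_le {t : ℝ} {z : ℂ} (h : Cone t z) (ht : t ≤ 1) : ‖z‖ ≤ 2 * z.re := by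
  have := Complex.norm_le_abs_re_add_abs_im z
  rw [abs_of_pos h.1] at this
  have := h.2
  have := h.1
  nlinarith

theorem Cone.real {z : ℂ} (h : Cone 0 z) : (z.re : ℂ) = z := by
  have := h.2
  rw [zero_mul] at this
  apply Complex.ext <;> simp
  exact (abs_nonpos_iff.mp this).symm

theorem Cone.of_real {x : ℝ} (h : 0 < x) : Cone 0 (x : ℂ) := by
  refine ⟨by simpa using h, by simp⟩

theorem zeta_cone {c Y : ℂ} (hc : Cone (1/4) c) (hY : Cone (1/4) Y) : Cone 1 (c / (c + Y)) := by
  have e : c / (c + Y) = (1 + Y * c⁻¹)⁻¹ := by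
    have := hc.ne_zero
    have := (hc.add hY).ne_zero
    field_simp
  rw [e]
  apply Cone.inv
  apply Cone.add
  · refine ⟨by simp, by simp⟩
  · exact hY.mul hc.inv (by norm_num) (by norm_num) (by norm_num)

theorem zeta_norm {c Y : ℂ} {m B : ℝ} (hm : 0 ≤ m) (hB : 0 < B) (hc : Cone (1/4) c) (hY : Cone (1/4) Y)
    (hcB : ‖c‖ ≤ B) (hYm : m ≤ ‖Y‖) : ‖c / (c + Y)‖ ≤ 1 / (1 + m / (2 * B)) := by
  have e : c / (c + Y) = (1 + Y * c⁻¹)⁻¹ := by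
    have := hc.ne_zero
    have := (hc.add hY).ne_zero
    field_simp
  have h1 : Cone 1 (Y * c⁻¹) := hY.mul hc.inv (by norm_num) (by norm_num) (by norm_num)
  have h2 := h1.norm_le le_rfl
  have hc0 : 0 < ‖c‖ := norm_pos_iff.mpr hc.ne_zero
  have h3 : m / B ≤ ‖Y * c⁻¹‖ := by
    rw [norm_mul, norm_inv, ← div_eq_mul_inv]
    gcongr
  have h4 : 1 + m / (2 * B) ≤ ‖1 + Y * c⁻¹‖ := by
    have := Complex.abs_re_le_norm (1 + Y * c⁻¹)
    have h5 := le_abs_self (1 + Y * c⁻¹).re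
    simp only [Complex.add_re, Complex.one_re] at this h5
    have : m / (2 * B) = (m / B) / 2 := by field_simp
    linarith
  rw [e, norm_inv, ← one_div]
  exact one_div_le_one_div_of_le (by positivity) h4

theorem zeta_norm_one {c Y : ℂ} (hc : Cone (1/4) c) (hY : Cone (1/4) Y) : ‖c / (c + Y)‖ ≤ 1 := by
  have := zeta_norm (m := 0) le_rfl (norm_pos_iff.mpr hc.ne_zero) hc hY le_rfl (norm_nonneg _)
  simpa using this

/-- Approximants of the one-sided input conductance. -/
noncomputable def Yapp (ω : ℝ) (c κ : ℂ → ℂ) : ℕ → ℂ → ℂ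
  | 0, z => κ z
  | n + 1, z => κ z + c z * Yapp ω c κ n (z + ω) / (c z + Yapp ω c κ n (z + ω))

theorem Y_exists (ω r : ℝ) (hr : 0 < r) (c κ : ℂ → ℂ)
    (hcd : DifferentiableOn ℂ c (Strip r)) (hκd : DifferentiableOn ℂ κ (Strip r))
    (hcp : ∀ z, c (z + 1) = c z) (hκp : ∀ z, κ (z + 1) = κ z)
    (hcc : ∀ z ∈ Strip r, Cone (1/4) (c z)) (hκc : ∀ z ∈ Strip r, Cone (1/4) (κ z))
    (hc0 : ∀ x : ℝ, Cone 0 (c x)) (hκ0 : ∀ x : ℝ, Cone 0 (κ x))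
    (B D m : ℝ) (hm : 0 < m) (hB : 0 < B)
    (hcB : ∀ z ∈ Strip r, ‖c z‖ ≤ B) (hκD : ∀ z ∈ Strip r, ‖κ z‖ ≤ D) (hκm : ∀ z ∈ Strip r, m ≤ (κ z).re) :
    ∃ Y : ℂ → ℂ, DifferentiableOn ℂ Y (Strip r) ∧ (∀ z, Y (z + 1) = Y z) ∧
      (∀ z ∈ Strip r, Cone (1/4) (Y z)) ∧ (∀ x : ℝ, Cone 0 (Y x)) ∧
      (∀ z ∈ Strip r, Y z = κ z + c z * Y (z + ω) / (c z + Y (z + ω))) := by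
  set A := Yapp ω c κ with hA
  have A0 : ∀ z, A 0 z = κ z := fun z => rfl
  have A1 : ∀ n z, A (n+1) z = κ z + c z * A n (z + ω) / (c z + A n (z + ω)) := fun n z => rfl
  have hcone : ∀ n, ∀ z ∈ Strip r, Cone (1/4) (A n z) ∧ (κ z).re ≤ (A n z).re := by
    intro n
    induction n with
    | zero => intro z hz; exact ⟨hκc z hz, le_rfl⟩
    | succ n ih =>
      intro z hz
      have h1 := (hcc z hz).ser (ih _ (Strip_shift hz ω)).1
      rw [A1]
      refine ⟨(hκc z hz).add h1, ?_⟩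
      rw [Complex.add_re]; linarith [h1.1]
  have hcone0 : ∀ n, ∀ x : ℝ, Cone 0 (A n x) := by
    intro n
    induction n with
    | zero => intro x; exact hκ0 x
    | succ n ih =>
      intro x
      have h1 := (hc0 x).ser (ih (x + ω))
      rw [A1]
      have := (hκ0 x).add h1
      push_cast at this
      exact this
  have hper : ∀ n, ∀ z, A n (z + 1) = A n z := by
    intro n
    induction n with
    | zero => exact hκp
    | succ n ih =>
      intro z
      rw [A1, A1, show z + 1 + ω = z + ω + 1 by ring, ih, hκp, hcp]
  have hdiff : ∀ n, DifferentiableOn ℂ (A n) (Strip r) := by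
    intro n
    induction n with
    | zero => exact hκd
    | succ n ih =>
      have hs : DifferentiableOn ℂ (fun z => A n (z + ω)) (Strip r) :=
        ih.comp (by fun_prop) (fun z hz => Strip_shift hz ω)
      refine hκd.add ((hcd.mul hs).div (hcd.add hs) ?_)
      intro z hz
      exact ((hcc z hz).add (hcone n _ (Strip_shift hz ω)).1).ne_zero
  set q := 1 / (1 + m / (2 * B)) with hq
  have hmB : 0 < m / (2 * B) := by positivity
  have hq0 : 0 < q := by positivity
  have hq1 : q < 1 := by rw [hq, div_lt_one (by positivity)]; linarith
  have hD : 0 ≤ D := (norm_nonneg _).trans (hκD 0 (by simpa using Strip_real hr 0))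
  have hz : ∀ n, ∀ z ∈ Strip r, ‖c z / (c z + A n (z + ω))‖ ≤ q := by
    intro n z hz
    have h1 := hcone n _ (Strip_shift hz ω)
    refine zeta_norm hm.le hB (hcc z hz) h1.1 (hcB z hz) ?_
    have h2 := Complex.abs_re_le_norm (A n (z + ω))
    have h3 := le_abs_self (A n (z + ω)).re
    linarith [hκm _ (Strip_shift hz ω), h1.2]
  have hstep : ∀ n, ∀ z ∈ Strip r, ‖A (n+1) z - A n z‖ ≤ D * q^n := by
    intro n
    induction n with
    | zero =>
      intro z hzs
      have h1 : A 1 z - A 0 z = (c z / (c z + A 0 (z + ω))) * κ (z + ω) := by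
        rw [A1, A0, A0]; ring
      rw [h1, norm_mul]
      have := hz 0 z hzs
      have h2 := hκD _ (Strip_shift hzs ω)
      calc _ ≤ 1 * D := by gcongr; linarith
        _ = _ := by simp
    | succ n ih =>
      intro z hzs
      have n1 := ((hcc z hzs).add (hcone n _ (Strip_shift hzs ω)).1).ne_zero
      have n2 := ((hcc z hzs).add (hcone (n+1) _ (Strip_shift hzs ω)).1).ne_zero
      have e : A (n+2) z - A (n+1) z = (c z / (c z + A (n+1) (z + ω))) * (c z / (c z + A n (z + ω)))
          * (A (n+1) (z + ω) - A n (z + ω)) := by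
        rw [A1 (n+1) z, A1 n z]; field_simp; ring
      rw [e, norm_mul, norm_mul]
      calc _ ≤ q * 1 * (D * q^n) := by
            gcongr
            · exact hz (n+1) z hzs
            · exact (hz n z hzs).trans hq1.le
            · exact ih _ (Strip_shift hzs ω)
        _ = _ := by ring
  have hsum : Summable (fun n => D * q^n) := (summable_geometric_of_lt_one hq0.le hq1).mul_left D
  set Y : ℂ → ℂ := fun z => κ z + ∑' n, (A (n+1) z - A n z) with hY
  have hlim : ∀ z ∈ Strip r, Tendsto (fun n => A n z) atTop (nhds (Y z)) := by
    intro z hzs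
    have h1 : Summable (fun n => A (n+1) z - A n z) :=
      Summable.of_norm_bounded hsum (fun n => hstep n z hzs)
    have h2 := (h1.hasSum.tendsto_sum_nat).const_add (κ z)
    refine h2.congr ?_
    intro n
    rw [Finset.sum_range_sub (fun n => A n z), A0]; ring
  have hYre : ∀ z ∈ Strip r, (κ z).re ≤ (Y z).re := by
    intro z hzs
    exact ge_of_tendsto ((Complex.continuous_re.tendsto _).comp (hlim z hzs))
      (Eventually.of_forall fun n => (hcone n z hzs).2)
  have hYcone : ∀ z ∈ Strip r, Cone (1/4) (Y z) := by
    intro z hzs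
    refine ⟨lt_of_lt_of_le (hκc z hzs).1 (hYre z hzs), ?_⟩
    exact le_of_tendsto_of_tendsto (((Complex.continuous_im.tendsto _).comp (hlim z hzs)).abs)
      (((Complex.continuous_re.tendsto _).comp (hlim z hzs)).const_mul (1/4))
      (Eventually.of_forall fun n => (hcone n z hzs).1.2)
  refine ⟨Y, ?_, ?_, hYcone, ?_, ?_⟩
  · refine hκd.add (Complex.differentiableOn_tsum_of_summable_norm hsum ?_ (Strip_open r) hstep)
    intro n; exact (hdiff (n+1)).sub (hdiff n)
  · intro z
    simp only [hY, hper, hκp]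
  · intro x
    have hzs := Strip_real hr x
    refine ⟨(hYcone x hzs).1, ?_⟩
    exact le_of_tendsto_of_tendsto (((Complex.continuous_im.tendsto _).comp (hlim x hzs)).abs)
      (((Complex.continuous_re.tendsto _).comp (hlim x hzs)).const_mul 0)
      (Eventually.of_forall fun n => (hcone0 n x).2)
  · intro z hzs
    have h1 := hlim z hzs
    have h2 := hlim _ (Strip_shift hzs ω)
    have n1 := ((hcc z hzs).add (hYcone _ (Strip_shift hzs ω))).ne_zero
    have h3 : Tendsto (fun n => A (n+1) z) atTop (nhds (κ z + c z * Y (z + ω) / (c z + Y (z + ω)))) := by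
      simp only [A1]
      exact ((h2.const_mul (c z)).div (h2.const_add (c z)) n1).const_add (κ z)
    exact tendsto_nhds_unique (h1.comp (tendsto_add_atTop_nat 1)) h3

/-- `b` is `a` times `exp` of something small. -/
def Near (ε : ℝ) (a b : ℂ) : Prop := ∃ u : ℂ, ‖u‖ ≤ ε ∧ b = a * Complex.exp u

theorem Near.mul {ε ε' : ℝ} {a b a' b' : ℂ} (h : Near ε a b) (h' : Near ε' a' b') :
    Near (ε + ε') (a * a') (b * b') := by
  obtain ⟨u, hu, rfl⟩ := h
  obtain ⟨u', hu', rfl⟩ := h'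
  refine ⟨u + u', (norm_add_le _ _).trans (add_le_add hu hu'), ?_⟩
  rw [Complex.exp_add]; ring

theorem Near.mono {ε ε' : ℝ} {a b : ℂ} (h : Near ε a b) (hε : ε ≤ ε') : Near ε' a b := by
  obtain ⟨u, hu, rfl⟩ := h
  exact ⟨u, hu.trans hε, rfl⟩

theorem Near.prod {ε : ℝ} (n : ℕ) (a b : ℕ → ℂ) (h : ∀ i, Near ε (a i) (b i)) :
    Near (n * ε) (∏ i ∈ Finset.range n, a i) (∏ i ∈ Finset.range n, b i) := by
  induction n with
  | zero => exact ⟨0, by simp, by simp⟩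
  | succ n ih =>
    rw [Finset.prod_range_succ, Finset.prod_range_succ]
    refine (ih.mul (h n)).mono ?_
    push_cast; linarith

theorem Near.norm_le {ε : ℝ} {a b : ℂ} (h : Near ε a b) : ‖b‖ ≤ ‖a‖ * Real.exp ε := by
  obtain ⟨u, hu, rfl⟩ := h
  rw [norm_mul]
  gcongr
  exact (Complex.norm_exp_le_exp_norm u).trans (Real.exp_le_exp.mpr hu)

theorem Near.symm {ε : ℝ} {a b : ℂ} (h : Near ε a b) : Near ε b a := by
  obtain ⟨u, hu, rfl⟩ := h
  exact ⟨-u, by simpa using hu, by rw [mul_assoc, ← Complex.exp_add]; simp⟩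

theorem Near.norm_sub {ε : ℝ} {a b : ℂ} (h : Near ε a b) (hε : ε ≤ 1) : ‖b - a‖ ≤ ‖a‖ * (2 * ε) := by
  obtain ⟨u, hu, rfl⟩ := h
  have : a * Complex.exp u - a = a * (Complex.exp u - 1) := by ring
  rw [this, norm_mul]
  gcongr
  exact (Complex.norm_exp_sub_one_le (hu.trans hε)).trans (by linarith)

theorem near_of_re_pos (F : ℂ → ℂ) (x : ℂ) (R M : ℝ) (hR : 0 < R) (hM : 2 ≤ M)
    (hF : DifferentiableOn ℂ F (Metric.ball x R)) (hre : ∀ z ∈ Metric.ball x R, 0 < (F z).re)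
    (w : ℂ) (hw : ‖w‖ ≤ R / M) : Near (16 / M) (F x) (F (x + w)) := by
  have hmap : ∀ z ∈ Metric.ball (0:ℂ) R, x + z ∈ Metric.ball x R := by
    intro z hz; simpa using hz
  have hne : ∀ z ∈ Metric.ball x R, F z ≠ 0 := by
    intro z hz h0; have := hre z hz; simp [h0] at this
  set h : ℂ → ℂ := fun z => -Complex.I * (Complex.log (F (x + z)) - Complex.log (F x)) with hh
  have hx : x ∈ Metric.ball x R := Metric.mem_ball_self hR
  have harg : ∀ z ∈ Metric.ball x R, |(Complex.log (F z)).im| < 2 := by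
    intro z hz
    rw [Complex.log_im]
    have := Complex.abs_arg_lt_pi_div_two_iff.mpr (Or.inl (hre z hz))
    linarith [Real.pi_lt_four]
  have hd : DifferentiableOn ℂ h (Metric.ball 0 R) := by
    have h1 : DifferentiableOn ℂ (fun z => F (x + z)) (Metric.ball 0 R) :=
      hF.comp (by fun_prop) hmap
    refine ((h1.clog ?_).sub_const _).const_mul _
    intro z hz
    exact Complex.mem_slitPlane_iff.mpr (Or.inl (hre _ (hmap z hz)))
  have hmaps : Set.MapsTo h (Metric.ball 0 R) {z | z.re ≤ 4} := by
    intro z hz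
    have h1 := abs_lt.mp (harg _ (hmap z hz))
    have h2 := abs_lt.mp (harg _ hx)
    show (h z).re ≤ 4
    simp [hh] at h1 h2 ⊢
    linarith
  have hwR : ‖w‖ < R := lt_of_le_of_lt hw (div_lt_self hR (by linarith))
  have hwb : w ∈ Metric.ball (0:ℂ) R := by simpa using hwR
  have := Complex.borelCaratheodory_zero (by norm_num : (0:ℝ) < 4) hd hmaps hR hwb (by simp [hh])
  have hb : 2 * 4 * ‖w‖ / (R - ‖w‖) ≤ 16 / M := by
    have hM0 : 0 < M := by linarith
    rw [div_le_div_iff₀ (by linarith) hM0]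
    rw [le_div_iff₀ hM0] at hw
    nlinarith [norm_nonneg w]
  refine ⟨Complex.log (F (x + w)) - Complex.log (F x), ?_, ?_⟩
  · refine le_trans (le_of_eq ?_) (this.trans hb)
    simp [hh]
  · rw [Complex.exp_sub, Complex.exp_log (hne _ (hmap w hwb)), Complex.exp_log (hne _ hx)]
    field_simp [hne _ hx]


def nearZ (δ x : ℝ) : Prop := ∃ p : ℤ, |x - p| ≤ δ

def IsY (ω E : ℝ) (f Y : ℝ → ℝ) : Prop :=
  (∀ x, 0 < Y x) ∧
  ∀ x, Y x = E * f x ^ 2 + (f x * f (x + ω)) * Y (x + ω) / (f x * f (x + ω) + Y (x + ω))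

noncomputable def Zt (ω : ℝ) (f Y : ℝ → ℝ) (x : ℝ) : ℝ :=
  (f x * f (x + ω)) / (f x * f (x + ω) + Y (x + ω))

structure RState (ω Λ : ℝ) (s : ℕ) (E : ℝ) (f : ℝ → ℝ) : Prop where
  Elow : Real.exp (-(s:ℝ)) ≤ E
  Eup : E ≤ Λ
  fpos : ∀ x, 0 < f x
  fle : ∀ x, f x ≤ 1
  fper : ∀ x, f (x + 1) = f x
  flow : ∀ x, nearZ (1 / (4 * (s:ℝ)^3)) x → 1 / (s:ℝ)^2 ≤ f x
  fexp : ∀ x, Real.exp (-(s:ℝ)^7) ≤ f x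
  vb : ∀ x, (f (x + ω) + f (x - ω)) / f x + E + 1 / s ≤ Λ
  I3 : ∀ ω', (ω' = ω ∨ ω' = -ω) → ∀ Y, IsY ω' E f Y → ∀ x, nearZ (1 / (4 * (s:ℝ)^3)) x →
    Y x ≤ (s:ℝ)^6 * (E * f x ^ 2)
  I4 : ∀ ω', (ω' = ω ∨ ω' = -ω) → ∀ Y, IsY ω' E f Y → ∀ x,
    ∏ i ∈ Finset.range (s^7), Zt ω' f Y (x + i * ω') ≤ 1 / 2

section basic
variable {ω E : ℝ} {f Y : ℝ → ℝ}

theorem Zt_pos (hf : ∀ x, 0 < f x) (hY : ∀ x, 0 < Y x) (x : ℝ) : 0 < Zt ω f Y x := by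
  unfold Zt
  have := hf x; have := hf (x + ω); have := hY (x + ω)
  positivity

theorem Zt_le_one (hf : ∀ x, 0 < f x) (hY : ∀ x, 0 < Y x) (x : ℝ) : Zt ω f Y x ≤ 1 := by
  unfold Zt
  have h1 := hf x; have h2 := hf (x + ω); have h3 := hY (x + ω)
  have := mul_pos h1 h2
  rw [div_le_one (by positivity)]
  linarith

theorem Y_eq (hY : IsY ω E f Y) (x : ℝ) : Y x = E * f x ^ 2 + Zt ω f Y x * Y (x + ω) := by
  rw [hY.2 x]; unfold Zt; ring

theorem ser_le_c (hf : ∀ x, 0 < f x) (hY : ∀ x, 0 < Y x) (x : ℝ) :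
    Zt ω f Y x * Y (x + ω) ≤ f x * f (x + ω) := by
  unfold Zt
  have h1 := hf x; have h2 := hf (x + ω); have h3 := hY (x + ω)
  have := mul_pos h1 h2
  rw [div_mul_eq_mul_div, div_le_iff₀ (by positivity)]
  nlinarith

theorem prod_le_cut (hf : ∀ x, 0 < f x) (hE : 0 < E) (hY : IsY ω E f Y) (X : ℝ) (k : ℕ) (hk : 1 ≤ k) :
    (∏ i ∈ Finset.range k, Zt ω f Y (X + i * ω)) * (E * f (X + k * ω)^2) ≤ f X * f (X + ω) := by
  have h1 : (∏ i ∈ Finset.range k, Zt ω f Y (X + i * ω)) * Y (X + k * ω) ≤ f X * f (X + ω) := by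
    induction k, hk using Nat.le_induction with
    | base => simpa using ser_le_c hf hY.1 X
    | succ k hk ih =>
      rw [Finset.prod_range_succ, mul_assoc]
      refine le_trans ?_ ih
      have hP : 0 ≤ ∏ i ∈ Finset.range k, Zt ω f Y (X + i * ω) :=
        Finset.prod_nonneg fun i _ => (Zt_pos hf hY.1 _).le
      apply mul_le_mul_of_nonneg_left _ hP
      have := Y_eq hY (X + k * ω)
      rw [show X + k * ω + ω = X + ((k+1 : ℕ):ℝ) * ω by push_cast; ring] at this
      have hp : 0 < E * f (X + k * ω)^2 := by have := hf (X + k * ω); positivity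
      linarith
  refine le_trans ?_ h1
  have hP : 0 ≤ ∏ i ∈ Finset.range k, Zt ω f Y (X + i * ω) :=
        Finset.prod_nonneg fun i _ => (Zt_pos hf hY.1 _).le
  apply mul_le_mul_of_nonneg_left _ hP
  rw [Y_eq hY (X + k * ω)]
  have := mul_pos (Zt_pos (ω := ω) hf hY.1 (X + k * ω)) (hY.1 (X + k * ω + ω))
  linarith

theorem Y_le_sum (hf : ∀ x, 0 < f x) (hf1 : ∀ x, f x ≤ 1) (hE : 0 < E) (hY : IsY ω E f Y) (y : ℝ) (n : ℕ) :
    Y y ≤ n * E + Y (y + n * ω) := by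
  induction n with
  | zero => simp
  | succ n ih =>
    have h1 := Y_eq hY (y + n * ω)
    rw [show y + n * ω + ω = y + ((n+1 : ℕ):ℝ) * ω by push_cast; ring] at h1
    have h2 := Zt_le_one (ω := ω) hf hY.1 (y + n * ω)
    have h3 := hY.1 (y + ((n+1 : ℕ):ℝ) * ω)
    have h4 : E * f (y + n * ω)^2 ≤ E := by
      have := hf (y + n * ω); have := hf1 (y + n * ω)
      have : f (y + n * ω)^2 ≤ 1 := by nlinarith
      nlinarith
    push_cast at *
    nlinarith

theorem prod_block (a : ℕ → ℝ) (T m : ℕ) (ρ : ℝ) (h0 : ∀ i, 0 ≤ a i)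
    (hb : ∀ k, ∏ i ∈ Finset.range T, a (k + i) ≤ ρ) :
    ∏ i ∈ Finset.range (m * T), a i ≤ ρ ^ m := by
  have hρ : 0 ≤ ρ := (Finset.prod_nonneg fun i _ => h0 _).trans (hb 0)
  induction m with
  | zero => simp
  | succ m ih =>
    rw [Nat.succ_mul, Finset.prod_range_add, pow_succ]
    exact mul_le_mul ih (hb _) (Finset.prod_nonneg fun i _ => h0 _) (pow_nonneg hρ _)

theorem prod_anti (a : ℕ → ℝ) (h0 : ∀ i, 0 ≤ a i) (h1 : ∀ i, a i ≤ 1) {m n : ℕ} (h : m ≤ n) :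
    ∏ i ∈ Finset.range n, a i ≤ ∏ i ∈ Finset.range m, a i := by
  obtain ⟨k, rfl⟩ := Nat.exists_eq_add_of_le h
  rw [Finset.prod_range_add]
  have : ∏ i ∈ Finset.range k, a (m + i) ≤ 1 := Finset.prod_le_one (fun i _ => h0 _) (fun i _ => h1 _)
  have hP : 0 ≤ ∏ i ∈ Finset.range m, a i := Finset.prod_nonneg fun i _ => h0 _
  nlinarith

end basic

/-- The one-sided current: source recursion with bounds. -/
def IsB (ω E : ℝ) (f Y g0 B : ℝ → ℝ) : Prop :=
  (∀ x, 0 ≤ B x) ∧ (∀ x, B x ≤ Zt ω f Y x * Y (x + ω)) ∧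
  ∀ x, B x = Zt ω f Y x * (E * f (x + ω)^2 * g0 (x + ω) + B (x + ω))

theorem B_le_sum {ω E : ℝ} {f Y g0 B : ℝ → ℝ} (hf : ∀ x, 0 < f x) (hf1 : ∀ x, f x ≤ 1) (hE : 0 < E)
    (hY : IsY ω E f Y) (hg0 : ∀ x, 0 < g0 x) (hB : IsB ω E f Y g0 B) (p G : ℝ) (k : ℕ)
    (hG : ∀ j : ℕ, 1 ≤ j → j ≤ k → g0 (p + j * ω) ≤ G) :
    B p ≤ k * E * G + ∏ i ∈ Finset.range k, Zt ω f Y (p + i * ω) := by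
  have h1 : B p ≤ k * E * G + (∏ i ∈ Finset.range k, Zt ω f Y (p + i * ω)) * B (p + k * ω) := by
    induction k with
    | zero => simp
    | succ k ih =>
      have ih := ih (fun j h1 h2 => hG j h1 (by omega))
      have h2 := hB.2.2 (p + k * ω)
      rw [show p + k * ω + ω = p + ((k+1 : ℕ):ℝ) * ω by push_cast; ring] at h2
      have hP : 0 ≤ ∏ i ∈ Finset.range (k+1), Zt ω f Y (p + i * ω) :=
        Finset.prod_nonneg fun i _ => (Zt_pos hf hY.1 _).le
      have hP1 : ∏ i ∈ Finset.range (k+1), Zt ω f Y (p + i * ω) ≤ 1 :=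
        Finset.prod_le_one (fun i _ => (Zt_pos hf hY.1 _).le) (fun i _ => Zt_le_one hf hY.1 _)
      have h3 : (∏ i ∈ Finset.range k, Zt ω f Y (p + i * ω)) * B (p + k * ω) =
          (∏ i ∈ Finset.range (k+1), Zt ω f Y (p + i * ω)) *
          (E * f (p + ((k+1 : ℕ):ℝ) * ω)^2 * g0 (p + ((k+1 : ℕ):ℝ) * ω) + B (p + ((k+1 : ℕ):ℝ) * ω)) := by
        rw [h2, Finset.prod_range_succ]; ring
      set X := p + ((k+1 : ℕ):ℝ) * ω
      have h4 : E * f X^2 * g0 X ≤ E * G := by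
        have a1 := hf X; have a2 := hf1 X; have a3 := hg0 X
        have a4 : g0 X ≤ G := hG (k+1) (by omega) le_rfl
        have : f X^2 ≤ 1 := by nlinarith
        calc E * f X^2 * g0 X ≤ E * 1 * G := by gcongr
          _ = _ := by ring
      have h6 : 0 ≤ E * f X^2 * g0 X := by have := hg0 X; positivity
      have h5 : (∏ i ∈ Finset.range (k+1), Zt ω f Y (p + i * ω)) * (E * f X^2 * g0 X) ≤ E * G := by
        nlinarith
      push_cast at *
      nlinarith
  refine h1.trans ?_
  have hP : 0 ≤ ∏ i ∈ Finset.range k, Zt ω f Y (p + i * ω) :=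
        Finset.prod_nonneg fun i _ => (Zt_pos hf hY.1 _).le
  have h2 : B (p + k * ω) ≤ 1 := by
    refine (hB.2.1 _).trans ((ser_le_c hf hY.1 _).trans ?_)
    have := hf1 (p + k * ω); have := hf1 (p + k * ω + ω)
    have := hf (p + k * ω); have := hf (p + k * ω + ω)
    nlinarith
  nlinarith


theorem g_alg (c Yl Yr a b g g' : ℝ) (hc : 0 < c) (hl : 0 < Yl) (hr : 0 < Yr)
    (hg : g = (b + c / (c + Yr) * a) / (Yl + c / (c + Yr) * Yr))
    (hg' : g' = (a + c / (c + Yl) * b) / (Yr + c / (c + Yl) * Yl)) :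
    c * (g' - g) = c / (c + Yr) * a - c / (c + Yr) * Yr * g := by
  have hD : 0 < c * Yl + Yl * Yr + c * Yr := by positivity
  have h1 : g = (b * (c + Yr) + c * a) / (c * Yl + Yl * Yr + c * Yr) := by
    rw [hg]
    have : 0 < c + Yr := by positivity
    field_simp
    try ring_nf
  have h2 : g' = (a * (c + Yl) + c * b) / (c * Yl + Yl * Yr + c * Yr) := by
    rw [hg']
    have : 0 < c + Yl := by positivity
    field_simp
    try ring_nf
  rw [h1, h2]
  have : 0 < c + Yr := by positivity
  field_simp
  ring

noncomputable def CC (ω E : ℝ) (f Yp Ym : ℝ → ℝ) (x : ℝ) : ℝ :=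
  E * f x ^ 2 + Zt ω f Yp x * Yp (x + ω) + Zt (-ω) f Ym x * Ym (x + -ω)

noncomputable def NN (E : ℝ) (f Bp Bm g0 : ℝ → ℝ) (x : ℝ) : ℝ :=
  E * f x ^ 2 * g0 x + Bp x + Bm x

noncomputable def gg (ω E : ℝ) (f Yp Ym Bp Bm g0 : ℝ → ℝ) (x : ℝ) : ℝ :=
  NN E f Bp Bm g0 x / CC ω E f Yp Ym x

theorem g_current {ω E : ℝ} {f Yp Ym Bp Bm g0 : ℝ → ℝ} (hf : ∀ x, 0 < f x)
    (hYp : IsY ω E f Yp) (hYm : IsY (-ω) E f Ym) (hBp : IsB ω E f Yp g0 Bp)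
    (hBm : IsB (-ω) E f Ym g0 Bm) (x : ℝ) :
    f x * f (x + ω) * (gg ω E f Yp Ym Bp Bm g0 (x + ω) - gg ω E f Yp Ym Bp Bm g0 x) =
      Bp x - Zt ω f Yp x * Yp (x + ω) * gg ω E f Yp Ym Bp Bm g0 x := by
  have h := g_alg (f x * f (x + ω)) (Ym x) (Yp (x + ω))
    (E * f (x + ω)^2 * g0 (x + ω) + Bp (x + ω)) (E * f x^2 * g0 x + Bm x)
    (gg ω E f Yp Ym Bp Bm g0 x) (gg ω E f Yp Ym Bp Bm g0 (x + ω))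
    (mul_pos (hf _) (hf _)) (hYm.1 _) (hYp.1 _) ?_ ?_
  · rw [h]
    have := hBp.2.2 x
    rw [this]; unfold Zt; ring
  · unfold gg NN CC
    have e1 := hBp.2.2 x
    have e2 := Y_eq hYm x
    have e3 : Zt ω f Yp x = f x * f (x + ω) / (f x * f (x + ω) + Yp (x + ω)) := rfl
    rw [← e3, e2]
    congr 1
    · rw [e1]; ring
    · ring
  · unfold gg NN CC
    have e1 := hBm.2.2 (x + ω)
    have e2 := Y_eq hYp (x + ω)
    have e3 : Zt (-ω) f Ym (x + ω) = f x * f (x + ω) / (f x * f (x + ω) + Ym x) := by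
      unfold Zt; rw [show x + ω + -ω = x by ring]; ring_nf
    rw [show x + ω + -ω = x by ring] at e1 ⊢
    rw [← e3, e2]
    congr 1
    rw [e1]
    try ring

theorem g_current' {ω E : ℝ} {f Yp Ym Bp Bm g0 : ℝ → ℝ} (hf : ∀ x, 0 < f x)
    (hYp : IsY ω E f Yp) (hYm : IsY (-ω) E f Ym) (hBp : IsB ω E f Yp g0 Bp)
    (hBm : IsB (-ω) E f Ym g0 Bm) (x : ℝ) :
    f x * f (x + -ω) * (gg ω E f Yp Ym Bp Bm g0 (x + -ω) - gg ω E f Yp Ym Bp Bm g0 x) =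
      Bm x - Zt (-ω) f Ym x * Ym (x + -ω) * gg ω E f Yp Ym Bp Bm g0 x := by
  have e : ∀ y, gg (-ω) E f Ym Yp Bm Bp g0 y = gg ω E f Yp Ym Bp Bm g0 y := by
    intro y; unfold gg NN CC; rw [neg_neg]
    congr 1 <;> ring
  have := g_current (ω := -ω) hf hYm (by rwa [neg_neg]) hBm (by rwa [neg_neg]) x
  simpa only [e] using this

structure RData (ω Λ c0 : ℝ) (s S : ℕ) (E : ℝ) (f Yp Ym Bp Bm g0 : ℝ → ℝ) : Prop where
  st : RState ω Λ s E f
  hs : 1000000 ≤ s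
  hS : S = s^16
  hc0 : 0 < c0
  hdi : ∀ j : ℕ, 1 ≤ j → ∀ p : ℤ, c0 / j ≤ |j * ω - p|
  hcs : 20 / c0 ≤ s
  hΛ1 : 1 ≤ Λ
  hΛ : Λ ≤ s
  hYp : IsY ω E f Yp
  hYm : IsY (-ω) E f Ym
  hBp : IsB ω E f Yp g0 Bp
  hBm : IsB (-ω) E f Ym g0 Bm
  g0pos : ∀ x, 0 < g0 x
  g0le : ∀ x, g0 x ≤ 1
  g0near : ∀ x, nearZ (1 / (4 * (S:ℝ)^3)) x → 1 / 2 ≤ g0 x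
  g0far : ∀ x, ¬ nearZ (1 / (S:ℝ)) x → g0 x ≤ Real.exp (-(16 * (S:ℝ)^8))
  gper : ∀ x, gg ω E f Yp Ym Bp Bm g0 (x + 1) = gg ω E f Yp Ym Bp Bm g0 x

theorem nearZ.mono {a b x : ℝ} (h : nearZ a x) (hab : a ≤ b) : nearZ b x := by
  obtain ⟨p, hp⟩ := h; exact ⟨p, hp.trans hab⟩

namespace RData
variable {ω Λ c0 : ℝ} {s S : ℕ} {E : ℝ} {f Yp Ym Bp Bm g0 : ℝ → ℝ}

theorem s6 (D : RData ω Λ c0 s S E f Yp Ym Bp Bm g0) : (1000000:ℝ) ≤ s := by exact_mod_cast D.hs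
theorem Sr (D : RData ω Λ c0 s S E f Yp Ym Bp Bm g0) : (S:ℝ) = (s:ℝ)^16 := by exact_mod_cast D.hS
theorem sS (D : RData ω Λ c0 s S E f Yp Ym Bp Bm g0) : (s:ℝ) * 10^6 ≤ S := by
  have h := D.s6
  rw [D.Sr]
  calc (s:ℝ) * 10^6 ≤ s * s^15 := by
        apply mul_le_mul_of_nonneg_left _ (by positivity)
        calc (10:ℝ)^6 = 1000000 := by norm_num
          _ ≤ s := h
          _ = (s:ℝ)^1 := by ring
          _ ≤ s^15 := pow_le_pow_right₀ (by linarith) (by norm_num)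
    _ = _ := by ring
theorem S6 (D : RData ω Λ c0 s S E f Yp Ym Bp Bm g0) : (1000000:ℝ) ≤ S := by have := D.s6; have := D.sS; linarith
theorem Epos (D : RData ω Λ c0 s S E f Yp Ym Bp Bm g0) : 0 < E := (Real.exp_pos _).trans_le D.st.Elow
theorem κpos (D : RData ω Λ c0 s S E f Yp Ym Bp Bm g0) (x : ℝ) : 0 < E * f x ^ 2 := mul_pos D.Epos (pow_pos (D.st.fpos x) 2)

theorem Sp_pos (D : RData ω Λ c0 s S E f Yp Ym Bp Bm g0) (x : ℝ) : 0 < Zt ω f Yp x * Yp (x + ω) :=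
  mul_pos (Zt_pos D.st.fpos D.hYp.1 x) (D.hYp.1 _)
theorem Sm_pos (D : RData ω Λ c0 s S E f Yp Ym Bp Bm g0) (x : ℝ) : 0 < Zt (-ω) f Ym x * Ym (x + -ω) :=
  mul_pos (Zt_pos D.st.fpos D.hYm.1 x) (D.hYm.1 _)
theorem Cge (D : RData ω Λ c0 s S E f Yp Ym Bp Bm g0) (x : ℝ) : E * f x ^ 2 ≤ CC ω E f Yp Ym x := by
  have := D.Sp_pos x; have := D.Sm_pos x
  unfold CC; linarith
theorem Cpos (D : RData ω Λ c0 s S E f Yp Ym Bp Bm g0) (x : ℝ) : 0 < CC ω E f Yp Ym x := (D.κpos x).trans_le (D.Cge x)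
theorem Nge (D : RData ω Λ c0 s S E f Yp Ym Bp Bm g0) (x : ℝ) : E * f x ^ 2 * g0 x ≤ NN E f Bp Bm g0 x := by
  have := D.hBp.1 x; have := D.hBm.1 x
  unfold NN; linarith
theorem Npos (D : RData ω Λ c0 s S E f Yp Ym Bp Bm g0) (x : ℝ) : 0 < NN E f Bp Bm g0 x :=
  (mul_pos (D.κpos x) (D.g0pos x)).trans_le (D.Nge x)
theorem NleC (D : RData ω Λ c0 s S E f Yp Ym Bp Bm g0) (x : ℝ) : NN E f Bp Bm g0 x ≤ CC ω E f Yp Ym x := by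
  have h1 := D.hBp.2.1 x; have h2 := D.hBm.2.1 x
  have h3 := D.κpos x; have h4 := D.g0le x
  unfold NN CC; nlinarith

theorem gpos (D : RData ω Λ c0 s S E f Yp Ym Bp Bm g0) (x : ℝ) : 0 < gg ω E f Yp Ym Bp Bm g0 x := div_pos (D.Npos x) (D.Cpos x)
theorem gle (D : RData ω Λ c0 s S E f Yp Ym Bp Bm g0) (x : ℝ) : gg ω E f Yp Ym Bp Bm g0 x ≤ 1 := (div_le_one (D.Cpos x)).2 (D.NleC x)

theorem vrec (D : RData ω Λ c0 s S E f Yp Ym Bp Bm g0) (x : ℝ) :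
    (f (x + ω) * gg ω E f Yp Ym Bp Bm g0 (x + ω) + f (x - ω) * gg ω E f Yp Ym Bp Bm g0 (x - ω)) /
      (f x * gg ω E f Yp Ym Bp Bm g0 x) =
    (f (x + ω) + f (x - ω)) / f x + E * (1 - g0 x / gg ω E f Yp Ym Bp Bm g0 x) := by
  have h1 := g_current D.st.fpos D.hYp D.hYm D.hBp D.hBm x
  have h2 := g_current' D.st.fpos D.hYp D.hYm D.hBp D.hBm x
  rw [sub_eq_add_neg]
  have h3 : NN E f Bp Bm g0 x = CC ω E f Yp Ym x * gg ω E f Yp Ym Bp Bm g0 x := by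
    unfold gg; have := D.Cpos x; field_simp
  have hg := D.gpos x
  have hf := D.st.fpos x
  set g := gg ω E f Yp Ym Bp Bm g0 x
  set gp := gg ω E f Yp Ym Bp Bm g0 (x + ω)
  set gm := gg ω E f Yp Ym Bp Bm g0 (x + -ω)
  have h4 : f x * f (x + ω) * (gp - g) + f x * f (x + -ω) * (gm - g) = E * f x^2 * (g - g0 x) := by
    unfold NN CC at h3
    rw [h1, h2]; linarith
  have h5 : f (x + ω) * (gp - g) + f (x + -ω) * (gm - g) = E * f x * (g - g0 x) := by
    apply mul_left_cancel₀ hf.ne'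
    linarith
  field_simp
  linarith

theorem Cle (D : RData ω Λ c0 s S E f Yp Ym Bp Bm g0) (x : ℝ) (hx : nearZ (1 / (4 * (s:ℝ)^3)) x) :
    CC ω E f Yp Ym x ≤ 2 * (s:ℝ)^6 * (E * f x ^2) := by
  have h1 := D.st.I3 ω (Or.inl rfl) Yp D.hYp x hx
  have h2 := D.st.I3 (-ω) (Or.inr rfl) Ym D.hYm x hx
  have h3 := Y_eq D.hYp x
  have h4 := Y_eq D.hYm x
  have := D.κpos x
  unfold CC; linarith

theorem pi_near (D : RData ω Λ c0 s S E f Yp Ym Bp Bm g0) (x : ℝ) (hx : nearZ (1 / (4 * (s:ℝ)^3)) x) :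
    g0 x / gg ω E f Yp Ym Bp Bm g0 x ≤ 2 * (s:ℝ)^6 := by
  rw [div_le_iff₀ (D.gpos x)]
  unfold gg
  have hC := D.Cpos x
  rw [← mul_div_assoc, le_div_iff₀ hC]
  have h1 := D.Cle x hx
  have h2 := D.Nge x
  have h3 := D.g0pos x
  have hs := D.s6
  calc g0 x * CC ω E f Yp Ym x ≤ g0 x * (2 * (s:ℝ)^6 * (E * f x ^2)) := by gcongr
    _ = 2 * (s:ℝ)^6 * (E * f x ^2 * g0 x) := by ring
    _ ≤ _ := by gcongr

theorem δle (D : RData ω Λ c0 s S E f Yp Ym Bp Bm g0) : 1 / (4 * (S:ℝ)^3) ≤ 1 / (4 * (s:ℝ)^3) := by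
  have h1 := D.s6; have h2 := D.sS
  have : (s:ℝ) ≤ S := by linarith
  gcongr

theorem flow1 (D : RData ω Λ c0 s S E f Yp Ym Bp Bm g0) (x : ℝ) (hx : nearZ (1 / (4 * (S:ℝ)^3)) x) :
    1 / (4 * (s:ℝ)^8) ≤ f x * gg ω E f Yp Ym Bp Bm g0 x := by
  have hx' := hx.mono D.δle
  have h1 := D.pi_near x hx'
  have h2 := D.g0near x hx
  have h3 := D.st.flow x hx'
  have hs := D.s6
  rw [div_le_iff₀ (D.gpos x)] at h1
  have h4 : 1 / (4 * (s:ℝ)^6) ≤ gg ω E f Yp Ym Bp Bm g0 x := by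
    rw [div_le_iff₀ (by positivity)]; linarith
  calc 1 / (4 * (s:ℝ)^8) = 1 / (s:ℝ)^2 * (1 / (4 * (s:ℝ)^6)) := by
        field_simp
    _ ≤ _ := by
      have := D.st.fpos x
      gcongr

theorem harnack (D : RData ω Λ c0 s S E f Yp Ym Bp Bm g0) (x : ℝ) (j : ℕ) :
    f (x + j * ω) * gg ω E f Yp Ym Bp Bm g0 (x + j * ω) ≤
      Λ^j * (f x * gg ω E f Yp Ym Bp Bm g0 x) := by
  induction j with
  | zero => simp
  | succ j ih =>
    have h1 := D.vrec (x + j * ω)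
    have h2 := D.st.vb (x + j * ω)
    have hs := D.s6
    have h3 : 0 < E * (g0 (x + j * ω) / gg ω E f Yp Ym Bp Bm g0 (x + j * ω)) :=
      mul_pos D.Epos (div_pos (D.g0pos _) (D.gpos _))
    have h4 : (0:ℝ) < 1 / s := by positivity
    have h5 : 0 < f (x + j * ω) * gg ω E f Yp Ym Bp Bm g0 (x + j * ω) := mul_pos (D.st.fpos _) (D.gpos _)
    have h6 : 0 < f (x + j * ω - ω) * gg ω E f Yp Ym Bp Bm g0 (x + j * ω - ω) := mul_pos (D.st.fpos _) (D.gpos _)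
    have h7 : (f (x + j * ω + ω) * gg ω E f Yp Ym Bp Bm g0 (x + j * ω + ω) +
        f (x + j * ω - ω) * gg ω E f Yp Ym Bp Bm g0 (x + j * ω - ω)) /
      (f (x + j * ω) * gg ω E f Yp Ym Bp Bm g0 (x + j * ω)) ≤ Λ := by
      rw [h1]; linarith
    rw [div_le_iff₀ h5] at h7
    rw [show x + ((j+1 : ℕ):ℝ) * ω = x + j * ω + ω by push_cast; ring]
    have := D.hΛ1
    calc _ ≤ Λ * (f (x + j * ω) * gg ω E f Yp Ym Bp Bm g0 (x + j * ω)) := by linarith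
      _ ≤ Λ * (Λ^j * (f x * gg ω E f Yp Ym Bp Bm g0 x)) := by gcongr
      _ = _ := by ring

theorem hit (D : RData ω Λ c0 s S E f Yp Ym Bp Bm g0) (ω' : ℝ) (h' : ω' = ω ∨ ω' = -ω) (x : ℝ) :
    ∃ j : ℕ, (j:ℝ) ≤ 4 * s * (S:ℝ)^6 ∧ nearZ (1 / (4 * (S:ℝ)^3)) (x + j * ω') := by
  have hS := D.S6
  have hdi' : ∀ j : ℕ, 1 ≤ j → ∀ p : ℤ, c0 / j ≤ |j * ω' - p| := by
    intro j hj p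
    rcases h' with rfl | rfl
    · exact D.hdi j hj p
    · have := D.hdi j hj (-p)
      rw [← abs_neg]
      push_cast at this
      rwa [show -((j:ℝ) * -ω - p) = j * ω - -p by ring]
  obtain ⟨j, hj, p, hp⟩ := dioph_hit ω' c0 D.hc0 hdi' (1 / (4 * (S:ℝ)^3)) (by positivity)
    (by
      rw [div_le_one (by positivity)]
      have : (1:ℝ) ≤ (S:ℝ)^3 := one_le_pow₀ (by linarith)
      linarith) x
  refine ⟨j, hj.trans ?_, p, hp⟩
  have h1 := D.hcs
  have h2 : 4 / c0 / (1 / (4 * (S:ℝ)^3))^2 = (20 / c0) * (64 / 20 * S^6) := by field_simp; norm_num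
  rw [h2]
  calc (20 / c0) * (64 / 20 * (S:ℝ)^6) ≤ s * (64/20 * S^6) := by gcongr
    _ ≤ _ := by
      have : (0:ℝ) ≤ s * S^6 := by positivity
      linarith

theorem s_le_exp (D : RData ω Λ c0 s S E f Yp Ym Bp Bm g0) : (s:ℝ) ≤ Real.exp s := by have := Real.add_one_le_exp (s:ℝ); linarith

theorem fexp1 (D : RData ω Λ c0 s S E f Yp Ym Bp Bm g0) (x : ℝ) : Real.exp (-(S:ℝ)^7) ≤ f x * gg ω E f Yp Ym Bp Bm g0 x := by
  obtain ⟨j, hj, hn⟩ := D.hit ω (Or.inl rfl) x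
  have h1 := D.harnack x j
  have h2 := D.flow1 _ hn
  have hs := D.s6
  have hS := D.S6
  have hΛ := D.hΛ
  have hΛ1 := D.hΛ1
  have hp : 0 < f x * gg ω E f Yp Ym Bp Bm g0 x := mul_pos (D.st.fpos _) (D.gpos _)
  have h3 : Λ^j ≤ Real.exp (4 * s^2 * S^6) := by
    calc Λ^j ≤ (Real.exp s)^j := by
          have := D.s_le_exp
          gcongr; linarith
      _ = Real.exp (j * s) := by rw [← Real.exp_nat_mul]
      _ ≤ _ := by
        apply Real.exp_le_exp.2
        calc (j:ℝ) * s ≤ 4 * s * (S:ℝ)^6 * s := by gcongr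
          _ = _ := by ring
  have h4 : 4 * (s:ℝ)^8 ≤ Real.exp (9 * s) := by
    have := D.s_le_exp
    calc 4 * (s:ℝ)^8 ≤ (s:ℝ) * (s:ℝ)^8 := by gcongr; linarith
      _ = (s:ℝ)^9 := by ring
      _ ≤ (Real.exp s)^9 := by gcongr
      _ = _ := by rw [← Real.exp_nat_mul]; norm_num
  have h5 : Real.exp (-(9 * s)) ≤ 1 / (4 * (s:ℝ)^8) := by
    rw [Real.exp_neg, ← one_div]
    exact one_div_le_one_div_of_le (by positivity) h4
  have h6 : Real.exp (-(9 * s)) ≤ Real.exp (4 * s^2 * S^6) * (f x * gg ω E f Yp Ym Bp Bm g0 x) := by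
    calc _ ≤ _ := h5
      _ ≤ _ := h2
      _ ≤ _ := h1
      _ ≤ _ := by gcongr
  have h7 : Real.exp (-(9*s) - 4 * s^2 * S^6) ≤ f x * gg ω E f Yp Ym Bp Bm g0 x := by
    rw [Real.exp_sub, div_le_iff₀ (Real.exp_pos _)]
    linarith
  refine le_trans (Real.exp_le_exp.2 ?_) h7
  have h8 : 10 * (s:ℝ)^2 ≤ S := by
    rw [D.Sr]
    calc 10 * (s:ℝ)^2 ≤ (s:ℝ) * (s:ℝ)^2 := by gcongr; linarith
      _ = (s:ℝ)^3 := by ring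
      _ ≤ (s:ℝ)^16 := pow_le_pow_right₀ (by linarith) (by norm_num)
  have h9 : (1:ℝ) ≤ (S:ℝ)^6 := one_le_pow₀ (by linarith)
  have h10 : (S:ℝ)^7 = S * S^6 := by ring
  have h11 : 10 * (s:ℝ)^2 * S^6 ≤ S * S^6 := by gcongr
  have h12 : (s:ℝ) ≤ s^2 := by nlinarith
  have h13 : (s:ℝ)^2 ≤ s^2 * S^6 := by nlinarith
  have h14 : 2 * (s:ℝ) ≤ s^2 := by nlinarith
  nlinarith

theorem g_ge (D : RData ω Λ c0 s S E f Yp Ym Bp Bm g0) (x : ℝ) : Real.exp (-(S:ℝ)^7) ≤ gg ω E f Yp Ym Bp Bm g0 x := by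
  have h1 := D.fexp1 x
  have h2 := D.st.fle x
  have h3 := D.gpos x
  nlinarith

theorem pi_far0 (D : RData ω Λ c0 s S E f Yp Ym Bp Bm g0) (x : ℝ) (hx : ¬ nearZ (1 / (S:ℝ)) x) :
    g0 x / gg ω E f Yp Ym Bp Bm g0 x ≤ Real.exp (-(S:ℝ)^8) := by
  rw [div_le_iff₀ (D.gpos x)]
  have h1 := D.g0far x hx
  have h2 := D.g_ge x
  have hS := D.S6
  calc g0 x ≤ _ := h1
    _ ≤ Real.exp (-(S:ℝ)^8) * Real.exp (-(S:ℝ)^7) := by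
      rw [← Real.exp_add]
      apply Real.exp_le_exp.2
      have : (S:ℝ)^7 ≤ (S:ℝ)^8 := pow_le_pow_right₀ (by linarith) (by norm_num)
      nlinarith
    _ ≤ _ := by gcongr

theorem E_le_s (D : RData ω Λ c0 s S E f Yp Ym Bp Bm g0) : E ≤ s := D.st.Eup.trans D.hΛ

theorem pi_far (D : RData ω Λ c0 s S E f Yp Ym Bp Bm g0) (x : ℝ) (hx : ¬ nearZ (1 / (S:ℝ)) x) :
    E * (g0 x / gg ω E f Yp Ym Bp Bm g0 x) ≤ Real.exp (-(s:ℝ)^8) := by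
  have h1 := D.pi_far0 x hx
  have hS := D.S6
  have hs := D.s6
  have hE := D.E_le_s
  have hE0 := D.Epos
  calc _ ≤ Real.exp s * Real.exp (-(S:ℝ)^8) := by
        have := D.s_le_exp
        have := (div_pos (D.g0pos x) (D.gpos x)).le
        exact mul_le_mul (by linarith) h1 this (by positivity)
    _ ≤ _ := by
      rw [← Real.exp_add]
      apply Real.exp_le_exp.2
      have h2 : (s:ℝ)^8 ≤ S := by
        rw [D.Sr]; exact pow_le_pow_right₀ (by linarith) (by norm_num)
      have h3 : (s:ℝ) ≤ s^8 := by
        calc (s:ℝ) = s^1 := by ring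
          _ ≤ _ := pow_le_pow_right₀ (by linarith) (by norm_num)
      have h4 : (S:ℝ)^2 ≤ (S:ℝ)^8 := pow_le_pow_right₀ (by linarith) (by norm_num)
      nlinarith

theorem pi_le (D : RData ω Λ c0 s S E f Yp Ym Bp Bm g0) (x : ℝ) : g0 x / gg ω E f Yp Ym Bp Bm g0 x ≤ 2 * (s:ℝ)^6 := by
  have hS := D.S6
  have hs := D.s6
  by_cases hx : nearZ (1 / (S:ℝ)) x
  · apply D.pi_near
    apply hx.mono
    apply one_div_le_one_div_of_le (by positivity)
    rw [D.Sr]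
    calc 4 * (s:ℝ)^3 ≤ (s:ℝ) * (s:ℝ)^3 := by gcongr; linarith
      _ = (s:ℝ)^4 := by ring
      _ ≤ (s:ℝ)^16 := pow_le_pow_right₀ (by linarith) (by norm_num)
  · refine (D.pi_far0 x hx).trans ?_
    have : Real.exp (-(S:ℝ)^8) ≤ 1 := by
      rw [Real.exp_le_one_iff]; simp
    have : (1:ℝ) ≤ (s:ℝ)^6 := one_le_pow₀ (by linarith)
    linarith

theorem far (D : RData ω Λ c0 s S E f Yp Ym Bp Bm g0) (y : ℝ) (hy : nearZ (1 / (4 * (S:ℝ)^3)) y) (i : ℤ) (h1 : i ≠ 0) (h2 : |(i:ℝ)| ≤ 10 * (s:ℝ)^15) :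
    ¬ nearZ (1 / (S:ℝ)) (y + i * ω) := by
  rintro ⟨q, hq⟩
  obtain ⟨p, hp⟩ := hy
  have hS := D.S6
  have hs := D.s6
  have hc := D.hcs
  have hc0 := D.hc0
  have hna : 1 ≤ i.natAbs := Nat.one_le_iff_ne_zero.2 (Int.natAbs_ne_zero.2 h1)
  have e1 : ((i.natAbs:ℕ):ℝ) = |(i:ℝ)| := by
    rw [Nat.cast_natAbs]; simp
  have key : c0 / |(i:ℝ)| ≤ |i * ω - ((q - p : ℤ):ℝ)| := by
    rcases le_total 0 i with hi | hi
    · have := D.hdi i.natAbs hna (q - p)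
      rw [e1] at this
      rwa [abs_of_nonneg (show (0:ℝ) ≤ i by exact_mod_cast hi)] at this ⊢
    · have := D.hdi i.natAbs hna (-(q - p))
      rw [e1] at this
      have hi' : |(i:ℝ)| = -i := abs_of_nonpos (by exact_mod_cast hi)
      rw [hi'] at this ⊢
      rw [← abs_neg]
      push_cast at this ⊢
      rwa [show -((i:ℝ) * ω - (q - p)) = -i * ω - -(q - p) by ring]
  have h3 : |i * ω - ((q - p : ℤ):ℝ)| ≤ 1 / (S:ℝ) + 1 / (4 * (S:ℝ)^3) := by
    push_cast
    rw [show (i:ℝ) * ω - (q - p) = (y + i * ω - q) - (y - p) by ring]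
    exact (abs_sub _ _).trans (add_le_add hq hp)
  have h4 : 1 / (4 * (S:ℝ)^3) < 1 / S := by
    apply one_div_lt_one_div_of_lt (by positivity)
    have : (S:ℝ)^1 ≤ (S:ℝ)^3 := pow_le_pow_right₀ (by linarith) (by norm_num)
    have : (0:ℝ) < S^3 := by positivity
    linarith
  have hi0 : 0 < |(i:ℝ)| := abs_pos.2 (by exact_mod_cast h1)
  have h5 : c0 / (10 * (s:ℝ)^15) ≤ c0 / |(i:ℝ)| := by gcongr
  have h6 : 2 / (S:ℝ) ≤ c0 / (10 * (s:ℝ)^15) := by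
    rw [div_le_iff₀ hc0] at hc
    rw [D.Sr, div_le_div_iff₀ (by positivity) (by positivity)]
    calc 2 * (10 * (s:ℝ)^15) = 20 * s^15 := by ring
      _ ≤ (s * c0) * s^15 := by gcongr
      _ = _ := by ring
  have h7 : 2 / (S:ℝ) = 1 / S + 1 / S := by ring
  linarith

end RData


namespace RData
variable {ω Λ c0 : ℝ} {s S : ℕ} {E : ℝ} {f Yp Ym Bp Bm g0 : ℝ → ℝ}

theorem spow_le_exp (D : RData ω Λ c0 s S E f Yp Ym Bp Bm g0) (n : ℕ) : (s:ℝ)^n ≤ Real.exp (n * s) := by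
  have := D.s_le_exp
  rw [Real.exp_nat_mul]; gcongr

theorem prod_small (D : RData ω Λ c0 s S E f Yp Ym Bp Bm g0) (ω' : ℝ) (h' : ω' = ω ∨ ω' = -ω) (Y : ℝ → ℝ) (hY : IsY ω' E f Y) (p : ℝ) :
    ∏ i ∈ Finset.range (4 * s^15), Zt ω' f Y (p + i * ω') ≤ Real.exp (-(2 * (s:ℝ)^8)) := by
  have h := prod_block (fun i => Zt ω' f Y (p + i * ω')) (s^7) (4 * s^8) (1/2)
    (fun i => (Zt_pos D.st.fpos hY.1 _).le) (by
      intro k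
      have := D.st.I4 ω' h' Y hY (p + k * ω')
      refine le_trans (le_of_eq ?_) this
      apply Finset.prod_congr rfl
      intro i _
      congr 1; push_cast; ring)
  rw [show 4 * s^8 * s^7 = 4 * s^15 by ring] at h
  refine h.trans ?_
  have h2 : (1/2 : ℝ) ≤ Real.exp (-(1/2)) := by
    have := Real.add_one_le_exp (-(1/2:ℝ)); linarith
  calc ((1/2:ℝ))^(4 * s^8) ≤ (Real.exp (-(1/2)))^(4 * s^8) := by gcongr
    _ = _ := by rw [← Real.exp_nat_mul]; congr 1; push_cast; ring

theorem valley (D : RData ω Λ c0 s S E f Yp Ym Bp Bm g0) (y : ℝ) (hy : nearZ (1 / (4 * (S:ℝ)^3)) y) (t : ℤ) (ht : t = 5 * (s:ℤ)^15 ∨ t = -(5 * (s:ℤ)^15)) :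
    gg ω E f Yp Ym Bp Bm g0 (y + t * ω) ≤ Real.exp (-(s:ℝ)^8) / (2 * (S:ℝ)^4) := by
  have hs := D.s6
  have hS := D.S6
  have hsZ : (1:ℤ) ≤ (s:ℤ)^15 := by
    have : 1 ≤ s := by have := D.hs; omega
    exact_mod_cast Nat.one_le_pow _ _ this
  have hG : ∀ j : ℤ, |j| ≤ 4 * (s:ℤ)^15 → g0 (y + t * ω + j * ω) ≤ Real.exp (-(16 * (S:ℝ)^8)) := by
    intro j hj
    apply D.g0far
    have hj' := abs_le.1 hj
    have := D.far y hy (t + j) (by rcases ht with rfl | rfl <;> omega) (by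
      have : |t + j| ≤ 10 * (s:ℤ)^15 := by
        rw [abs_le]; rcases ht with rfl | rfl <;> constructor <;> omega
      exact_mod_cast this)
    push_cast at this
    rwa [show y + t * ω + j * ω = y + (t + j) * ω by ring]
  set p := y + t * ω with hp
  set G := Real.exp (-(16 * (S:ℝ)^8)) with hGd
  have hE := D.Epos
  have b1 := B_le_sum D.st.fpos D.st.fle hE D.hYp D.g0pos D.hBp p G (4 * s^15) (by
    intro j _ hj
    have := hG j (by rw [abs_of_nonneg (by positivity)]; exact_mod_cast hj)
    simpa using this)
  have b2 := B_le_sum D.st.fpos D.st.fle hE D.hYm D.g0pos D.hBm p G (4 * s^15) (by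
    intro j _ hj
    have := hG (-j) (by rw [abs_neg, abs_of_nonneg (by positivity)]; exact_mod_cast hj)
    push_cast at this
    rwa [show (-(j:ℝ)) * ω = j * -ω by ring] at this)
  have p1 := D.prod_small ω (Or.inl rfl) Yp D.hYp p
  have p2 := D.prod_small (-ω) (Or.inr rfl) Ym D.hYm p
  have g1 : g0 p ≤ G := by simpa using hG 0 (by simp)
  have hf1 := D.st.fexp p
  have hκ := D.κpos p
  have hκlow : Real.exp (-s - 2 * (s:ℝ)^7) ≤ E * f p^2 := by
    calc Real.exp (-s - 2 * (s:ℝ)^7) = Real.exp (-s) * (Real.exp (-(s:ℝ)^7))^2 := by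
          rw [← Real.exp_nat_mul, ← Real.exp_add]; congr 1; push_cast; ring
      _ ≤ _ := by have := D.st.Elow; gcongr
  have hκup : E * f p ^2 ≤ s := by
    have h1 := D.E_le_s; have h2 := D.st.fle p; have h3 := D.st.fpos p
    have : f p ^2 ≤ 1 := by nlinarith
    nlinarith
  -- bound on N
  have hN : NN E f Bp Bm g0 p ≤ 9 * (s:ℝ)^16 * G + 2 * Real.exp (-(2 * (s:ℝ)^8)) := by
    have c1 : E * f p^2 * g0 p ≤ s * G := by
      have := D.g0pos p
      gcongr
    have hG0 : 0 < G := Real.exp_pos _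
    have c2 : ((4 * s^15 : ℕ):ℝ) * E * G ≤ 4 * (s:ℝ)^16 * G := by
      have h1 := D.E_le_s
      push_cast
      calc 4 * (s:ℝ)^15 * E * G ≤ 4 * (s:ℝ)^15 * s * G := by gcongr
        _ = _ := by ring
    have c3 : (s:ℝ) * G ≤ (s:ℝ)^16 * G := by
      gcongr
      calc (s:ℝ) = s^1 := by ring
          _ ≤ _ := pow_le_pow_right₀ (by linarith) (by norm_num)
    unfold NN
    linarith
  have hg : gg ω E f Yp Ym Bp Bm g0 p ≤ (9 * (s:ℝ)^16 * G + 2 * Real.exp (-(2 * (s:ℝ)^8))) / (E * f p^2) := by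
    unfold gg
    exact div_le_div₀ (by positivity) hN hκ (D.Cge p)
  refine hg.trans ?_
  rw [div_le_iff₀ hκ, D.Sr]
  have e1 : (9 * (s:ℝ)^16) * (4 * s^64) ≤ Real.exp (90 * s) := by
    calc (9 * (s:ℝ)^16) * (4 * s^64) = 36 * (s:ℝ)^80 := by ring
      _ ≤ (s:ℝ)^10 * (s:ℝ)^80 := by
        gcongr
        calc (36:ℝ) ≤ s := by linarith
          _ = (s:ℝ)^1 := by ring
          _ ≤ _ := pow_le_pow_right₀ (by linarith) (by norm_num)
      _ = (s:ℝ)^90 := by ring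
      _ ≤ _ := by simpa using D.spow_le_exp 90
  have e2 : 2 * (4 * (s:ℝ)^64) ≤ Real.exp (90 * s) := by
    calc 2 * (4 * (s:ℝ)^64) = 8 * (s:ℝ)^64 := by ring
      _ ≤ (s:ℝ)^26 * (s:ℝ)^64 := by
        gcongr
        calc (8:ℝ) ≤ s := by linarith
          _ = (s:ℝ)^1 := by ring
          _ ≤ _ := pow_le_pow_right₀ (by linarith) (by norm_num)
      _ = (s:ℝ)^90 := by ring
      _ ≤ _ := by simpa using D.spow_le_exp 90
  have hs7 : (s:ℝ) ≤ (s:ℝ)^7 := by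
    calc (s:ℝ) = s^1 := by ring
          _ ≤ _ := pow_le_pow_right₀ (by linarith) (by norm_num)
  have hs8 : (s:ℝ)^8 = s * s^7 := by ring
  have hs8' : 1000000 * (s:ℝ)^7 ≤ (s:ℝ)^8 := by rw [hs8]; gcongr
  have hS8 : 2 * (s:ℝ)^8 ≤ 16 * (S:ℝ)^8 := by
    have : (s:ℝ)^8 ≤ (S:ℝ)^8 := by
      have := D.sS
      have : (s:ℝ) ≤ S := by linarith
      exact pow_le_pow_left₀ (by positivity) this 8
    linarith [show (0:ℝ) ≤ (s:ℝ)^8 by positivity]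
  have key : Real.exp (90 * s) * Real.exp (-(2 * (s:ℝ)^8)) ≤ Real.exp (-(s:ℝ)^8) * Real.exp (-s - 2 * (s:ℝ)^7) := by
    rw [← Real.exp_add, ← Real.exp_add]
    apply Real.exp_le_exp.2
    linarith
  have hGle : G ≤ Real.exp (-(2 * (s:ℝ)^8)) := Real.exp_le_exp.2 (by linarith)
  have hX : 0 < Real.exp (-(2 * (s:ℝ)^8)) := Real.exp_pos _
  have t1 : 9 * (s:ℝ)^16 * G * (4 * s^64) ≤ Real.exp (-(s:ℝ)^8) * (E * f p^2) := by
    calc 9 * (s:ℝ)^16 * G * (4 * s^64) = (9 * (s:ℝ)^16) * (4 * s^64) * G := by ring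
      _ ≤ Real.exp (90 * s) * Real.exp (-(2 * (s:ℝ)^8)) := by gcongr
      _ ≤ _ := key
      _ ≤ _ := by gcongr
  have t2 : 2 * Real.exp (-(2 * (s:ℝ)^8)) * (4 * s^64) ≤ Real.exp (-(s:ℝ)^8) * (E * f p^2) := by
    calc 2 * Real.exp (-(2 * (s:ℝ)^8)) * (4 * s^64) = 2 * (4 * (s:ℝ)^64) * Real.exp (-(2 * (s:ℝ)^8)) := by ring
      _ ≤ Real.exp (90 * s) * Real.exp (-(2 * (s:ℝ)^8)) := by gcongr
      _ ≤ _ := key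
      _ ≤ _ := by gcongr
  rw [div_mul_eq_mul_div, le_div_iff₀ (by positivity)]
  have : ((s:ℝ)^16)^4 = (s:ℝ)^64 := by ring
  rw [this]
  linarith

theorem fp_le (D : RData ω Λ c0 s S E f Yp Ym Bp Bm g0) (x : ℝ) : f x * gg ω E f Yp Ym Bp Bm g0 x ≤ gg ω E f Yp Ym Bp Bm g0 x := by
  have := D.st.fle x; have := D.gpos x; nlinarith

theorem fp_le1 (D : RData ω Λ c0 s S E f Yp Ym Bp Bm g0) (x : ℝ) : f x * gg ω E f Yp Ym Bp Bm g0 x ≤ 1 := (D.fp_le x).trans (D.gle x)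

theorem newstate (D : RData ω Λ c0 s S E f Yp Ym Bp Bm g0) : RState ω Λ S (Real.exp (-(s:ℝ)^8)) (fun x => f x * gg ω E f Yp Ym Bp Bm g0 x) := by
  have hs := D.s6
  have hS := D.S6
  have hs8S : (s:ℝ)^8 ≤ S := by
    rw [D.Sr]; exact pow_le_pow_right₀ (by linarith) (by norm_num)
  have hss8 : (s:ℝ) ≤ s^8 := by
    calc (s:ℝ) = s^1 := by ring
          _ ≤ _ := pow_le_pow_right₀ (by linarith) (by norm_num)
  have fp : ∀ x, 0 < f x * gg ω E f Yp Ym Bp Bm g0 x := fun x => mul_pos (D.st.fpos x) (D.gpos x)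
  have hE' : 0 < Real.exp (-(s:ℝ)^8) := Real.exp_pos _
  -- lower bound for new κ at a near point
  have κ' : ∀ y, nearZ (1 / (4 * (S:ℝ)^3)) y →
      Real.exp (-(s:ℝ)^8) / (16 * S) ≤ Real.exp (-(s:ℝ)^8) * (f y * gg ω E f Yp Ym Bp Bm g0 y)^2 := by
    intro y hy
    have h1 := D.flow1 y hy
    calc Real.exp (-(s:ℝ)^8) / (16 * S) = Real.exp (-(s:ℝ)^8) * (1 / (4 * (s:ℝ)^8))^2 := by
          rw [D.Sr]; field_simp; norm_num
      _ ≤ _ := by gcongr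
  refine ⟨?_, ?_, fp, D.fp_le1, ?_, ?_, D.fexp1, ?_, ?_, ?_⟩
  · exact Real.exp_le_exp.2 (by linarith)
  · refine le_trans ?_ D.hΛ1
    rw [Real.exp_le_one_iff]; simp
  · intro x; simp only [D.st.fper, D.gper]
  · intro x hx
    refine le_trans ?_ (D.flow1 x hx)
    apply one_div_le_one_div_of_le (by positivity)
    have : (S:ℝ)^2 = (s:ℝ)^24 * s^8 := by rw [D.Sr]; ring
    rw [this]
    gcongr
    calc (4:ℝ) ≤ s := by linarith
      _ = (s:ℝ)^1 := by ring
      _ ≤ _ := pow_le_pow_right₀ (by linarith) (by norm_num)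
  · intro x
    rw [D.vrec x]
    have h1 := D.st.vb x
    have h2 : 0 < E * (g0 x / gg ω E f Yp Ym Bp Bm g0 x) := mul_pos D.Epos (div_pos (D.g0pos x) (D.gpos x))
    have h3 : Real.exp (-(s:ℝ)^8) ≤ 1 / (2 * s) := by
      rw [Real.exp_neg, ← one_div]
      apply one_div_le_one_div_of_le (by positivity)
      have := Real.add_one_le_exp ((s:ℝ)^8)
      have : 2 * (s:ℝ) ≤ s^8 := by
        calc 2 * (s:ℝ) ≤ s * s := by nlinarith
          _ = s^2 := by ring
          _ ≤ _ := pow_le_pow_right₀ (by linarith) (by norm_num)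
      linarith
    have h4 : 1 / (S:ℝ) ≤ 1 / (2 * s) := by
      apply one_div_le_one_div_of_le (by positivity)
      have := D.sS; linarith
    have h5 : 1 / (2 * (s:ℝ)) + 1 / (2 * s) = 1 / s := by field_simp; norm_num
    linarith
  · intro ω' h' Y hY y hy
    have h1 := Y_le_sum fp D.fp_le1 hE' hY y (5 * s^15)
    set p := y + ((5 * s^15 : ℕ):ℝ) * ω' with hp
    have hv : gg ω E f Yp Ym Bp Bm g0 p ≤ Real.exp (-(s:ℝ)^8) / (2 * (S:ℝ)^4) := by
      rcases h' with rfl | rfl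
      · have := D.valley y hy (5 * (s:ℤ)^15) (Or.inl rfl)
        rw [hp]; push_cast at this ⊢; exact this
      · have := D.valley y hy (-(5 * (s:ℤ)^15)) (Or.inr rfl)
        rw [hp]; push_cast at this ⊢
        rwa [show (5:ℝ) * (s:ℝ)^15 * -ω = -(5 * (s:ℝ)^15) * ω by ring]
    have h2 := Y_eq hY p
    have h3 := ser_le_c fp hY.1 p (ω := ω')
    have h4 := D.fp_le p
    have h5 := D.fp_le1 (p + ω')
    have h6 := fp p
    have h7 := fp (p + ω')
    have h8 := D.fp_le1 p
    have h9 : Real.exp (-(s:ℝ)^8) / (2 * (S:ℝ)^4) ≤ Real.exp (-(s:ℝ)^8) := by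
      apply div_le_self hE'.le
      have : (1:ℝ) ≤ (S:ℝ)^4 := one_le_pow₀ (by linarith)
      linarith
    have h10 : Y p ≤ 2 * Real.exp (-(s:ℝ)^8) := by
      have a1 : (f p * gg ω E f Yp Ym Bp Bm g0 p)^2 ≤ 1 := by nlinarith
      have a2 : f p * gg ω E f Yp Ym Bp Bm g0 p * (f (p + ω') * gg ω E f Yp Ym Bp Bm g0 (p + ω')) ≤
         f p * gg ω E f Yp Ym Bp Bm g0 p := by nlinarith
      nlinarith
    have h11 := κ' y hy
    have h12 : (s:ℝ)^15 ≤ S := by rw [D.Sr]; exact pow_le_pow_right₀ (by linarith) (by norm_num)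
    calc Y y ≤ (5 * S + 2) * Real.exp (-(s:ℝ)^8) := by push_cast at h1; nlinarith
      _ ≤ (S:ℝ)^6 * (Real.exp (-(s:ℝ)^8) / (16 * S)) := by
        have a3 : (S:ℝ)^6 * (Real.exp (-(s:ℝ)^8) / (16 * S)) = S^5 / 16 * Real.exp (-(s:ℝ)^8) := by field_simp
        rw [a3]
        gcongr
        have : (S:ℝ)^2 ≤ S^5 := pow_le_pow_right₀ (by linarith) (by norm_num)
        nlinarith
      _ ≤ _ := by gcongr
  · intro ω' h' Y hY x
    obtain ⟨j, hj, hn⟩ := D.hit ω' h' (x + ((5 * s^15 : ℕ):ℝ) * ω')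
    set y := x + ((5 * s^15 : ℕ):ℝ) * ω' + j * ω' with hy
    set p := x + j * ω' with hp
    have hpy : y = p + ((5 * s^15 : ℕ):ℝ) * ω' := by rw [hy, hp]; ring
    have hv : gg ω E f Yp Ym Bp Bm g0 p ≤ Real.exp (-(s:ℝ)^8) / (2 * (S:ℝ)^4) := by
      rcases h' with rfl | rfl
      · have := D.valley y hn (-(5 * (s:ℤ)^15)) (Or.inr rfl)
        push_cast at this hpy
        rwa [show p = y + -(5 * (s:ℝ)^15) * ω' by rw [hpy]; ring]
      · have := D.valley y hn (5 * (s:ℤ)^15) (Or.inl rfl)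
        push_cast at this hpy
        rwa [show p = y + (5 * (s:ℝ)^15) * ω by rw [hpy]; ring]
    have hs1 : 1 ≤ s := by have := D.hs; omega
    have h1 := prod_le_cut fp hE' hY p (5 * s^15) (by have := Nat.one_le_pow 15 s hs1; omega)
    rw [← hpy] at h1
    have h2 := κ' y hn
    set P := ∏ i ∈ Finset.range (5 * s^15), Zt ω' (fun x => f x * gg ω E f Yp Ym Bp Bm g0 x) Y (p + i * ω') with hP
    have hP0 : 0 ≤ P := Finset.prod_nonneg fun i _ => (Zt_pos fp hY.1 _).le
    have h4 := D.fp_le p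
    have h5 := D.fp_le1 (p + ω')
    have h6 := fp p
    have h7 := fp (p + ω')
    have a2 : f p * gg ω E f Yp Ym Bp Bm g0 p * (f (p + ω') * gg ω E f Yp Ym Bp Bm g0 (p + ω')) ≤
         f p * gg ω E f Yp Ym Bp Bm g0 p := by nlinarith
    have h8 : P * (Real.exp (-(s:ℝ)^8) / (16 * S)) ≤ Real.exp (-(s:ℝ)^8) / (2 * (S:ℝ)^4) := by
      calc _ ≤ P * (Real.exp (-(s:ℝ)^8) * (f y * gg ω E f Yp Ym Bp Bm g0 y)^2) := by gcongr
        _ ≤ _ := h1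
        _ ≤ _ := by linarith
    have h9 : P ≤ 1 / 2 := by
      have e1 : Real.exp (-(s:ℝ)^8) / (2 * (S:ℝ)^4) = (8 / (S:ℝ)^3) * (Real.exp (-(s:ℝ)^8) / (16 * S)) := by
        field_simp; norm_num
      rw [e1] at h8
      have h10 := le_of_mul_le_mul_right h8 (by positivity)
      refine h10.trans ?_
      rw [div_le_iff₀ (by positivity)]
      have : (S:ℝ)^1 ≤ S^3 := pow_le_pow_right₀ (by linarith) (by norm_num)
      linarith
    have hlen : j + 5 * s^15 ≤ S^7 := by
      have : (j:ℝ) + 5 * (s:ℝ)^15 ≤ (S:ℝ)^7 := by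
        have h12 : (s:ℝ)^15 ≤ S := by rw [D.Sr]; exact pow_le_pow_right₀ (by linarith) (by norm_num)
        have h13 := D.sS
        have h14 : (S:ℝ)^1 ≤ S^6 := pow_le_pow_right₀ (by linarith) (by norm_num)
        have h15 : (s:ℝ) * 10^6 * S^6 ≤ S * S^6 := by gcongr
        have h16 : (0:ℝ) < S^6 := by positivity
        have h17 : (S:ℝ)^6 ≤ s * S^6 := by nlinarith
        have : (S:ℝ)^7 = S * S^6 := by ring
        nlinarith
      exact_mod_cast this
    refine (prod_anti _ (fun i => (Zt_pos fp hY.1 _).le) (fun i => Zt_le_one fp hY.1 _) hlen).trans ?_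
    rw [Finset.prod_range_add]
    have e2 : ∏ i ∈ Finset.range (5 * s^15), Zt ω' (fun x => f x * gg ω E f Yp Ym Bp Bm g0 x) Y (x + ((j + i : ℕ):ℝ) * ω') = P := by
      rw [hP]
      apply Finset.prod_congr rfl
      intro i _
      congr 1; rw [hp]; push_cast; ring
    rw [e2]
    have e3 : ∏ i ∈ Finset.range j, Zt ω' (fun x => f x * gg ω E f Yp Ym Bp Bm g0 x) Y (x + i * ω') ≤ 1 :=
      Finset.prod_le_one (fun i _ => (Zt_pos fp hY.1 _).le) (fun i _ => Zt_le_one fp hY.1 _)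
    nlinarith

end RData


structure CState (ω Λ : ℝ) (s : ℕ) (E : ℝ) (F : ℂ → ℂ) : Prop where
  st : RState ω Λ s E (fun x : ℝ => (F x).re)
  per : ∀ z, F (z + 1) = F z
  diff : DifferentiableOn ℂ F (Strip (1 / (s:ℝ)^14))
  cone : ∀ z ∈ Strip (1 / (s:ℝ)^14), Cone (1/10) (F z)
  real : ∀ x : ℝ, Cone 0 (F x)

theorem Strip_mono {a b : ℝ} (h : a ≤ b) : Strip a ⊆ Strip b := fun _ hz => lt_of_lt_of_le hz h

theorem Strip_decomp (z : ℂ) : z = (z.re : ℂ) + (z.im : ℂ) * Complex.I := (Complex.re_add_im z).symm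

theorem ball_Strip (x R : ℝ) : Metric.ball (x:ℂ) R ⊆ Strip R := by
  intro z hz
  have h1 : ‖z - x‖ < R := by simpa [dist_eq_norm] using hz
  have h2 := Complex.abs_im_le_norm (z - x)
  simp at h2
  exact lt_of_le_of_lt h2 h1

theorem near_strip (F : ℂ → ℂ) (R M : ℝ) (hR : 0 < R) (hM : 2 ≤ M)
    (hF : DifferentiableOn ℂ F (Strip R)) (hre : ∀ z ∈ Strip R, 0 < (F z).re)
    (x : ℝ) (w : ℂ) (hw : ‖w‖ ≤ R / M) : Near (16 / M) (F x) (F (x + w)) :=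
  near_of_re_pos F x R M hR hM (hF.mono (ball_Strip x R)) (fun z hz => hre z (ball_Strip x R hz)) w hw

theorem diff_shift {F : ℂ → ℂ} {r : ℝ} (h : DifferentiableOn ℂ F (Strip r)) (a : ℝ) :
    DifferentiableOn ℂ (fun z => F (z + a)) (Strip r) :=
  h.comp (by fun_prop) (fun _ hz => Strip_shift hz a)

section stepA
variable {ω Λ : ℝ} {s : ℕ} {E : ℝ} {F : ℂ → ℂ}

theorem CState.Fre (h : CState ω Λ s E F) (x : ℝ) : F x = (((F x).re : ℝ) : ℂ) := ((h.real x).real).symm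

theorem Y_step (h : CState ω Λ s E F) (hs : 1 ≤ s) (ω' : ℝ) :
    ∃ Y : ℂ → ℂ, DifferentiableOn ℂ Y (Strip (1 / (s:ℝ)^14 / 2)) ∧ (∀ z, Y (z + 1) = Y z) ∧
      (∀ z ∈ Strip (1 / (s:ℝ)^14 / 2), Cone (1/4) (Y z)) ∧ (∀ x : ℝ, Cone 0 (Y x)) ∧
      (∀ z ∈ Strip (1 / (s:ℝ)^14 / 2), Cone (1/4) (F z * F (z + ω'))) ∧
      IsY ω' E (fun x : ℝ => (F x).re) (fun x : ℝ => (Y x).re) := by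
  have hs' : (1:ℝ) ≤ s := by exact_mod_cast hs
  set η := 1 / (s:ℝ)^14 with hη
  have hη0 : 0 < η := by positivity
  have hE : 0 < E := (Real.exp_pos _).trans_le h.st.Elow
  have hsub : Strip (η/2) ⊆ Strip η := Strip_mono (by linarith)
  have hFd := h.diff.mono hsub
  have hFc : ∀ z ∈ Strip (η/2), Cone (1/10) (F z) := fun z hz => h.cone z (hsub hz)
  have hmul : ∀ z w, Cone (1/10) z → Cone (1/10) w → Cone (1/4) (z * w) := fun z w h1 h2 =>
    h1.mul h2 (by norm_num) (by norm_num) (by norm_num)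
  have hcc : ∀ z ∈ Strip (η/2), Cone (1/4) (F z * F (z + ω')) := fun z hz =>
    hmul _ _ (hFc z hz) (hFc _ (Strip_shift hz ω'))
  have hκc : ∀ z ∈ Strip (η/2), Cone (1/4) (E * F z ^2) := fun z hz => by
    rw [sq]; exact (hmul _ _ (hFc z hz) (hFc z hz)).smul E hE
  have hNear : ∀ z ∈ Strip (η/2), Near 8 (F (z.re : ℝ)) (F z) := by
    intro z hz
    have := near_strip F η 2 hη0 le_rfl h.diff (fun z hz => (h.cone z hz).1) z.re (z.im * Complex.I)
      (by simp; exact le_of_lt hz)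
    rw [← Strip_decomp z] at this
    norm_num at this
    exact this
  have hup : ∀ z ∈ Strip (η/2), ‖F z‖ ≤ Real.exp 8 := by
    intro z hz
    have h1 := (hNear z hz).norm_le
    have h2 := h.st.fle z.re
    have h3 := h.st.fpos z.re
    rw [h.Fre z.re, Complex.norm_real, Real.norm_of_nonneg h3.le] at h1
    refine h1.trans ?_
    have := Real.exp_pos 8
    nlinarith
  have hlow : ∀ z ∈ Strip (η/2), Real.exp (-(s:ℝ)^7) * Real.exp (-8) ≤ ‖F z‖ := by
    intro z hz
    have h1 := (hNear z hz).symm.norm_le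
    have h2 := h.st.fexp z.re
    have h3 := h.st.fpos z.re
    rw [h.Fre z.re, Complex.norm_real, Real.norm_of_nonneg h3.le] at h1
    calc _ ≤ (‖F z‖ * Real.exp 8) * Real.exp (-8) := by gcongr; exact h2.trans h1
      _ = _ := by rw [mul_assoc, ← Real.exp_add]; simp
  obtain ⟨Y, hYd, hYp, hYc, hY0, hYe⟩ := Y_exists ω' (η/2) (by positivity)
    (fun z => F z * F (z + ω')) (fun z => E * F z ^2)
    (hFd.mul (diff_shift hFd ω')) ((hFd.pow 2).const_mul _)
    (fun z => by
      rw [h.per, show z + 1 + (ω':ℂ) = z + ω' + 1 by ring, h.per])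
    (fun z => by simp only [h.per]) hcc hκc
    (fun x => by
      have h2 : Cone 0 (F (x + ω')) := by
        have := h.real (x + ω'); push_cast at this; exact this
      exact (h.real x).mul h2 le_rfl (by norm_num) (by norm_num))
    (fun x => by
      rw [sq]
      exact ((h.real x).mul (h.real x) le_rfl (by norm_num) (by norm_num)).smul E hE)
    (Real.exp 8 * Real.exp 8) (E * (Real.exp 8)^2) (E * (Real.exp (-(s:ℝ)^7) * Real.exp (-8))^2 / 2)
    (by positivity) (by positivity)
    (fun z hz => by
      rw [norm_mul]
      exact mul_le_mul (hup z hz) (hup _ (Strip_shift hz ω')) (norm_nonneg _) (by positivity))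
    (fun z hz => by
      rw [norm_mul, norm_pow, Complex.norm_real, Real.norm_of_nonneg hE.le]
      have := hup z hz
      gcongr)
    (fun z hz => by
      have h1 := (hκc z hz).norm_le (by norm_num)
      rw [norm_mul, norm_pow, Complex.norm_real, Real.norm_of_nonneg hE.le] at h1
      have h2 : E * (Real.exp (-(s:ℝ)^7) * Real.exp (-8))^2 ≤ E * ‖F z‖^2 := by
        have := hlow z hz
        gcongr
      linarith)
  refine ⟨Y, hYd, hYp, hYc, hY0, hcc, fun x => (hY0 x).1, fun x => ?_⟩
  have e := hYe x (Strip_real (by positivity) x)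
  have a1 := h.Fre x
  have a2 := h.Fre (x + ω')
  have a3 := (hY0 x).real.symm
  have a4 := (hY0 (x + ω')).real.symm
  push_cast at a2 a4
  rw [a1, a2, a3, a4] at e
  have e' : (((Y x).re : ℝ) : ℂ) = ((E * (F x).re^2 + (F x).re * (F (x + ω')).re * (Y (x + ω')).re /
    ((F x).re * (F (x + ω')).re + (Y (x + ω')).re) : ℝ) : ℂ) := by
    rw [e]; push_cast; rfl
  have := Complex.ofReal_injective e'
  push_cast
  exact this

end stepA


noncomputable def G0 (S : ℕ) (z : ℂ) : ℂ := Complex.exp (-((S:ℂ)^12 * Complex.sin (π * z)^4))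
noncomputable def g0r (S : ℕ) (x : ℝ) : ℝ := Real.exp (-((S:ℝ)^12 * Real.sin (π * x)^4))

theorem G0_real (S : ℕ) (x : ℝ) : G0 S x = (g0r S x : ℂ) := by
  unfold G0 g0r; push_cast; rfl

theorem G0_diff (S : ℕ) : Differentiable ℂ (G0 S) := by unfold G0; fun_prop

theorem G0_per (S : ℕ) (z : ℂ) : G0 S (z + 1) = G0 S z := by
  unfold G0
  rw [show (π:ℂ) * (z + 1) = π * z + π by ring, Complex.sin_add_pi]
  ring_nf

theorem g0r_pos (S : ℕ) (x : ℝ) : 0 < g0r S x := Real.exp_pos _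
theorem g0r_le (S : ℕ) (x : ℝ) : g0r S x ≤ 1 := by
  unfold g0r
  rw [Real.exp_le_one_iff]
  have : 0 ≤ Real.sin (π * x)^4 := by positivity
  have : 0 ≤ (S:ℝ)^12 * Real.sin (π * x)^4 := by positivity
  linarith

theorem sin4_int (x : ℝ) (p : ℤ) : Real.sin (π * x)^4 = |Real.sin (π * (x - p))|^4 := by
  rw [show π * (x - p) = π * x - p * π by ring, Real.sin_sub_int_mul_pi, abs_mul, mul_pow]
  rw [abs_zpow]; simp
  exact (Even.pow_abs (by decide) _).symm

theorem g0r_near (S : ℕ) (hS : (1:ℝ) ≤ S) (x : ℝ) (hx : nearZ (1 / (4 * (S:ℝ)^3)) x) : 1 / 2 ≤ g0r S x := by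
  obtain ⟨p, hp⟩ := hx
  have h1 : |Real.sin (π * (x - p))| ≤ (4/5) / (S:ℝ)^3 := by
    refine Real.abs_sin_le_abs.trans ?_
    rw [abs_mul, abs_of_pos Real.pi_pos]
    calc π * |x - p| ≤ 3.2 * (1 / (4 * (S:ℝ)^3)) := by
          have := Real.pi_lt_d2
          gcongr; linarith
      _ = _ := by field_simp; norm_num
  have h2 : (S:ℝ)^12 * Real.sin (π * x)^4 ≤ (4/5)^4 := by
    rw [sin4_int x p]
    calc (S:ℝ)^12 * |Real.sin (π * (x - p))|^4 ≤ (S:ℝ)^12 * ((4/5) / (S:ℝ)^3)^4 := by gcongr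
      _ = _ := by field_simp
  unfold g0r
  have := Real.add_one_le_exp (-((S:ℝ)^12 * Real.sin (π * x)^4))
  norm_num at h2
  linarith

theorem g0r_far (S : ℕ) (hS : (1:ℝ) ≤ S) (x : ℝ) (hx : ¬ nearZ (1 / (S:ℝ)) x) :
    g0r S x ≤ Real.exp (-(16 * (S:ℝ)^8)) := by
  have h1 : 1 / (S:ℝ) < |x - round x| := by
    by_contra hc
    exact hx ⟨round x, not_lt.1 hc⟩
  have h2 := abs_sub_round x
  have h3 := Real.mul_abs_le_abs_sin (x := π * (x - round x)) (by
    rw [abs_mul, abs_of_pos Real.pi_pos]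
    have := Real.pi_pos
    nlinarith)
  have h4 : 2 / (S:ℝ) ≤ |Real.sin (π * (x - round x))| := by
    refine le_trans ?_ h3
    rw [abs_mul, abs_of_pos Real.pi_pos]
    have : 2 / π * (π * |x - round x|) = 2 * |x - round x| := by
      have := Real.pi_pos; field_simp
    rw [this]
    have : 2 / (S:ℝ) = 2 * (1 / S) := by ring
    linarith
  unfold g0r
  apply Real.exp_le_exp.2
  apply neg_le_neg
  rw [sin4_int x (round x)]
  calc 16 * (S:ℝ)^8 = (S:ℝ)^12 * (2 / S)^4 := by field_simp; norm_num
    _ ≤ _ := by gcongr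

theorem sin_diff (p : ℝ) (u : ℂ) (hu : ‖u‖ ≤ 1) : ‖Complex.sin (p + u) - Complex.sin p‖ ≤ 2 * ‖u‖ := by
  have e : Complex.sin (p + u) - Complex.sin p =
    (Complex.exp (-(p:ℝ) * Complex.I) * (Complex.exp (-u * Complex.I) - 1) -
      Complex.exp ((p:ℝ) * Complex.I) * (Complex.exp (u * Complex.I) - 1)) * Complex.I / 2 := by
    unfold Complex.sin
    rw [mul_sub, mul_sub, ← Complex.exp_add, ← Complex.exp_add]
    ring_nf
  rw [e]
  have h1 : ‖Complex.exp (u * Complex.I) - 1‖ ≤ 2 * ‖u‖ := by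
    have := Complex.norm_exp_sub_one_le (x := u * Complex.I) (by simpa using hu)
    simpa using this
  have h2 : ‖Complex.exp (-u * Complex.I) - 1‖ ≤ 2 * ‖u‖ := by
    have := Complex.norm_exp_sub_one_le (x := -u * Complex.I) (by simpa using hu)
    simpa using this
  have h3 : ‖Complex.exp ((p:ℝ) * Complex.I)‖ = 1 := Complex.norm_exp_ofReal_mul_I p
  have h4 : ‖Complex.exp (-(p:ℝ) * Complex.I)‖ = 1 := by
    have := Complex.norm_exp_ofReal_mul_I (-p)
    push_cast at this; exact this
  rw [norm_div, norm_mul]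
  have h5 := norm_sub_le (Complex.exp (-(p:ℝ) * Complex.I) * (Complex.exp (-u * Complex.I) - 1))
      (Complex.exp ((p:ℝ) * Complex.I) * (Complex.exp (u * Complex.I) - 1))
  rw [norm_mul, norm_mul, h3, h4] at h5
  simp only [Complex.norm_I, Complex.norm_ofNat]
  linarith

theorem G0_near (S : ℕ) (hS : (1000000:ℝ) ≤ S) (x : ℝ) (w : ℂ) (hw : ‖w‖ ≤ 1 / (S:ℝ)^14) :
    Near (120 / (S:ℝ)^2) (G0 S x) (G0 S (x + w)) := by
  set a := Complex.sin (π * (x + w)) with ha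
  set b := Complex.sin (π * x) with hb
  refine ⟨-((S:ℂ)^12 * (a^4 - b^4)), ?_, ?_⟩
  · have hS14 : 1 / (S:ℝ)^14 ≤ 1 / 1000000 := by
      apply one_div_le_one_div_of_le (by norm_num)
      calc (1000000:ℝ) ≤ S := hS
        _ = (S:ℝ)^1 := by ring
        _ ≤ _ := pow_le_pow_right₀ (by linarith) (by norm_num)
    have hu : ‖(π:ℂ) * w‖ ≤ 4 * ‖w‖ := by
      rw [norm_mul, Complex.norm_real, Real.norm_of_nonneg Real.pi_pos.le]
      have := Real.pi_lt_four
      gcongr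
    have hd : ‖a - b‖ ≤ 8 / (S:ℝ)^14 := by
      have := sin_diff (π * x) (π * w) (by linarith)
      push_cast at this
      rw [ha, hb, mul_add]
      refine this.trans ?_
      have : 8 / (S:ℝ)^14 = 8 * (1 / (S:ℝ)^14) := by ring
      linarith
    have hb1 : ‖b‖ ≤ 1 := by
      have : b = ((Real.sin (π * x) : ℝ) : ℂ) := by rw [hb]; push_cast; rfl
      rw [this, Complex.norm_real]
      exact Real.abs_sin_le_one _
    have ha2 : ‖a‖ ≤ 2 := by
      have h1 : ‖a‖ ≤ ‖a - b‖ + ‖b‖ := by simpa using norm_add_le (a - b) b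
      have : 8 / (S:ℝ)^14 = 8 * (1 / (S:ℝ)^14) := by ring
      linarith
    have e : a^4 - b^4 = (a - b) * (a^3 + a^2 * b + a * b^2 + b^3) := by ring
    have h15 : ‖a^3 + a^2 * b + a * b^2 + b^3‖ ≤ 15 := by
      calc _ ≤ ‖a^3‖ + ‖a^2 * b‖ + ‖a * b^2‖ + ‖b^3‖ := norm_add₄_le
        _ = ‖a‖^3 + ‖a‖^2 * ‖b‖ + ‖a‖ * ‖b‖^2 + ‖b‖^3 := by simp only [norm_mul, norm_pow]
        _ ≤ 2^3 + 2^2 * 1 + 2 * 1^2 + 1^3 := by gcongr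
        _ = 15 := by norm_num
    rw [norm_neg, norm_mul, e, norm_mul, norm_pow, Complex.norm_natCast]
    calc (S:ℝ)^12 * (‖a - b‖ * ‖a^3 + a^2 * b + a * b^2 + b^3‖) ≤ (S:ℝ)^12 * (8 / (S:ℝ)^14 * 15) := by gcongr
      _ = _ := by field_simp; norm_num
  · unfold G0
    rw [← Complex.exp_add]
    congr 1
    rw [ha, hb]; ring


theorem exp_le_inv (t : ℝ) (ht : t < 1) : Real.exp t ≤ 1 / (1 - t) := by
  have h := Real.add_one_le_exp (-t)
  rw [Real.exp_neg] at h
  have h0 := Real.exp_pos t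
  rw [le_div_iff₀ (by linarith)]
  have : (1 - t) ≤ (Real.exp t)⁻¹ := by linarith
  calc Real.exp t * (1 - t) ≤ Real.exp t * (Real.exp t)⁻¹ := by gcongr
    _ = 1 := mul_inv_cancel₀ h0.ne'

noncomputable def Bterm (ω : ℝ) (ζ k : ℂ → ℂ) (n : ℕ) (z : ℂ) : ℂ :=
  (∏ i ∈ Finset.range (n+1), ζ (z + i * ω)) * k (z + ((n+1 : ℕ) : ℂ) * ω)

noncomputable def Bsum (ω : ℝ) (ζ k : ℂ → ℂ) (z : ℂ) : ℂ := ∑' n, Bterm ω ζ k n z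

structure BData (ω r : ℝ) (ζ k : ℂ → ℂ) (Z K Y : ℝ → ℝ) (T : ℕ) (A ε0 ε1 : ℝ) : Prop where
  hr : 0 < r
  ζd : DifferentiableOn ℂ ζ (Strip r)
  kd : DifferentiableOn ℂ k (Strip r)
  ζp : ∀ z, ζ (z + 1) = ζ z
  kp : ∀ z, k (z + 1) = k z
  ζ1 : ∀ z ∈ Strip r, ‖ζ z‖ ≤ 1
  ζr : ∀ x : ℝ, ζ x = (Z x : ℂ)
  kr : ∀ x : ℝ, k x = (K x : ℂ)
  Zpos : ∀ x, 0 < Z x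
  Kpos : ∀ x, 0 < K x
  KA : ∀ x, K x ≤ A
  ζn : ∀ (x : ℝ) (w : ℂ), ‖w‖ < r → Near ε0 (ζ x) (ζ (x + w))
  kn : ∀ (x : ℝ) (w : ℂ), ‖w‖ < r → Near ε1 (k x) (k (x + w))
  hT : 1 ≤ T
  hTε : T * ε0 ≤ 1 / 8
  hε1 : ε1 ≤ 1 / 2
  hblock : ∀ x, ∏ i ∈ Finset.range T, Z (x + i * ω) ≤ 1 / 2
  Ypos : ∀ x, 0 ≤ Y x
  Ymaj : ∀ x, K x + Z x * Y (x + ω) ≤ Y x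

namespace BData
variable {ω r : ℝ} {ζ k : ℂ → ℂ} {Z K Y : ℝ → ℝ} {T : ℕ} {A ε0 ε1 : ℝ}

theorem strip_mem (D : BData ω r ζ k Z K Y T A ε0 ε1) (x : ℝ) (w : ℂ) (hw : ‖w‖ < r) : (x + w : ℂ) ∈ Strip r := by
  have := Complex.abs_im_le_norm w
  show |(x + w : ℂ).im| < r
  simp; linarith

theorem prod_real (D : BData ω r ζ k Z K Y T A ε0 ε1) (x : ℝ) (n : ℕ) :
    ∏ i ∈ Finset.range n, ζ (x + i * ω) = ((∏ i ∈ Finset.range n, Z (x + i * ω) : ℝ) : ℂ) := by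
  push_cast
  apply Finset.prod_congr rfl
  intro i _
  have := D.ζr (x + i * ω)
  push_cast at this
  exact this

theorem prod_near (D : BData ω r ζ k Z K Y T A ε0 ε1) (x : ℝ) (w : ℂ) (hw : ‖w‖ < r) (n : ℕ) :
    Near (n * ε0) (∏ i ∈ Finset.range n, ζ (x + i * ω)) (∏ i ∈ Finset.range n, ζ (x + w + i * ω)) := by
  apply Near.prod n (fun i => ζ (x + i * ω)) (fun i => ζ (x + w + i * ω))
  intro i
  have := D.ζn (x + i * ω) w hw
  push_cast at this
  rwa [show (x:ℂ) + w + i * ω = x + i * ω + w by ring]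

theorem prod_norm (D : BData ω r ζ k Z K Y T A ε0 ε1) (x : ℝ) (w : ℂ) (hw : ‖w‖ < r) (n : ℕ) :
    ‖∏ i ∈ Finset.range n, ζ (x + w + i * ω)‖ ≤ 2 * Real.exp (-(n / (4 * T))) := by
  have hT : (1:ℝ) ≤ T := by exact_mod_cast D.hT
  have hb := prod_block (fun i => ‖ζ (x + w + i * ω)‖) T (n / T) (3/4) (fun i => norm_nonneg _) (by
    intro m
    rw [← norm_prod]
    have h1 := (D.prod_near (x + m * ω) w hw T).norm_le
    rw [D.prod_real, Complex.norm_real, Real.norm_of_nonneg (Finset.prod_nonneg fun i _ => (D.Zpos _).le)] at h1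
    have h2 := D.hblock (x + m * ω)
    have h3 : Real.exp (T * ε0) ≤ 3/2 := by
      refine (Real.exp_le_exp.2 D.hTε).trans ((exp_le_inv _ (by norm_num)).trans (by norm_num))
    have e : ∏ i ∈ Finset.range T, ζ (((x + m * ω : ℝ):ℂ) + w + i * ω) =
      ∏ i ∈ Finset.range T, ζ (x + w + ((m + i : ℕ):ℂ) * ω) := by
      apply Finset.prod_congr rfl
      intro i _
      congr 1; push_cast; ring
    rw [e] at h1
    refine h1.trans ?_
    calc _ ≤ (1/2) * (3/2 : ℝ) := by gcongr
      _ = _ := by norm_num)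
  have ha := prod_anti (fun i => ‖ζ (x + w + i * ω)‖) (fun i => norm_nonneg _) (fun i => by
    apply D.ζ1
    have := D.strip_mem (x + i * ω) w hw
    push_cast at this
    rwa [show (x:ℂ) + w + i * ω = x + i * ω + w by ring]) (Nat.div_mul_le_self n T)
  rw [norm_prod]
  refine (ha.trans hb).trans ?_
  have h34 : (3/4:ℝ) ≤ Real.exp (-(1/4)) := by
    have := Real.add_one_le_exp (-(1/4:ℝ)); linarith
  have h4 : Real.exp (1/4) ≤ 2 := (exp_le_inv _ (by norm_num)).trans (by norm_num)
  have hdiv : (n:ℝ) / T ≤ ((n / T : ℕ):ℝ) + 1 := by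
    rw [div_le_iff₀ (by linarith)]
    have := Nat.lt_div_mul_add (a := n) (b := T) D.hT
    have : (n:ℝ) ≤ ((n / T * T + T : ℕ):ℝ) := by exact_mod_cast this.le
    push_cast at this
    linarith
  calc (3/4:ℝ)^(n/T) ≤ (Real.exp (-(1/4)))^(n/T) := by gcongr
    _ = Real.exp (((n / T : ℕ):ℝ) * (-(1/4))) := by rw [← Real.exp_nat_mul]
    _ ≤ Real.exp (1/4 + -(n / (4 * T))) := by
      apply Real.exp_le_exp.2
      have : (n:ℝ) / (4 * T) = (n / T) / 4 := by field_simp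
      rw [this]; linarith
    _ = Real.exp (1/4) * Real.exp (-(n / (4 * T))) := Real.exp_add _ _
    _ ≤ _ := by gcongr

theorem A_pos (D : BData ω r ζ k Z K Y T A ε0 ε1) : 0 < A := (D.Kpos 0).trans_le (D.KA 0)

theorem k_norm (D : BData ω r ζ k Z K Y T A ε0 ε1) (x : ℝ) (w : ℂ) (hw : ‖w‖ < r) : ‖k (x + w)‖ ≤ 2 * A := by
  have h1 := (D.kn x w hw).norm_le
  rw [D.kr, Complex.norm_real, Real.norm_of_nonneg (D.Kpos x).le] at h1
  have h2 : Real.exp ε1 ≤ 2 :=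
    (Real.exp_le_exp.2 D.hε1).trans ((exp_le_inv _ (by norm_num)).trans (by norm_num))
  have := D.KA x
  have := D.Kpos x
  have hA := D.A_pos.le
  calc _ ≤ _ := h1
    _ ≤ A * 2 := by gcongr
    _ = _ := by ring

theorem term_norm (D : BData ω r ζ k Z K Y T A ε0 ε1) (x : ℝ) (w : ℂ) (hw : ‖w‖ < r) (n : ℕ) :
    ‖Bterm ω ζ k n (x + w)‖ ≤ 4 * A * Real.exp (-(((n+1 : ℕ):ℝ) / (4 * T))) := by
  unfold Bterm
  rw [norm_mul]
  have h1 := D.prod_norm x w hw (n+1)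
  have h2 := D.k_norm (x + ((n+1 : ℕ):ℝ) * ω) w hw
  rw [show (((x + ((n+1 : ℕ):ℝ) * ω : ℝ):ℂ) + w) = x + w + ((n+1 : ℕ) : ℂ) * ω by push_cast; ring] at h2
  calc _ ≤ (2 * Real.exp (-(((n+1 : ℕ):ℝ) / (4 * T)))) * (2 * A) := by
        gcongr
    _ = _ := by ring

theorem geo (D : BData ω r ζ k Z K Y T A ε0 ε1) (b : ℝ) (hb : 1 ≤ b) : Summable (fun n : ℕ => Real.exp (-(((n+1 : ℕ):ℝ) / b))) ∧
    ∑' n : ℕ, Real.exp (-(((n+1 : ℕ):ℝ) / b)) ≤ b := by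
  have hb0 : 0 < b := by linarith
  set q := Real.exp (-(1 / b)) with hq
  have e : (fun n : ℕ => Real.exp (-(((n+1 : ℕ):ℝ) / b))) = fun n => q * q ^ n := by
    funext n
    rw [← pow_succ', hq, ← Real.exp_nat_mul]; congr 1; field_simp
  have hq0 : 0 < q := Real.exp_pos _
  have hq1 : q < 1 := by rw [hq, Real.exp_lt_one_iff]; simp; positivity
  have hs := (summable_geometric_of_lt_one hq0.le hq1).mul_left q
  rw [e]
  refine ⟨hs, ?_⟩
  rw [tsum_mul_left, tsum_geometric_of_lt_one hq0.le hq1, ← div_eq_mul_inv, div_le_iff₀ (by linarith)]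
  -- q ≤ b (1 - q) iff q (1+b) ≤ b
  have h1 : 1 + 1 / b ≤ q⁻¹ := by
    rw [hq, ← Real.exp_neg, neg_neg]
    have := Real.add_one_le_exp (1/b); linarith
  have h2 : q * (1 + 1/b) ≤ 1 := by
    calc q * (1 + 1/b) ≤ q * q⁻¹ := by gcongr
      _ = 1 := mul_inv_cancel₀ hq0.ne'
  have h3 : q * (1 + 1/b) * b ≤ 1 * b := by gcongr
  have h4 : q * (1 + 1/b) * b = q * b + q := by field_simp
  linarith

theorem T1 (D : BData ω r ζ k Z K Y T A ε0 ε1) : (1:ℝ) ≤ T := by exact_mod_cast D.hT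

theorem summ (D : BData ω r ζ k Z K Y T A ε0 ε1) (x : ℝ) (w : ℂ) (hw : ‖w‖ < r) : Summable (fun n => Bterm ω ζ k n (x + w)) := by
  refine Summable.of_norm_bounded (((D.geo (4 * T) (by have := D.T1; linarith)).1).mul_left (4 * A)) ?_
  intro n
  exact D.term_norm x w hw n

theorem per (D : BData ω r ζ k Z K Y T A ε0 ε1) (z : ℂ) : Bsum ω ζ k (z + 1) = Bsum ω ζ k z := by
  unfold Bsum
  congr 1; funext n
  unfold Bterm
  congr 1
  · apply Finset.prod_congr rfl
    intro i _
    rw [show z + 1 + i * (ω:ℂ) = z + i * ω + 1 by ring, D.ζp]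
  · rw [show z + 1 + ((n+1 : ℕ):ℂ) * (ω:ℂ) = z + ((n+1 : ℕ):ℂ) * ω + 1 by ring, D.kp]

theorem diff (D : BData ω r ζ k Z K Y T A ε0 ε1) : DifferentiableOn ℂ (Bsum ω ζ k) (Strip r) := by
  unfold Bsum
  apply Complex.differentiableOn_tsum_of_summable_norm
    (((D.geo (4 * T) (by have := D.T1; linarith)).1).mul_left (4 * A)) _ (Strip_open r)
  · intro n z hz
    have h1 := D.term_norm z.re (z.im * Complex.I) (by simp; exact hz) n
    rwa [← Strip_decomp z] at h1
  · intro n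
    unfold Bterm
    apply DifferentiableOn.mul
    · apply DifferentiableOn.fun_finsetProd
      intro i _
      have := diff_shift D.ζd (i * ω)
      push_cast at this
      exact this
    · have := diff_shift D.kd ((n+1 : ℕ) * ω)
      push_cast at this ⊢
      exact this

noncomputable def bt (_ : BData ω r ζ k Z K Y T A ε0 ε1) (n : ℕ) (x : ℝ) : ℝ :=
  (∏ i ∈ Finset.range (n+1), Z (x + i * ω)) * K (x + ((n+1 : ℕ) : ℝ) * ω)

theorem bt_real (D : BData ω r ζ k Z K Y T A ε0 ε1) (n : ℕ) (x : ℝ) : Bterm ω ζ k n x = (D.bt n x : ℂ) := by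
  unfold Bterm bt
  rw [D.prod_real]
  have := D.kr (x + ((n+1 : ℕ):ℝ) * ω)
  push_cast at this ⊢
  rw [this]

theorem bt_pos (D : BData ω r ζ k Z K Y T A ε0 ε1) (n : ℕ) (x : ℝ) : 0 < D.bt n x := by
  unfold bt
  exact mul_pos (Finset.prod_pos fun i _ => D.Zpos _) (D.Kpos _)

theorem bt_summ (D : BData ω r ζ k Z K Y T A ε0 ε1) (x : ℝ) : Summable (fun n => D.bt n x) := by
  have := D.summ x 0 (by simpa using D.hr)
  simp only [add_zero, D.bt_real] at this
  exact Complex.summable_ofReal.1 this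

theorem B_real (D : BData ω r ζ k Z K Y T A ε0 ε1) (x : ℝ) : Bsum ω ζ k x = ((∑' n, D.bt n x : ℝ) : ℂ) := by
  unfold Bsum
  simp only [D.bt_real]
  rw [Complex.ofReal_tsum]

theorem bt_rec (D : BData ω r ζ k Z K Y T A ε0 ε1) (x : ℝ) : ∑' n, D.bt n x = Z x * (K (x + ω) + ∑' n, D.bt n (x + ω)) := by
  rw [(D.bt_summ x).tsum_eq_zero_add, mul_add, ← tsum_mul_left]
  congr 1
  · unfold bt; simp
  · congr 1; funext n
    unfold bt
    rw [Finset.prod_range_succ' _ (n+1)]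
    simp only [Nat.cast_zero, zero_mul, add_zero]
    have e : ∏ i ∈ Finset.range (n+1), Z (x + ((i+1 : ℕ):ℝ) * ω) = ∏ i ∈ Finset.range (n+1), Z (x + ω + i * ω) := by
      apply Finset.prod_congr rfl
      intro i _
      congr 1; push_cast; ring
    rw [e, show x + ((n+1+1 : ℕ):ℝ) * ω = x + ω + ((n+1 : ℕ):ℝ) * ω by push_cast; ring]
    ring

theorem bt_le (D : BData ω r ζ k Z K Y T A ε0 ε1) (x : ℝ) : ∑' n, D.bt n x ≤ Z x * Y (x + ω) := by
  apply Real.tsum_le_of_sum_range_le (fun n => (D.bt_pos n x).le)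
  intro n
  have : ∑ i ∈ Finset.range n, D.bt i x + (∏ i ∈ Finset.range (n+1), Z (x + i * ω)) * Y (x + ((n+1 : ℕ):ℝ) * ω) ≤ Z x * Y (x + ω) := by
    induction n with
    | zero => simp
    | succ n ih =>
      rw [Finset.sum_range_succ, Finset.prod_range_succ _ (n+1)]
      refine le_trans ?_ ih
      have h1 := D.Ymaj (x + ((n+1 : ℕ):ℝ) * ω)
      have hP : 0 ≤ ∏ i ∈ Finset.range (n+1), Z (x + i * ω) := Finset.prod_nonneg fun i _ => (D.Zpos _).le
      have h2 := mul_le_mul_of_nonneg_left h1 hP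
      unfold bt
      rw [show x + ((n+1+1 : ℕ):ℝ) * ω = x + ((n+1 : ℕ):ℝ) * ω + ω by push_cast; ring]
      linarith
  have h2 : 0 ≤ (∏ i ∈ Finset.range (n+1), Z (x + i * ω)) * Y (x + ((n+1 : ℕ):ℝ) * ω) :=
    mul_nonneg (Finset.prod_nonneg fun i _ => (D.Zpos _).le) (D.Ypos _)
  linarith

theorem perturb (D : BData ω r ζ k Z K Y T A ε0 ε1) (J : ℕ) (ε : ℝ) (hε0 : 0 ≤ ε0) (hJ : J * ε0 + ε1 ≤ ε) (hε : ε ≤ 1) (hεp : 0 ≤ ε) (x : ℝ) (w : ℂ) (hw : ‖w‖ < r) :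
    ‖Bsum ω ζ k (x + w) - Bsum ω ζ k x‖ ≤ 2 * ε * (∑' n, D.bt n x) + 64 * A * T * Real.exp (-(J / (8 * T))) := by
  have hA := D.A_pos
  have hT := D.T1
  have s1 := D.summ x w hw
  have s0 := D.summ x 0 (by simpa using D.hr)
  simp only [add_zero] at s0
  have sb := D.bt_summ x
  obtain ⟨sg, tg⟩ := D.geo (8 * T) (by linarith)
  have hterm : ∀ n, ‖Bterm ω ζ k n (x + w) - Bterm ω ζ k n x‖ ≤ 2 * ε * D.bt n x +
      8 * A * Real.exp (-(J / (8 * T))) * Real.exp (-(((n+1 : ℕ):ℝ) / (8 * T))) := by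
    intro n
    have hbt := D.bt_pos n x
    by_cases hn : n + 1 ≤ J
    · have h1 := D.prod_near x w hw (n+1)
      have h2 := D.kn (x + ((n+1 : ℕ):ℝ) * ω) w hw
      have h3 : Near ε (Bterm ω ζ k n x) (Bterm ω ζ k n (x + w)) := by
        unfold Bterm
        rw [show (((x + ((n+1 : ℕ):ℝ) * ω : ℝ):ℂ) + w) = x + w + ((n+1 : ℕ) : ℂ) * ω by push_cast; ring] at h2
        have h4 := h1.mul h2
        rw [show ((x + ((n+1 : ℕ):ℝ) * ω : ℝ):ℂ) = x + ((n+1 : ℕ) : ℂ) * ω by push_cast; ring] at h4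
        refine h4.mono (le_trans ?_ hJ)
        have : ((n+1 : ℕ):ℝ) ≤ J := by exact_mod_cast hn
        nlinarith
      have h5 := h3.norm_sub hε
      rw [D.bt_real n x, Complex.norm_real, Real.norm_of_nonneg hbt.le] at h5
      rw [D.bt_real n x]
      have : 0 ≤ 8 * A * Real.exp (-(J / (8 * T))) * Real.exp (-(((n+1 : ℕ):ℝ) / (8 * T))) := by positivity
      linarith
    · have hn' : (J:ℝ) ≤ ((n+1 : ℕ):ℝ) := by exact_mod_cast (not_le.1 hn).le
      have h1 := D.term_norm x w hw n
      have h0 := D.term_norm x 0 (by simpa using D.hr) n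
      rw [add_zero] at h0
      have h2 := norm_sub_le (Bterm ω ζ k n (x + w)) (Bterm ω ζ k n x)
      have h3 : Real.exp (-(((n+1 : ℕ):ℝ) / (4 * T))) ≤ Real.exp (-(J / (8 * T))) * Real.exp (-(((n+1 : ℕ):ℝ) / (8 * T))) := by
        rw [← Real.exp_add]
        apply Real.exp_le_exp.2
        have e1 : ((n+1 : ℕ):ℝ) / (4 * T) = ((n+1 : ℕ):ℝ) / (8 * T) + ((n+1 : ℕ):ℝ) / (8 * T) := by field_simp; norm_num
        have e2 : (J:ℝ) / (8 * T) ≤ ((n+1 : ℕ):ℝ) / (8 * T) := by gcongr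
        linarith
      have h4 : 0 ≤ 2 * ε * D.bt n x := by positivity
      nlinarith
  unfold Bsum
  rw [← s1.tsum_sub s0]
  have su : Summable (fun n => 2 * ε * D.bt n x +
      8 * A * Real.exp (-(J / (8 * T))) * Real.exp (-(((n+1 : ℕ):ℝ) / (8 * T)))) :=
    (sb.mul_left _).add (sg.mul_left _)
  refine (tsum_of_norm_bounded su.hasSum hterm).trans ?_
  rw [(sb.mul_left _).tsum_add (sg.mul_left _), tsum_mul_left, tsum_mul_left]
  have : 8 * A * Real.exp (-(J / (8 * T))) * ∑' n : ℕ, Real.exp (-(((n+1 : ℕ):ℝ) / (8 * T))) ≤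
     8 * A * Real.exp (-(J / (8 * T))) * (8 * T) := by gcongr
  linarith

end BData


theorem near_fine (s S : ℕ) (hs : 1000000 ≤ s) (hS : S = s^16) (G : ℂ → ℂ)
    (hd : DifferentiableOn ℂ G (Strip (1 / (s:ℝ)^14 / 2)))
    (hre : ∀ z ∈ Strip (1 / (s:ℝ)^14 / 2), 0 < (G z).re) (x : ℝ) (w : ℂ) (hw : ‖w‖ < 1 / (S:ℝ)^14) :
    Near (1 / (S:ℝ)^12) (G x) (G (x + w)) := by
  have h6 : (1000000:ℝ) ≤ s := by exact_mod_cast hs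
  have hSr : (S:ℝ) = (s:ℝ)^16 := by exact_mod_cast hS
  set t := (s:ℝ)
  have ht : 0 < t := by linarith
  have h2 : 32 * t^14 ≤ (S:ℝ)^2 := by
    rw [hSr]
    calc 32 * t^14 ≤ t * t^14 := by gcongr; linarith
      _ = t^15 := by ring
      _ ≤ t^32 := pow_le_pow_right₀ (by linarith) (by norm_num)
      _ = _ := by ring
  have hS0 : (0:ℝ) < S := by rw [hSr]; positivity
  have hS1 : (1:ℝ) ≤ S := by rw [hSr]; exact one_le_pow₀ (by linarith)
  have h3 : 32 * t^14 ≤ (S:ℝ)^14 := h2.trans (pow_le_pow_right₀ hS1 (by norm_num))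
  have hp : 0 < t^14 := by positivity
  have := near_strip G (1 / t^14 / 2) ((S:ℝ)^14 / (2 * t^14)) (by positivity)
    (by rw [le_div_iff₀ (by positivity)]; linarith) hd hre x w (by
      refine hw.le.trans (le_of_eq ?_)
      field_simp)
  refine this.mono ?_
  rw [div_div_eq_mul_div, div_le_div_iff₀ (by positivity) (by positivity)]
  calc 16 * (2 * t^14) * (S:ℝ)^12 = (32 * t^14) * (S:ℝ)^12 := by ring
    _ ≤ (S:ℝ)^2 * (S:ℝ)^12 := by gcongr
    _ = _ := by ring

theorem B_step {ω Λ : ℝ} {s S : ℕ} {E : ℝ} {F : ℂ → ℂ} (h : CState ω Λ s E F) (hs : 1000000 ≤ s)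
    (hS : S = s^16) (hΛ : Λ ≤ s) (ω' : ℝ) (hω' : ω' = ω ∨ ω' = -ω) :
    ∃ Y ζ B : ℂ → ℂ, ∃ Br : ℝ → ℝ,
      IsY ω' E (fun x : ℝ => (F x).re) (fun x : ℝ => (Y x).re) ∧
      DifferentiableOn ℂ (fun z => ζ z * Y (z + ω')) (Strip (1 / (s:ℝ)^14 / 2)) ∧
      (∀ z ∈ Strip (1 / (s:ℝ)^14 / 2), Cone (1/4) (ζ z * Y (z + ω'))) ∧
      (∀ z, ζ (z + 1) * Y (z + 1 + ω') = ζ z * Y (z + ω')) ∧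
      (∀ x : ℝ, ζ x * Y (x + ω') =
        ((Zt ω' (fun x : ℝ => (F x).re) (fun x : ℝ => (Y x).re) x * (Y ((x + ω' : ℝ) : ℂ)).re : ℝ) : ℂ)) ∧
      DifferentiableOn ℂ B (Strip (1 / (S:ℝ)^14)) ∧ (∀ z, B (z + 1) = B z) ∧
      (∀ x : ℝ, B x = (Br x : ℂ)) ∧ IsB ω' E (fun x : ℝ => (F x).re) (fun x : ℝ => (Y x).re) (g0r S) Br ∧
      (∀ (x : ℝ) (w : ℂ), ‖w‖ < 1 / (S:ℝ)^14 →
        ‖B (x + w) - B x‖ ≤ 400 / (S:ℝ)^2 * Br x + Real.exp (-(S:ℝ)^8)) := by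
  obtain ⟨Y, hYd, hYp, hYc, hY0, hcc, hIY⟩ := Y_step h (by omega) ω'
  have h6 : (1000000:ℝ) ≤ s := by exact_mod_cast hs
  have hSr : (S:ℝ) = (s:ℝ)^16 := by exact_mod_cast hS
  have hs0 : (0:ℝ) < s := by linarith
  have hsS : (s:ℝ) ≤ S := by
    rw [hSr]
    calc (s:ℝ) = (s:ℝ)^1 := by ring
      _ ≤ _ := pow_le_pow_right₀ (by linarith) (by norm_num)
  have hS6 : (1000000:ℝ) ≤ S := h6.trans hsS
  have hS0 : (0:ℝ) < S := by linarith
  have hE : 0 < E := (Real.exp_pos _).trans_le h.st.Elow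
  set η := 1 / (s:ℝ)^14 / 2 with hη
  have hη0 : 0 < η := by positivity
  have hηη : 1 / (S:ℝ)^14 ≤ η := by
    rw [hη, div_div]
    apply one_div_le_one_div_of_le (by positivity)
    rw [hSr]
    calc (s:ℝ)^14 * 2 ≤ s^14 * s := by gcongr; linarith
      _ = (s:ℝ)^15 := by ring
      _ ≤ s^(16*14) := pow_le_pow_right₀ (by linarith) (by norm_num)
      _ = _ := by ring
  have hηs : η ≤ 1 / (s:ℝ)^14 := by
    have : 0 < 1 / (s:ℝ)^14 := by positivity
    rw [hη]; linarith
  have hFd : DifferentiableOn ℂ F (Strip η) := h.diff.mono (Strip_mono hηs)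
  have hFc : ∀ z ∈ Strip η, Cone (1/10) (F z) := fun z hz => h.cone z (Strip_mono hηs hz)
  set ζ : ℂ → ℂ := fun z => F z * F (z + ω') / (F z * F (z + ω') + Y (z + ω')) with hζ
  have hYc' : ∀ z ∈ Strip η, Cone (1/4) (Y (z + ω')) := fun z hz => hYc _ (Strip_shift hz ω')
  have hζd : DifferentiableOn ℂ ζ (Strip η) :=
    (hFd.mul (diff_shift hFd ω')).div ((hFd.mul (diff_shift hFd ω')).add (diff_shift hYd ω'))
      (fun z hz => ((hcc z hz).add (hYc' z hz)).ne_zero)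
  have hsh : ∀ z : ℂ, z + 1 + (ω':ℂ) = z + ω' + 1 := fun z => by ring
  have hζp : ∀ z, ζ (z + 1) = ζ z := fun z => by
    simp only [hζ, hsh, h.per, hYp]
  have hYr : ∀ x : ℝ, Y x = (((Y x).re : ℝ) : ℂ) := fun x => (hY0 x).real.symm
  have hζr : ∀ x : ℝ, ζ x = ((Zt ω' (fun x : ℝ => (F x).re) (fun x : ℝ => (Y x).re) x : ℝ) : ℂ) := fun x => by
    have a1 := h.Fre x
    have a2 := h.Fre (x + ω')
    have a4 := hYr (x + ω')
    simp only [hζ, Zt]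
    push_cast at a2 a4 ⊢
    rw [← a1, ← a2, ← a4]
  have hD : BData ω' (1 / (S:ℝ)^14) ζ (fun z => E * F z ^ 2 * G0 S z)
      (Zt ω' (fun x : ℝ => (F x).re) (fun x : ℝ => (Y x).re)) (fun x : ℝ => E * (F x).re ^ 2 * g0r S x)
      (fun x : ℝ => (Y x).re) (s^7) s (1 / (S:ℝ)^12) (2 * (1 / (S:ℝ)^12) + 120 / (S:ℝ)^2) := by
    have hf2 : ∀ x : ℝ, (F x).re^2 ≤ 1 := fun x => by
      have := h.st.fpos x; have := h.st.fle x; nlinarith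
    have hf2p : ∀ x : ℝ, 0 < (F x).re^2 := fun x => by
      have := h.st.fpos x; positivity
    refine ⟨by positivity, hζd.mono (Strip_mono hηη),
      (((hFd.pow 2).const_mul _).mono (Strip_mono hηη)).mul (G0_diff S).differentiableOn, hζp, ?_, ?_, hζr, ?_,
      Zt_pos h.st.fpos hIY.1, ?_, ?_, ?_, ?_, ?_, ?_, ?_, h.st.I4 ω' hω' _ hIY, fun x => (hIY.1 x).le, ?_⟩
    · intro z; simp only [h.per, G0_per]
    · intro z hz
      have hz := Strip_mono hηη hz
      exact zeta_norm_one (hcc z hz) (hYc' z hz)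
    · intro x
      have a1 := h.Fre x
      push_cast
      rw [← a1, G0_real]
    · intro x
      exact mul_pos (mul_pos hE (hf2p x)) (g0r_pos S x)
    · intro x
      have := hf2 x; have := hf2p x; have := g0r_le S x; have := g0r_pos S x
      have := h.st.Eup
      calc E * (F x).re^2 * g0r S x ≤ E * 1 * 1 := by gcongr
        _ ≤ s := by linarith
    · intro x w hw
      exact near_fine s S hs hS ζ hζd (fun z hz => (zeta_cone (hcc z hz) (hYc' z hz)).1) x w hw
    · intro x w hw
      have hn := near_fine s S hs hS F hFd (fun z hz => (hFc z hz).1) x w hw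
      have hg := G0_near S hS6 x w hw.le
      obtain ⟨u, hu, e⟩ := (hn.mul hn).mul hg
      refine ⟨u, hu.trans (le_of_eq (by ring)), ?_⟩
      have e2 : E * F (x + w)^2 * G0 S (x + w) = E * (F (x + w) * F (x + w) * G0 S (x + w)) := by ring
      simp only [e2, e]
      ring
    · exact Nat.one_le_pow _ _ (by omega)
    · push_cast
      rw [mul_one_div, div_le_div_iff₀ (by positivity) (by norm_num), hSr]
      calc (s:ℝ)^7 * 8 ≤ s^7 * s := by gcongr; linarith
        _ = (s:ℝ)^8 := by ring
        _ ≤ s^(16*12) := pow_le_pow_right₀ (by linarith) (by norm_num)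
        _ = _ := by ring
    · have a1 : 1 / (S:ℝ)^12 ≤ 1 / (S:ℝ) := by
        apply one_div_le_one_div_of_le hS0
        calc (S:ℝ) = (S:ℝ)^1 := by ring
          _ ≤ _ := pow_le_pow_right₀ (by linarith) (by norm_num)
      have a2 : 120 / (S:ℝ)^2 ≤ 120 / (S:ℝ) := by
        apply div_le_div_of_nonneg_left (by norm_num) hS0
        calc (S:ℝ) = (S:ℝ)^1 := by ring
          _ ≤ _ := pow_le_pow_right₀ (by linarith) (by norm_num)
      have a3 : 122 / (S:ℝ) ≤ 1/2 := by rw [div_le_div_iff₀ hS0 (by norm_num)]; linarith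
      have : 2 * (1 / (S:ℝ)) + 120 / (S:ℝ) = 122 / S := by ring
      linarith
    · intro x
      have e := Y_eq hIY x
      have a1 := g0r_le S x
      have a2 : 0 ≤ E * (F x).re^2 := (mul_pos hE (hf2p x)).le
      have : E * (F x).re ^ 2 * g0r S x ≤ E * (F x).re ^ 2 * 1 := by gcongr
      linarith
  refine ⟨Y, ζ, Bsum ω' ζ (fun z => E * F z ^ 2 * G0 S z), fun x => ∑' n, hD.bt n x, hIY,
    hζd.mul (diff_shift hYd ω'), ?_, ?_, ?_, hD.diff, hD.per, hD.B_real, ⟨?_, hD.bt_le, hD.bt_rec⟩, ?_⟩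
  · intro z hz
    have := (hcc z hz).ser (hYc' z hz)
    rw [mul_div_right_comm] at this
    exact this
  · intro z; simp only [hsh, hζp, hYp]
  · intro x
    have a4 := hYr (x + ω')
    have a5 := hζr x
    rw [a5, Complex.ofReal_mul, ← a4]
    push_cast; rfl
  · intro x; exact tsum_nonneg fun n => (hD.bt_pos n x).le
  · intro x w hw
    have hJ : ((S^10 : ℕ) : ℝ) * (1 / (S:ℝ)^12) + (2 * (1 / (S:ℝ)^12) + 120 / (S:ℝ)^2) ≤ 200 / (S:ℝ)^2 := by
      have a1 : 1 / (S:ℝ)^12 ≤ 1 / (S:ℝ)^2 := by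
        apply one_div_le_one_div_of_le (by positivity)
        exact pow_le_pow_right₀ (by linarith) (by norm_num)
      have a2 : ((S^10 : ℕ) : ℝ) * (1 / (S:ℝ)^12) = 1 / (S:ℝ)^2 := by push_cast; field_simp
      have a3 : 0 < 1 / (S:ℝ)^2 := by positivity
      have a4 : 200 / (S:ℝ)^2 = 200 * (1 / (S:ℝ)^2) := by ring
      have a5 : 120 / (S:ℝ)^2 = 120 * (1 / (S:ℝ)^2) := by ring
      rw [a2, a4, a5]; linarith
    have := hD.perturb (S^10) (200 / (S:ℝ)^2) (by positivity) hJ (by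
      rw [div_le_one (by positivity)]; nlinarith) (by positivity) x w hw
    refine this.trans ?_
    have e1 : 2 * (200 / (S:ℝ)^2) = 400 / (S:ℝ)^2 := by ring
    rw [e1]
    gcongr
    push_cast
    have b1 : 8 * (s:ℝ)^7 ≤ S := by
      rw [hSr]
      calc 8 * (s:ℝ)^7 ≤ s * s^7 := by gcongr; linarith
        _ = (s:ℝ)^8 := by ring
        _ ≤ _ := pow_le_pow_right₀ (by linarith) (by norm_num)
    have b2 : (S:ℝ)^9 ≤ (S:ℝ)^10 / (8 * (s:ℝ)^7) := by
      rw [le_div_iff₀ (by positivity)]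
      calc (S:ℝ)^9 * (8 * (s:ℝ)^7) ≤ (S:ℝ)^9 * S := by gcongr
        _ = _ := by ring
    have b3 : 64 * (s:ℝ) * (s:ℝ)^7 ≤ Real.exp S := by
      have : 64 * (s:ℝ) * (s:ℝ)^7 ≤ S := by
        rw [hSr]
        calc 64 * (s:ℝ) * s^7 ≤ s * s * s^7 := by gcongr; linarith
          _ = (s:ℝ)^9 := by ring
          _ ≤ _ := pow_le_pow_right₀ (by linarith) (by norm_num)
      have := Real.add_one_le_exp (S:ℝ)
      linarith
    calc 64 * (s:ℝ) * (s:ℝ)^7 * Real.exp (-((S:ℝ)^10 / (8 * (s:ℝ)^7))) ≤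
        Real.exp S * Real.exp (-(S:ℝ)^9) := by gcongr
      _ = Real.exp (S - (S:ℝ)^9) := by rw [← Real.exp_add]; ring_nf
      _ ≤ _ := by
        apply Real.exp_le_exp.2
        have c1 : (S:ℝ)^1 ≤ (S:ℝ)^8 := pow_le_pow_right₀ (by linarith) (by norm_num)
        have c2 : (S:ℝ)^9 = S * (S:ℝ)^8 := by ring
        have c3 : 2 * (S:ℝ)^8 ≤ S * (S:ℝ)^8 := by gcongr; linarith
        rw [c2]; simp only [pow_one] at c1; linarith


theorem Near.inv {ε : ℝ} {a b : ℂ} (h : Near ε a b) : Near ε a⁻¹ b⁻¹ := by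
  obtain ⟨u, hu, rfl⟩ := h
  exact ⟨-u, by simpa using hu, by rw [mul_inv, Complex.exp_neg]⟩

theorem Near.of_sub {δ : ℝ} {a b : ℂ} (ha : a ≠ 0) (hδ : δ ≤ 1/2) (h : ‖b - a‖ ≤ δ * ‖a‖) : Near (2 * δ) a b := by
  have ha' : 0 < ‖a‖ := norm_pos_iff.2 ha
  set z := (b - a) / a with hz
  have hzn : ‖z‖ ≤ δ := by
    rw [hz, norm_div, div_le_iff₀ ha']; exact h
  have hb : b = a * (1 + z) := by rw [hz]; field_simp; ring
  have hne : 1 + z ≠ 0 := by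
    intro h0
    have : z = -1 := by linear_combination h0
    rw [this] at hzn
    simp at hzn; linarith
  refine ⟨Complex.log (1 + z), ?_, ?_⟩
  · have := Complex.norm_log_one_add_half_le_self (z := z) (by linarith)
    have := norm_nonneg z
    linarith
  · rw [Complex.exp_log hne, hb]

theorem Near.cone {ε r : ℝ} {b : ℂ} (hr : 0 < r) (hε : ε ≤ 1/100) (h : Near ε (r:ℂ) b) : Cone (1/10) b := by
  have h1 := h.norm_sub (by linarith)
  rw [Complex.norm_real, Real.norm_of_nonneg hr.le] at h1
  have h2 := (Complex.abs_re_le_norm (b - r))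
  have h3 := (Complex.abs_im_le_norm (b - r))
  simp at h2 h3
  have h4 : r * (2 * ε) ≤ r * (1/50) := by gcongr; linarith
  have h5 := (abs_le.1 (h2.trans (h1.trans h4))).1
  refine ⟨by nlinarith, ?_⟩
  have := h3.trans (h1.trans h4)
  nlinarith

theorem C_step {ω Λ c0 : ℝ} {s S : ℕ} {E : ℝ} {F : ℂ → ℂ} (h : CState ω Λ s E F) (hs : 1000000 ≤ s)
    (hS : S = s^16) (hc0 : 0 < c0) (hdi : ∀ j : ℕ, 1 ≤ j → ∀ p : ℤ, c0 / j ≤ |j * ω - p|)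
    (hcs : 20 / c0 ≤ s) (hΛ1 : 1 ≤ Λ) (hΛ : Λ ≤ s) :
    ∃ F' P : ℂ → ℂ, CState ω Λ S (Real.exp (-(s:ℝ)^8)) F' ∧ (∀ z, P (z + 1) = P z) ∧
      DifferentiableOn ℂ P (Strip (1 / (S:ℝ)^14)) ∧ (∀ x : ℝ, P x = (((P x).re : ℝ) : ℂ)) ∧
      (∀ x : ℝ, 0 < (P x).re ∧ (P x).re ≤ 2 * (s:ℝ)^6) ∧
      (∀ z ∈ Strip (1 / (S:ℝ)^14), ‖P z‖ ≤ 4 * (s:ℝ)^6) ∧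
      (∀ x : ℝ, ¬ nearZ (1 / (S:ℝ)) x → E * (P x).re ≤ Real.exp (-(s:ℝ)^8)) ∧
      (∀ x : ℝ, ((F' ((x + ω : ℝ) : ℂ)).re + (F' ((x - ω : ℝ) : ℂ)).re) / (F' x).re =
        ((F ((x + ω : ℝ) : ℂ)).re + (F ((x - ω : ℝ) : ℂ)).re) / (F x).re + E * (1 - (P x).re)) := by
  obtain ⟨Yp, ζp, Bp, bp, hYp, hSpd, hSpc, hSpp, hSpr, hBpd, hBpp, hBpr, hIBp, hBpn⟩ :=
    B_step h hs hS hΛ ω (Or.inl rfl)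
  obtain ⟨Ym, ζm, Bm, bm, hYm, hSmd, hSmc, hSmp, hSmr, hBmd, hBmp, hBmr, hIBm, hBmn⟩ :=
    B_step h hs hS hΛ (-ω) (Or.inr rfl)
  have h6 : (1000000:ℝ) ≤ s := by exact_mod_cast hs
  have hSr : (S:ℝ) = (s:ℝ)^16 := by exact_mod_cast hS
  have hs0 : (0:ℝ) < s := by linarith
  have hsS : (s:ℝ) ≤ S := by
    rw [hSr]
    calc (s:ℝ) = (s:ℝ)^1 := by ring
      _ ≤ _ := pow_le_pow_right₀ (by linarith) (by norm_num)
  have hS6 : (1000000:ℝ) ≤ S := h6.trans hsS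
  have hS0 : (0:ℝ) < S := by linarith
  have hE : 0 < E := (Real.exp_pos _).trans_le h.st.Elow
  set η := 1 / (s:ℝ)^14 / 2 with hη
  have hη0 : 0 < η := by positivity
  set η' := 1 / (S:ℝ)^14 with hη'
  have hη'0 : 0 < η' := by positivity
  have hηη : η' ≤ η := by
    rw [hη, div_div, hη']
    apply one_div_le_one_div_of_le (by positivity)
    rw [hSr]
    calc (s:ℝ)^14 * 2 ≤ s^14 * s := by gcongr; linarith
      _ = (s:ℝ)^15 := by ring
      _ ≤ s^(16*14) := pow_le_pow_right₀ (by linarith) (by norm_num)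
      _ = _ := by ring
  have hηs : η ≤ 1 / (s:ℝ)^14 := by
    have : 0 < 1 / (s:ℝ)^14 := by positivity
    rw [hη]; linarith
  have hFd : DifferentiableOn ℂ F (Strip η) := h.diff.mono (Strip_mono hηs)
  have hFc : ∀ z ∈ Strip η, Cone (1/10) (F z) := fun z hz => h.cone z (Strip_mono hηs hz)
  set f : ℝ → ℝ := fun x => (F x).re with hf
  set yp : ℝ → ℝ := fun x => (Yp x).re with hyp
  set ym : ℝ → ℝ := fun x => (Ym x).re with hym
  set C : ℂ → ℂ := fun z => E * F z ^ 2 + ζp z * Yp (z + (ω:ℝ)) + ζm z * Ym (z + ((-ω : ℝ) : ℂ)) with hC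
  set N : ℂ → ℂ := fun z => E * F z ^ 2 * G0 S z + Bp z + Bm z with hN
  have hFr : ∀ x : ℝ, F x = ((f x : ℝ) : ℂ) := h.Fre
  have hCr : ∀ x : ℝ, C x = ((CC ω E f yp ym x : ℝ) : ℂ) := by
    intro x
    simp only [hC, CC]
    rw [hSpr, hSmr, hFr]
    simp only [hyp, hym]
    push_cast; rfl
  have hNr : ∀ x : ℝ, N x = ((NN E f bp bm (g0r S) x : ℝ) : ℂ) := by
    intro x
    simp only [hN, NN]
    rw [hBpr, hBmr, hFr, G0_real]
    push_cast; rfl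
  have hCp : ∀ z, C (z + 1) = C z := fun z => by
    simp only [hC]; rw [hSpp, hSmp, h.per]
  have hNp : ∀ z, N (z + 1) = N z := fun z => by
    simp only [hN]; rw [hBpp, hBmp, h.per, G0_per]
  have D : RData ω Λ c0 s S E f yp ym bp bm (g0r S) := by
    refine ⟨h.st, hs, hS, hc0, hdi, hcs, hΛ1, hΛ, hYp, hYm, hIBp, hIBm, g0r_pos S, g0r_le S,
      g0r_near S (by linarith), g0r_far S (by linarith), ?_⟩
    intro x
    unfold gg
    have a1 := hCp x
    have a2 := hNp x
    rw [show ((x:ℂ) + 1) = ((x + 1 : ℝ) : ℂ) by push_cast; rfl, hCr, hCr] at a1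
    rw [show ((x:ℂ) + 1) = ((x + 1 : ℝ) : ℂ) by push_cast; rfl, hNr, hNr] at a2
    rw [Complex.ofReal_injective a1, Complex.ofReal_injective a2]
  have hκc : ∀ z ∈ Strip η, Cone (1/4) (E * F z ^ 2) := fun z hz => by
    rw [sq]
    exact ((hFc z hz).mul (hFc z hz) (by norm_num) (by norm_num) (by norm_num)).smul E hE
  have hCc : ∀ z ∈ Strip η, Cone (1/4) (C z) := fun z hz =>
    ((hκc z hz).add (hSpc z hz)).add (hSmc z hz)
  have hCd : DifferentiableOn ℂ C (Strip η) := (((hFd.pow 2).const_mul _).add hSpd).add hSmd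
  have hNd : DifferentiableOn ℂ N (Strip η') :=
    (((((hFd.pow 2).const_mul _).mono (Strip_mono hηη)).mul (G0_diff S).differentiableOn).add hBpd).add hBmd
  have small : 1 / (S:ℝ)^12 ≤ 1 / 1000 := by
    apply one_div_le_one_div_of_le (by norm_num)
    calc (1000:ℝ) ≤ S := by linarith
      _ = (S:ℝ)^1 := by ring
      _ ≤ _ := pow_le_pow_right₀ (by linarith) (by norm_num)
  have small2 : 120 / (S:ℝ)^2 ≤ 1 / 1000 := by
    rw [div_le_div_iff₀ (by positivity) (by norm_num)]; nlinarith
  have hFn : ∀ (x : ℝ) (w : ℂ), ‖w‖ < η' → Near (1/1000) (F x) (F (x + w)) := fun x w hw =>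
    (near_fine s S hs hS F hFd (fun z hz => (hFc z hz).1) x w hw).mono small
  have hCn : ∀ (x : ℝ) (w : ℂ), ‖w‖ < η' → Near (1/1000) (C x) (C (x + w)) := fun x w hw =>
    (near_fine s S hs hS C hCd (fun z hz => (hCc z hz).1) x w hw).mono small
  have hGn : ∀ (x : ℝ) (w : ℂ), ‖w‖ < η' → Near (1/1000) (G0 S x) (G0 S (x + w)) := fun x w hw =>
    (G0_near S hS6 x w hw.le).mono small2
  have Nlow : ∀ x, Real.exp (-(S:ℝ)^8) ≤ 1 / S * NN E f bp bm (g0r S) x := by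
    intro x
    have a1 : NN E f bp bm (g0r S) x = gg ω E f yp ym bp bm (g0r S) x * CC ω E f yp ym x := by
      unfold gg; rw [div_mul_cancel₀ _ (D.Cpos x).ne']
    have a2 := D.g_ge x
    have a3 := D.Cge x
    have a4 := h.st.fexp x
    have a5 := h.st.Elow
    have a6 : Real.exp (-(s:ℝ)) * Real.exp (-(s:ℝ)^7)^2 ≤ CC ω E f yp ym x := by
      refine le_trans ?_ a3
      gcongr
    have a7 : Real.exp (-(S:ℝ)^7) * (Real.exp (-(s:ℝ)) * Real.exp (-(s:ℝ)^7)^2) ≤ NN E f bp bm (g0r S) x := by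
      rw [a1]
      have := D.gpos x
      gcongr
    have a8 : Real.exp (-(S:ℝ)) ≤ 1 / S := by
      rw [Real.exp_neg, ← one_div]
      apply one_div_le_one_div_of_le hS0
      have := Real.add_one_le_exp (S:ℝ); linarith
    calc Real.exp (-(S:ℝ)^8) ≤ Real.exp (-(S:ℝ)) * (Real.exp (-(S:ℝ)^7) * (Real.exp (-(s:ℝ)) * Real.exp (-(s:ℝ)^7)^2)) := by
          rw [← Real.exp_nat_mul, ← Real.exp_add, ← Real.exp_add, ← Real.exp_add]
          apply Real.exp_le_exp.2
          have c1 : (s:ℝ)^7 ≤ S^7 := by gcongr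
          have c2 : (S:ℝ)^1 ≤ S^7 := pow_le_pow_right₀ (by linarith) (by norm_num)
          have c3 : (S:ℝ)^8 = S * (S:ℝ)^7 := by ring
          have c4 : 10 * (S:ℝ)^7 ≤ S * (S:ℝ)^7 := by gcongr; linarith
          have c5 : 0 < (S:ℝ)^7 := by positivity
          push_cast
          simp only [pow_one] at c2
          linarith
      _ ≤ 1 / S * NN E f bp bm (g0r S) x := by gcongr
  have hNn : ∀ (x : ℝ) (w : ℂ), ‖w‖ < η' → Near (1/500) (N x) (N (x + w)) := by
    intro x w hw
    have hkn : Near (2 * (1 / (S:ℝ)^12) + 120 / (S:ℝ)^2) (E * F x ^ 2 * G0 S x) (E * F (x + w) ^ 2 * G0 S (x + w)) := by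
      have hn := near_fine s S hs hS F hFd (fun z hz => (hFc z hz).1) x w hw
      have hg := G0_near S hS6 x w hw.le
      obtain ⟨u, hu, e⟩ := (hn.mul hn).mul hg
      refine ⟨u, hu.trans (le_of_eq (by ring)), ?_⟩
      have e2 : E * F (x + w)^2 * G0 S (x + w) = E * (F (x + w) * F (x + w) * G0 S (x + w)) := by ring
      rw [e2, e]
      ring
    have a1 := hkn.norm_sub (by linarith)
    have kr : (E * F x ^ 2 * G0 S x : ℂ) = ((E * f x ^2 * g0r S x : ℝ) : ℂ) := by
      rw [hFr, G0_real]; push_cast; rfl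
    have kp : 0 < E * f x^2 * g0r S x := mul_pos (D.κpos x) (g0r_pos S x)
    have a2 := hBpn x w hw
    have a3 := hBmn x w hw
    have b1 := hIBp.1 x
    have b2 := hIBm.1 x
    have hNpos := D.Npos x
    have q1 : 1 / (S:ℝ)^12 ≤ 1 / (S:ℝ)^2 := by
      apply one_div_le_one_div_of_le (by positivity)
      exact pow_le_pow_right₀ (by linarith) (by norm_num)
    have q2 : 2 * (2 * (1 / (S:ℝ)^12) + 120 / (S:ℝ)^2) ≤ 400 / (S:ℝ)^2 := by
      have : 0 < 1 / (S:ℝ)^2 := by positivity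
      have e1 : 120 / (S:ℝ)^2 = 120 * (1 / (S:ℝ)^2) := by ring
      have e2 : 400 / (S:ℝ)^2 = 400 * (1 / (S:ℝ)^2) := by ring
      rw [e1, e2]; linarith
    have q3 : 400 / (S:ℝ)^2 ≤ 1 / 2000 := by
      rw [div_le_div_iff₀ (by positivity) (by norm_num)]; nlinarith
    have q4 : 1 / (S:ℝ) ≤ 1 / 4000 := by
      apply one_div_le_one_div_of_le (by norm_num); linarith
    have q5 := Nlow x
    rw [kr, Complex.norm_real, Real.norm_of_nonneg kp.le] at a1
    have hsub : ‖N (x + w) - N x‖ ≤ (1/1000) * ‖N x‖ := by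
      have e : N (x + w) - N x = (E * F (x + w) ^ 2 * G0 S (x + w) - ((E * f x ^2 * g0r S x : ℝ) : ℂ)) +
          (Bp (x + w) - Bp x) + (Bm (x + w) - Bm x) := by
        rw [← kr]; simp only [hN]; ring
      rw [e, hNr x, Complex.norm_real, Real.norm_of_nonneg hNpos.le]
      refine (norm_add₃_le).trans ?_
      have r1 : E * f x ^2 * g0r S x * (2 * (2 * (1 / (S:ℝ)^12) + 120 / (S:ℝ)^2)) ≤
          E * f x ^2 * g0r S x * (400 / (S:ℝ)^2) := by gcongr
      have r2 : 400 / (S:ℝ)^2 * NN E f bp bm (g0r S) x ≤ 1/2000 * NN E f bp bm (g0r S) x := by gcongr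
      have r3 : 1 / S * NN E f bp bm (g0r S) x ≤ 1/4000 * NN E f bp bm (g0r S) x := by gcongr
      have r4 : 400 / (S:ℝ)^2 * NN E f bp bm (g0r S) x = E * f x ^2 * g0r S x * (400 / (S:ℝ)^2) +
        400 / (S:ℝ)^2 * bp x + 400 / (S:ℝ)^2 * bm x := by unfold NN; ring
      linarith
    have hne : N x ≠ 0 := by rw [hNr x]; exact_mod_cast hNpos.ne'
    exact (Near.of_sub hne (by norm_num) hsub).mono (by norm_num)
  have hdec : ∀ z ∈ Strip η', ∃ x : ℝ, ∃ w : ℂ, ‖w‖ < η' ∧ z = x + w := fun z hz =>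
    ⟨z.re, z.im * Complex.I, by simp; exact hz, Strip_decomp z⟩
  have hNne : ∀ z ∈ Strip η', N z ≠ 0 := by
    intro z hz
    obtain ⟨x, w, hw, rfl⟩ := hdec z hz
    obtain ⟨u, _, e⟩ := hNn x w hw
    rw [e, hNr]
    exact mul_ne_zero (by exact_mod_cast (D.Npos x).ne') (Complex.exp_ne_zero _)
  have hCne : ∀ z ∈ Strip η', C z ≠ 0 := fun z hz => (hCc z (Strip_mono hηη hz)).ne_zero
  set g : ℝ → ℝ := gg ω E f yp ym bp bm (g0r S) with hg
  set F' : ℂ → ℂ := fun z => F z * (N z * (C z)⁻¹) with hF'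
  set P : ℂ → ℂ := fun z => G0 S z * (C z * (N z)⁻¹) with hP
  have hF'r : ∀ x : ℝ, F' x = ((f x * g x : ℝ) : ℂ) := by
    intro x; simp only [hF', hg]; rw [hFr, hNr, hCr]; unfold gg; push_cast; rw [div_eq_mul_inv]
  have hPr : ∀ x : ℝ, P x = ((g0r S x / g x : ℝ) : ℂ) := by
    intro x; simp only [hP, hg]; rw [G0_real, hNr, hCr]; unfold gg
    push_cast; rw [div_div_eq_mul_div, mul_div_assoc, div_eq_mul_inv]
  have hF're : ∀ x : ℝ, (F' x).re = f x * g x := fun x => by rw [hF'r]; exact Complex.ofReal_re _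
  have hPre : ∀ x : ℝ, (P x).re = g0r S x / g x := fun x => by rw [hPr]; exact Complex.ofReal_re _
  have hfg : ∀ x, 0 < f x * g x := fun x => mul_pos (h.st.fpos x) (D.gpos x)
  have hpi : ∀ x, 0 < g0r S x / g x := fun x => div_pos (g0r_pos S x) (D.gpos x)
  refine ⟨F', P, ⟨?_, ?_, ?_, ?_, ?_⟩, ?_, ?_, ?_, ?_, ?_, ?_, ?_⟩
  · simp only [hF're]; exact D.newstate
  · intro z; simp only [hF', h.per, hNp, hCp]
  · exact (hFd.mono (Strip_mono hηη)).mul (hNd.mul ((hCd.mono (Strip_mono hηη)).inv hCne))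
  · intro z hz
    obtain ⟨x, w, hw, rfl⟩ := hdec z hz
    have := (hFn x w hw).mul ((hNn x w hw).mul (hCn x w hw).inv)
    have e : F x * (N x * (C x)⁻¹) = ((f x * g x : ℝ) : ℂ) := hF'r x
    rw [e] at this
    exact this.cone (hfg x) (by norm_num)
  · intro x; rw [hF'r]; exact Cone.of_real (hfg x)
  · intro z; simp only [hP, hNp, hCp, G0_per]
  · exact (G0_diff S).differentiableOn.mul ((hCd.mono (Strip_mono hηη)).mul (hNd.inv hNne))
  · intro x; rw [hPre, hPr]
  · intro x; rw [hPre]; exact ⟨hpi x, D.pi_le x⟩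
  · intro z hz
    obtain ⟨x, w, hw, rfl⟩ := hdec z hz
    have := (hGn x w hw).mul ((hCn x w hw).mul (hNn x w hw).inv)
    have e : G0 S x * (C x * (N x)⁻¹) = ((g0r S x / g x : ℝ) : ℂ) := hPr x
    rw [e] at this
    have h1 := this.norm_le
    rw [Complex.norm_real, Real.norm_of_nonneg (hpi x).le] at h1
    have h2 : Real.exp (1/1000 + (1/1000 + 1/500)) ≤ 2 := (exp_le_inv _ (by norm_num)).trans (by norm_num)
    have h3 : g0r S x / g x ≤ 2 * (s:ℝ)^6 := D.pi_le x
    have h4 := hpi x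
    calc _ ≤ _ := h1
      _ ≤ 2 * (s:ℝ)^6 * 2 := by gcongr
      _ = _ := by ring
  · intro x hx; rw [hPre]; exact D.pi_far x hx
  · intro x
    rw [hF're, hF're, hF're, hPre]
    exact D.vrec x


theorem base_state (ω Λ E0 : ℝ) (s : ℕ) (hs : 1000000 ≤ s) (hE : 1 ≤ E0) (hΛ : 2 + E0 + 1 / s ≤ Λ) :
    CState ω Λ s E0 (fun _ => 1) := by
  have h6 : (1000000:ℝ) ≤ s := by exact_mod_cast hs
  have hs0 : (0:ℝ) < s := by linarith
  have hY : ∀ ω' (Y : ℝ → ℝ), IsY ω' E0 (fun _ => 1) Y → ∀ x, E0 ≤ Y x ∧ Y x ≤ E0 + 1 := by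
    intro ω' Y hY x
    have h1 := hY.2 x
    have h2 := hY.1 (x + ω')
    have h3 : 0 ≤ 1 * 1 * Y (x + ω') / (1 * 1 + Y (x + ω')) := by positivity
    have h4 : 1 * 1 * Y (x + ω') / (1 * 1 + Y (x + ω')) ≤ 1 := by
      rw [div_le_one (by linarith)]; linarith
    simp only [one_pow, mul_one] at *
    constructor <;> linarith
  refine ⟨⟨?_, ?_, ?_, ?_, ?_, ?_, ?_, ?_, ?_, ?_⟩, ?_, ?_, ?_, ?_⟩
  · exact (Real.exp_le_one_iff.2 (by linarith)).trans hE
  · have : 0 < 1 / (s:ℝ) := by positivity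
    linarith
  · intro x; simp
  · intro x; simp
  · intro x; simp
  · intro x _
    simp only [Complex.one_re]
    rw [div_le_one (by positivity)]
    exact one_le_pow₀ (by linarith)
  · intro x
    simp only [Complex.one_re]
    exact Real.exp_le_one_iff.2 (by have : 0 < (s:ℝ)^7 := by positivity
                                    linarith)
  · intro x
    simp only [Complex.one_re]
    linarith
  · intro ω' _ Y hIY x _
    simp only [Complex.one_re] at *
    have := (hY ω' Y hIY x).2
    have h2 : (2:ℝ) ≤ (s:ℝ)^6 := by
      calc (2:ℝ) ≤ s := by linarith
        _ = (s:ℝ)^1 := by ring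
        _ ≤ _ := pow_le_pow_right₀ (by linarith) (by norm_num)
    nlinarith
  · intro ω' _ Y hIY x
    simp only [Complex.one_re] at *
    have hZ : ∀ y, Zt ω' (fun _ => 1) Y y ≤ 1 / 2 := by
      intro y
      unfold Zt
      have := (hY ω' Y hIY (y + ω')).1
      rw [div_le_div_iff₀ (by linarith) (by norm_num)]
      linarith
    have hp : ∀ y, 0 < Zt ω' (fun _ => 1) Y y := Zt_pos (fun _ => one_pos) hIY.1
    have h1 := prod_anti (fun i : ℕ => Zt ω' (fun _ => 1) Y (x + i * ω')) (fun i => (hp _).le)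
      (fun i => (hZ _).trans (by norm_num)) (m := 1) (n := s^7) (Nat.one_le_pow _ _ (by omega))
    refine h1.trans ?_
    simp only [Finset.range_one, Finset.prod_singleton]
    exact hZ _
  · intro z; rfl
  · exact differentiableOn_const _
  · intro z _
    refine ⟨by simp, by simp⟩
  · intro x
    refine ⟨by simp, by simp⟩

theorem deriv_bound (P : ℂ → ℂ) (r A : ℝ) (hr : 0 < r) (hd : DifferentiableOn ℂ P (Strip r))
    (hb : ∀ z ∈ Strip r, ‖P z‖ ≤ A) :
    ContDiff ℝ (⊤ : ℕ∞) (fun x : ℝ => (P x).re) ∧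
    ∀ (j : ℕ) (x : ℝ), |iteratedDeriv j (fun x : ℝ => (P x).re) x| ≤ j.factorial * A / (r/2)^j := by
  have han : AnalyticOnNhd ℂ P (Strip r) := hd.analyticOnNhd (Strip_open r)
  have hit : ∀ j : ℕ, ∀ x : ℝ, DifferentiableAt ℂ (iteratedDeriv j P) x := by
    intro j x
    rw [iteratedDeriv_eq_iterate]
    exact (han.iterated_deriv j x (Strip_real hr x)).differentiableAt
  have key : ∀ j : ℕ, iteratedDeriv j (fun x : ℝ => (P x).re) = fun x : ℝ => (iteratedDeriv j P x).re := by
    intro j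
    induction j with
    | zero => simp
    | succ j ih =>
      rw [iteratedDeriv_succ, ih]
      funext x
      have := (hit j x).hasDerivAt.real_of_complex
      rw [this.deriv, iteratedDeriv_succ]
  constructor
  · apply contDiff_of_differentiable_iteratedDeriv
    intro m _
    rw [key]
    intro x
    exact (hit m x).hasDerivAt.real_of_complex.differentiableAt
  · intro j x
    rw [key]
    refine (Complex.abs_re_le_norm _).trans ?_
    apply Complex.norm_iteratedDeriv_le_of_forall_mem_sphere_norm_le j (by linarith)
    · apply DifferentiableOn.diffContOnCl
      apply hd.mono
      refine Metric.closure_ball_subset_closedBall.trans ?_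
      refine (Metric.closedBall_subset_ball (by linarith)).trans (ball_Strip x r)
    · intro z hz
      apply hb
      apply ball_Strip x r
      exact (Metric.sphere_subset_closedBall.trans (Metric.closedBall_subset_ball (by linarith))) hz

theorem smooth_assembly (u : ℕ → ℝ → ℝ) (hu : ∀ i, ContDiff ℝ (⊤ : ℕ∞) (u i))
    (b : ℕ → ℕ → ℝ) (hb : ∀ j, Summable (b j)) (hub : ∀ j i x, |iteratedDeriv j (u i) x| ≤ b j i) :
    ContDiff ℝ (⊤ : ℕ∞) (fun x => 2 + ∑' i, u i x) ∧
    (∀ x, Summable (fun i => u i x)) ∧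
    (∀ l : ℕ, ∀ ε : ℝ, 0 < ε → ∃ N : ℕ, ∀ n ≥ N, ∀ j ≤ l, ∀ x : ℝ,
      |iteratedDeriv j (fun y => (2 + ∑ i ∈ Finset.range n, u i y) - (2 + ∑' i, u i y)) x| ≤ ε) := by
  have hF : ∀ (k i : ℕ) (x : ℝ), (k : ℕ∞) ≤ (⊤ : ℕ∞) → ‖iteratedFDeriv ℝ k (u i) x‖ ≤ b k i := by
    intro k i x _
    rw [norm_iteratedFDeriv_eq_norm_iteratedDeriv]
    exact hub k i x
  have hs : ∀ x, Summable (fun i => u i x) := by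
    intro x
    apply Summable.of_norm_bounded (hb 0)
    intro i
    have := hub 0 i x
    simpa using this
  refine ⟨contDiff_const.add (contDiff_tsum hu (fun k _ => hb k) hF), hs, ?_⟩
  intro l ε hε
  have hN : ∀ j : ℕ, ∃ N : ℕ, ∀ n ≥ N, ∑' i, b j (i + n) ≤ ε := by
    intro j
    have := (tendsto_sum_nat_add (b j)).eventually (gt_mem_nhds hε)
    obtain ⟨N, hN⟩ := eventually_atTop.1 this
    exact ⟨N, fun n hn => (hN n hn).le⟩
  choose N hN using hN
  refine ⟨∑ j ∈ Finset.range (l+1), N j, ?_⟩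
  intro n hn j hj x
  have hnj : n ≥ N j := by
    refine le_trans ?_ hn
    exact Finset.single_le_sum (f := N) (fun _ _ => Nat.zero_le _) (Finset.mem_range.2 (by omega))
  have e : (fun y => (2 + ∑ i ∈ Finset.range n, u i y) - (2 + ∑' i, u i y)) = - (fun y => ∑' i, u (i + n) y) := by
    funext y
    have := (hs y).sum_add_tsum_nat_add n
    simp only [Pi.neg_apply]
    linarith
  rw [e, iteratedDeriv_neg, abs_neg, ← Real.norm_eq_abs, ← norm_iteratedFDeriv_eq_norm_iteratedDeriv]
  rw [iteratedFDeriv_tsum_apply (f := fun i => u (i + n)) (v := fun k i => b k (i + n)) (N := ⊤) (fun i => hu _)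
    (fun k _ => (summable_nat_add_iff n).2 (hb k)) (fun k i x hk => hF k _ x hk) le_top]
  refine le_trans ?_ (hN j n hnj)
  exact tsum_of_norm_bounded ((summable_nat_add_iff n).2 (hb j)).hasSum (fun i => hF j _ x le_top)

theorem chain {α β : Type*} [Nonempty β] (Q : ℕ → α → Prop) (R : ℕ → α → α → β → Prop) (a0 : α) (h0 : Q 0 a0)
    (step : ∀ k a, Q k a → ∃ a' b, Q (k+1) a' ∧ R k a a' b) :
    ∃ (a : ℕ → α) (b : ℕ → β), a 0 = a0 ∧ ∀ k, Q k (a k) ∧ R k (a k) (a (k+1)) (b k) := by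
  choose! A B hQ hR using step
  let a : ℕ → α := fun n => Nat.rec a0 (fun k x => A k x) n
  have hq : ∀ k, Q k (a k) := by
    intro k
    induction k with
    | zero => exact h0
    | succ k ih => exact hQ k _ ih
  exact ⟨a, fun k => B k (a k), rfl, fun k => ⟨hq k, hR k _ (hq k)⟩⟩

theorem theta_int (θ : ℝ → ℝ) (hc : Continuous θ) (B S : ℝ) (hS : 4 ≤ S) (hB : ∀ x, θ x ≤ B)
    (hz : ∀ x, ¬ nearZ (1 / S) x → θ x = 0) : ∫ x in (0:ℝ)..1, θ x ≤ 2 * B / S := by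
  have hS0 : 0 < S := by linarith
  have h4 : 1 / S ≤ 1 / 4 := one_div_le_one_div_of_le (by norm_num) hS
  have hp : 0 < 1 / S := by positivity
  have hi : ∀ a b, IntervalIntegrable θ volume a b := fun a b => hc.intervalIntegrable a b
  rw [← intervalIntegral.integral_add_adjacent_intervals (hi 0 (1/S)) (hi (1/S) 1),
    ← intervalIntegral.integral_add_adjacent_intervals (hi (1/S) (1 - 1/S)) (hi (1 - 1/S) 1)]
  have h1 : ∫ x in (0:ℝ)..(1/S), θ x ≤ ∫ x in (0:ℝ)..(1/S), B :=
    intervalIntegral.integral_mono_on hp.le (hi _ _) (by simp) (fun x _ => hB x)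
  have h3 : ∫ x in (1 - 1/S)..1, θ x ≤ ∫ x in (1 - 1/S)..1, B :=
    intervalIntegral.integral_mono_on (by linarith) (hi _ _) (by simp) (fun x _ => hB x)
  have h2 : ∫ x in (1/S)..(1 - 1/S), θ x = ∫ x in (1/S)..(1 - 1/S), (0:ℝ) := by
    apply intervalIntegral.integral_congr_uIoo
    intro x hx
    rw [Set.uIoo_of_le (by linarith)] at hx
    apply hz
    rintro ⟨p, hp⟩
    have := abs_le.1 hp
    rcases le_or_gt p 0 with h | h
    · have : (p:ℝ) ≤ 0 := by exact_mod_cast h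
      linarith [hx.1, this]
    · have : (1:ℝ) ≤ p := by exact_mod_cast h
      linarith [hx.2, this]
  rw [h2]
  simp only [intervalIntegral.integral_const, smul_eq_mul, sub_zero, mul_zero] at h1 h3 ⊢
  have : 2 * B / S = 1 / S * B + (1 - (1 - 1/S)) * B := by ring
  linarith


noncomputable def EE (E0 : ℝ) (s0 : ℕ) : ℕ → ℝ
  | 0 => E0
  | k + 1 => Real.exp (-((s0 ^ (16 ^ k) : ℕ) : ℝ)^8)

theorem sig_succ (s0 k : ℕ) : s0 ^ (16 ^ (k+1)) = (s0 ^ (16 ^ k))^16 := by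
  rw [← pow_mul, pow_succ]

theorem sig_ge (s0 k : ℕ) (h : 1000000 ≤ s0) : s0 * 2^k ≤ s0 ^ (16 ^ k) := by
  induction k with
  | zero => simp
  | succ k ih =>
    rw [sig_succ]
    set t := s0 ^ (16 ^ k)
    have h1 : s0 ≤ t := (Nat.le_mul_of_pos_right _ (by positivity)).trans ih
    calc s0 * 2^(k+1) = (s0 * 2^k) * 2 := by ring
      _ ≤ t * t := by gcongr; omega
      _ = t^2 := by ring
      _ ≤ t^16 := Nat.pow_le_pow_right (by omega) (by norm_num)

theorem pow_exp_le (t : ℝ) (ht : 1 ≤ t) (n : ℕ) : t^n * Real.exp (-t^8) ≤ (n+1).factorial / t := by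
  have h1 := Real.pow_div_factorial_le_exp t (by linarith) (n+1)
  have h2 : t ≤ t^8 := by
    calc t = t^1 := by ring
      _ ≤ _ := pow_le_pow_right₀ ht (by norm_num)
  have h3 : Real.exp (-t^8) ≤ Real.exp (-t) := Real.exp_le_exp.2 (by linarith)
  have hf : (0:ℝ) < (n+1).factorial := by positivity
  rw [div_le_iff₀ hf] at h1
  rw [le_div_iff₀ (by linarith)]
  calc t^n * Real.exp (-t^8) * t = t^(n+1) * Real.exp (-t^8) := by ring
    _ ≤ (Real.exp t * (n+1).factorial) * Real.exp (-t) := by gcongr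
    _ = (n+1).factorial * (Real.exp t * Real.exp (-t)) := by ring
    _ = _ := by rw [← Real.exp_add]; simp

theorem b_summable (E0 : ℝ) (s0 : ℕ) (h : 1000000 ≤ s0) (j : ℕ) :
    Summable (fun k : ℕ => (j.factorial : ℝ) * (EE E0 s0 k * (1 + 4 * ((s0 ^ (16 ^ k) : ℕ) : ℝ)^6)) /
      ((1 / ((s0 ^ (16 ^ (k+1)) : ℕ) : ℝ)^14) / 2)^j) := by
  rw [← summable_nat_add_iff 1]
  apply Summable.of_nonneg_of_le (g := _) (f := fun k : ℕ => ((j.factorial : ℝ) * 2^j * 5 * ((96 + 3584 * j + 1).factorial : ℝ)) * (1/2:ℝ)^k)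
  · intro k
    have : 0 < EE E0 s0 (k+1) := by unfold EE; exact Real.exp_pos _
    positivity
  · intro k
    have hg := sig_ge s0 k h
    rw [sig_succ s0 (k+1), sig_succ s0 k]
    simp only [EE]
    have ht : (2:ℝ)^k ≤ ((s0 ^ (16 ^ k) : ℕ) : ℝ) := by
      have : 2^k ≤ s0 ^ (16 ^ k) := (Nat.le_mul_of_pos_left _ (by omega)).trans hg
      exact_mod_cast this
    generalize s0 ^ (16 ^ k) = T at ht
    push_cast
    set t := (T:ℝ)
    have h1 : (1:ℝ) ≤ t := (one_le_pow₀ (by norm_num)).trans ht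
    have ht0 : 0 < t := by linarith
    have e1 : ((1 / ((t^16)^16)^14) / 2)^j = (2^j * t^(3584 * j))⁻¹ := by
      rw [pow_mul, ← mul_pow, ← inv_pow]
      congr 1
      field_simp
    rw [e1, div_inv_eq_mul]
    have h2 : 1 + 4 * (t^16)^6 ≤ 5 * t^96 := by
      have : 1 ≤ t^96 := one_le_pow₀ h1
      have e : (t^16)^6 = t^96 := by ring
      rw [e]; linarith
    have h3 := pow_exp_le t h1 (96 + 3584 * j)
    calc (j.factorial : ℝ) * (Real.exp (-t^8) * (1 + 4 * (t^16)^6)) * (2^j * t^(3584*j))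
        ≤ (j.factorial : ℝ) * (Real.exp (-t^8) * (5 * t^96)) * (2^j * t^(3584*j)) := by gcongr
      _ = (j.factorial : ℝ) * 2^j * 5 * (t^(96 + 3584 * j) * Real.exp (-t^8)) := by rw [pow_add]; ring
      _ ≤ (j.factorial : ℝ) * 2^j * 5 * ((96 + 3584 * j + 1).factorial / t) := by gcongr
      _ ≤ (j.factorial : ℝ) * 2^j * 5 * ((96 + 3584 * j + 1).factorial / 2^k) := by gcongr
      _ = _ := by rw [one_div, inv_pow]; ring
  · exact (summable_geometric_of_lt_one (by norm_num) (by norm_num)).mul_left _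

structure Fam (ω Λ E0 : ℝ) (s0 : ℕ) (F P : ℕ → ℂ → ℂ) : Prop where
  hs0 : 1000000 ≤ s0
  hΛ1 : 1 ≤ Λ
  hΛ : Λ ≤ s0
  hE0 : 1 ≤ E0
  F0 : F 0 = fun _ => 1
  st : ∀ k, CState ω Λ (s0 ^ (16 ^ k)) (EE E0 s0 k) (F k)
  per : ∀ k z, P k (z + 1) = P k z
  diff : ∀ k, DifferentiableOn ℂ (P k) (Strip (1 / ((s0 ^ (16 ^ (k+1)) : ℕ) : ℝ)^14))
  pos : ∀ k (x : ℝ), 0 < (P k x).re ∧ (P k x).re ≤ 2 * ((s0 ^ (16 ^ k) : ℕ) : ℝ)^6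
  bd : ∀ k, ∀ z ∈ Strip (1 / ((s0 ^ (16 ^ (k+1)) : ℕ) : ℝ)^14), ‖P k z‖ ≤ 4 * ((s0 ^ (16 ^ k) : ℕ) : ℝ)^6
  far : ∀ k (x : ℝ), ¬ nearZ (1 / ((s0 ^ (16 ^ (k+1)) : ℕ) : ℝ)) x → EE E0 s0 k * (P k x).re ≤ EE E0 s0 (k+1)
  vrec : ∀ k (x : ℝ), ((F (k+1) ((x + ω : ℝ) : ℂ)).re + (F (k+1) ((x - ω : ℝ) : ℂ)).re) / (F (k+1) x).re =
        ((F k ((x + ω : ℝ) : ℂ)).re + (F k ((x - ω : ℝ) : ℂ)).re) / (F k x).re + EE E0 s0 k * (1 - (P k x).re)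

theorem fam_exists (ω c0 Λ E0 : ℝ) (s0 : ℕ) (hs : 1000000 ≤ s0) (hc0 : 0 < c0)
    (hdi : ∀ j : ℕ, 1 ≤ j → ∀ p : ℤ, c0 / j ≤ |j * ω - p|) (hcs : 20 / c0 ≤ s0) (hE0 : 1 ≤ E0)
    (hΛ0 : 2 + E0 + 1 / s0 ≤ Λ) (hΛ : Λ ≤ s0) : ∃ F P, Fam ω Λ E0 s0 F P := by
  have hΛ1 : 1 ≤ Λ := by
    have : (0:ℝ) ≤ 1 / s0 := by positivity
    linarith
  have hge : ∀ k, s0 ≤ s0 ^ (16 ^ k) := fun k =>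
    (Nat.le_mul_of_pos_right _ (by positivity)).trans (sig_ge s0 k hs)
  have hger : ∀ k, (s0:ℝ) ≤ ((s0 ^ (16 ^ k) : ℕ) : ℝ) := fun k => by exact_mod_cast hge k
  obtain ⟨F, P, h0, h⟩ := chain (α := ℂ → ℂ) (β := ℂ → ℂ)
    (fun k F => CState ω Λ (s0 ^ (16 ^ k)) (EE E0 s0 k) F)
    (fun k F F' P => (∀ z, P (z + 1) = P z) ∧
      DifferentiableOn ℂ P (Strip (1 / ((s0 ^ (16 ^ (k+1)) : ℕ) : ℝ)^14)) ∧ (∀ x : ℝ, P x = (((P x).re : ℝ) : ℂ)) ∧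
      (∀ x : ℝ, 0 < (P x).re ∧ (P x).re ≤ 2 * ((s0 ^ (16 ^ k) : ℕ) : ℝ)^6) ∧
      (∀ z ∈ Strip (1 / ((s0 ^ (16 ^ (k+1)) : ℕ) : ℝ)^14), ‖P z‖ ≤ 4 * ((s0 ^ (16 ^ k) : ℕ) : ℝ)^6) ∧
      (∀ x : ℝ, ¬ nearZ (1 / ((s0 ^ (16 ^ (k+1)) : ℕ) : ℝ)) x → EE E0 s0 k * (P x).re ≤ EE E0 s0 (k+1)) ∧
      (∀ x : ℝ, ((F' ((x + ω : ℝ) : ℂ)).re + (F' ((x - ω : ℝ) : ℂ)).re) / (F' x).re =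
        ((F ((x + ω : ℝ) : ℂ)).re + (F ((x - ω : ℝ) : ℂ)).re) / (F x).re + EE E0 s0 k * (1 - (P x).re)))
    (fun _ => 1) (by
      have := base_state ω Λ E0 s0 hs hE0 hΛ0
      simpa [EE] using this)
    (fun k F hF => C_step hF (hs.trans (hge k)) (sig_succ s0 k) hc0 hdi (hcs.trans (hger k)) hΛ1 (hΛ.trans (hger k)))
  exact ⟨F, P, hs, hΛ1, hΛ, hE0, h0, fun k => (h k).1, fun k => (h k).2.1, fun k => (h k).2.2.1,
    fun k => (h k).2.2.2.2.1, fun k => (h k).2.2.2.2.2.1, fun k => (h k).2.2.2.2.2.2.1, fun k => (h k).2.2.2.2.2.2.2⟩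



section final
variable {ω Λ E0 : ℝ} {s0 : ℕ} {F P : ℕ → ℂ → ℂ}

theorem EE_pos (hE : 1 ≤ E0) (k : ℕ) : 0 < EE E0 s0 k := by
  cases k with
  | zero => simp only [EE]; linarith
  | succ k => simp only [EE]; exact Real.exp_pos _

theorem sig_one (h : 1000000 ≤ s0) (k : ℕ) : (1000000 * 2^k : ℝ) ≤ ((s0 ^ (16 ^ k) : ℕ) : ℝ) := by
  have h1 := sig_ge s0 k h
  have : 1000000 * 2^k ≤ s0 ^ (16 ^ k) := (Nat.mul_le_mul_right _ h).trans h1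
  exact_mod_cast this

theorem sig_big (h : 1000000 ≤ s0) (k : ℕ) : (1000000 : ℝ) ≤ ((s0 ^ (16 ^ k) : ℕ) : ℝ) := by
  have h1 := sig_one h k
  have h2 : (1:ℝ) ≤ 2^k := one_le_pow₀ (by norm_num)
  linarith

theorem Fam.u_bound (D : Fam ω Λ E0 s0 F P) (k : ℕ) :
    ContDiff ℝ (⊤ : ℕ∞) (fun x : ℝ => EE E0 s0 k * (1 - (P k x).re)) ∧
    ∀ (j : ℕ) (x : ℝ), |iteratedDeriv j (fun x : ℝ => EE E0 s0 k * (1 - (P k x).re)) x| ≤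
      (j.factorial : ℝ) * (EE E0 s0 k * (1 + 4 * ((s0 ^ (16 ^ k) : ℕ) : ℝ)^6)) /
      ((1 / ((s0 ^ (16 ^ (k+1)) : ℕ) : ℝ)^14) / 2)^j := by
  have hE := EE_pos (s0 := s0) D.hE0 k
  have hs := sig_big D.hs0 (k+1)
  have h := deriv_bound (fun z => (EE E0 s0 k : ℂ) * (1 - P k z)) (1 / ((s0 ^ (16 ^ (k+1)) : ℕ) : ℝ)^14)
    (EE E0 s0 k * (1 + 4 * ((s0 ^ (16 ^ k) : ℕ) : ℝ)^6)) (by positivity)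
    ((differentiableOn_const _).mul ((differentiableOn_const _).sub (D.diff k)))
    (by
      intro z hz
      rw [norm_mul, Complex.norm_real, Real.norm_eq_abs, abs_of_pos hE]
      have := D.bd k z hz
      have h2 := norm_sub_le (1:ℂ) (P k z)
      rw [norm_one] at h2
      gcongr
      linarith)
  have e : (fun x : ℝ => ((EE E0 s0 k : ℂ) * (1 - P k x)).re) = fun x : ℝ => EE E0 s0 k * (1 - (P k x).re) := by
    funext x; simp
  rw [e] at h
  exact h

theorem Fam.p_cont (D : Fam ω Λ E0 s0 F P) (k : ℕ) : Continuous (fun x : ℝ => (P k x).re) := by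
  have hE := EE_pos (s0 := s0) D.hE0 k
  have h := (D.u_bound k).1.continuous
  have e : (fun x : ℝ => (P k x).re) = fun x : ℝ => 1 - (EE E0 s0 k * (1 - (P k x).re)) / EE E0 s0 k := by
    funext x; field_simp; ring
  rw [e]
  exact continuous_const.sub (h.div_const _)

/-- partial sums -/
noncomputable def vv (E0 : ℝ) (s0 : ℕ) (P : ℕ → ℂ → ℂ) (n : ℕ) (y : ℝ) : ℝ :=
  2 + ∑ i ∈ Finset.range n, EE E0 s0 i * (1 - (P i y).re)

theorem Fam.vv_eq (D : Fam ω Λ E0 s0 F P) (n : ℕ) (x : ℝ) :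
    vv E0 s0 P n x = ((F n ((x + ω : ℝ) : ℂ)).re + (F n ((x - ω : ℝ) : ℂ)).re) / (F n x).re := by
  induction n with
  | zero => simp [vv, D.F0]; norm_num
  | succ n ih =>
    rw [D.vrec n x, ← ih, vv, vv, Finset.sum_range_succ]; ring

theorem Fam.vv_cont (D : Fam ω Λ E0 s0 F P) (n : ℕ) : ContDiff ℝ (⊤ : ℕ∞) (vv E0 s0 P n) := by
  unfold vv
  exact contDiff_const.add (ContDiff.sum fun i _ => (D.u_bound i).1)

theorem Fam.p_per (D : Fam ω Λ E0 s0 F P) (i : ℕ) (x : ℝ) : (P i ((x + 1 : ℝ) : ℂ)).re = (P i x).re := by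
  have := D.per i x
  push_cast
  rw [this]

theorem Fam.vv_per (D : Fam ω Λ E0 s0 F P) (n : ℕ) : Function.Periodic (vv E0 s0 P n) 1 := by
  intro x
  simp only [vv, D.p_per]

theorem Fam.vv_mul (D : Fam ω Λ E0 s0 F P) (n : ℕ) (x : ℝ) :
    vv E0 s0 P n x * (F n x).re = (F n ((x + ω : ℝ) : ℂ)).re + (F n ((x - ω : ℝ) : ℂ)).re := by
  rw [D.vv_eq n x, div_mul_cancel₀]
  exact ((D.st n).st.fpos x).ne'

theorem Fam.theta (D : Fam ω Λ E0 s0 F P) (k : ℕ) : ∃ θ : ℝ → ℝ, Continuous θ ∧ Function.Periodic θ 1 ∧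
    (∀ x, 0 ≤ θ x) ∧ (∀ x : ℝ, Real.exp (-θ x) * (EE E0 s0 k * (P k x).re) ≤ EE E0 s0 (k+1)) ∧
    ∫ x in (0:ℝ)..1, θ x ≤ (1/2)^(k+1) := by
  have hE := EE_pos (s0 := s0) D.hE0 k
  have hE' := EE_pos (s0 := s0) D.hE0 (k+1)
  have hp : ∀ x : ℝ, 0 < EE E0 s0 k * (P k x).re / EE E0 s0 (k+1) := fun x =>
    div_pos (mul_pos hE (D.pos k x).1) hE'
  have hc : Continuous fun x : ℝ => max 0 (Real.log (EE E0 s0 k * (P k x).re / EE E0 s0 (k+1))) :=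
    continuous_const.max (Continuous.log ((continuous_const.mul (D.p_cont k)).div_const _) (fun x => (hp x).ne'))
  refine ⟨fun x => max 0 (Real.log (EE E0 s0 k * (P k x).re / EE E0 s0 (k+1))), hc, ?_, ?_, ?_, ?_⟩
  · intro x
    simp only [D.p_per]
  · intro x; exact le_max_left _ _
  · intro x
    have h1 : Real.exp (-max 0 (Real.log (EE E0 s0 k * (P k x).re / EE E0 s0 (k+1)))) ≤
        (EE E0 s0 k * (P k x).re / EE E0 s0 (k+1))⁻¹ := by
      rw [← Real.exp_log (hp x), ← Real.exp_neg, Real.exp_log (hp x)]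
      exact Real.exp_le_exp.2 (neg_le_neg (le_max_right _ _))
    have hpos := mul_pos hE (D.pos k x).1
    calc _ ≤ (EE E0 s0 k * (P k x).re / EE E0 s0 (k+1))⁻¹ * (EE E0 s0 k * (P k x).re) := by gcongr
      _ = _ := by rw [inv_div, div_mul_cancel₀ _ hpos.ne']
  · have hσ := sig_big D.hs0 k
    have hσ1 := sig_one D.hs0 k
    have hEs : EE E0 s0 k ≤ ((s0 ^ (16 ^ k) : ℕ) : ℝ) := by
      refine ((D.st k).st.Eup.trans D.hΛ).trans ?_
      have : s0 ≤ s0 ^ (16 ^ k) := (Nat.le_mul_of_pos_right _ (by positivity)).trans (sig_ge s0 k D.hs0)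
      exact_mod_cast this
    have hS : ((s0 ^ (16 ^ (k+1)) : ℕ) : ℝ) = ((s0 ^ (16 ^ k) : ℕ) : ℝ)^16 := by
      rw [sig_succ]; push_cast; rfl
    have hEE : EE E0 s0 (k+1) = Real.exp (-((s0 ^ (16 ^ k) : ℕ) : ℝ)^8) := rfl
    have h := theta_int _ hc (2 * ((s0 ^ (16 ^ k) : ℕ) : ℝ)^8) ((s0 ^ (16 ^ (k+1)) : ℕ) : ℝ)
      (by have := sig_big D.hs0 (k+1); linarith)
      (by
        intro x
        have hpk := D.pos k x
        generalize ((s0 ^ (16 ^ k) : ℕ) : ℝ) = t at *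
        refine max_le (by positivity) ?_
        have ht : 0 < t := by linarith
        rw [Real.log_div (mul_pos hE hpk.1).ne' hE'.ne', hEE, Real.log_exp]
        have h1 : Real.log (EE E0 s0 k * (P k x).re) ≤ 2 * t^7 := by
          refine (Real.log_le_self (mul_pos hE hpk.1).le).trans ?_
          calc EE E0 s0 k * (P k x).re ≤ t * (2 * t^6) := by gcongr; exact hpk.1.le; exact hpk.2
            _ = _ := by ring
        have h2 : 2 * t^7 ≤ t^8 := by
          have : t^8 = t * t^7 := by ring
          rw [this]; gcongr; linarith
        linarith)
      (by
        intro x hx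
        refine max_eq_left (Real.log_nonpos (hp x).le ?_)
        rw [div_le_one hE']
        exact D.far k x hx)
    refine h.trans ?_
    rw [hS]
    generalize ((s0 ^ (16 ^ k) : ℕ) : ℝ) = t at *
    have ht : 0 < t := by linarith
    have e : 2 * (2 * t^8) / t^16 = 4 / t^8 := by field_simp; norm_num
    rw [e]
    have h8 : t ≤ t^8 := by
      calc t = t^1 := by ring
        _ ≤ _ := pow_le_pow_right₀ (by linarith) (by norm_num)
    have h2k : (0:ℝ) < 2^k := by positivity
    rw [one_div, inv_pow, ← one_div, div_le_div_iff₀ (by positivity) (by positivity), pow_succ]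
    linarith

theorem Fam.entry_pos (D : Fam ω Λ E0 s0 F P) (k m : ℕ) (x : ℝ) :
    0 < cocycle ω (SchrodingerCocycle (fun y => vv E0 s0 P k y + EE E0 s0 k)) m x 0 0 :=
  (det_compare ω (fun x : ℝ => (F k x).re) (vv E0 s0 P k) (fun _ => EE E0 s0 k) (fun _ => EE E0 s0 k) (fun _ => 0)
    (D.st k).st.fpos (D.vv_mul k) (fun _ => (EE_pos D.hE0 k).le) (fun _ => le_rfl) (by simp) x m).1

theorem Fam.int_lower (D : Fam ω Λ E0 s0 F P) (κ : ℝ) (hE : E0 = Real.exp (κ + 1)) (m k : ℕ) :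
    m * (κ + (1/2)^k) ≤ ∫ x in (0:ℝ)..1,
      Real.log (cocycle ω (SchrodingerCocycle (fun y => vv E0 s0 P k y + EE E0 s0 k)) m x 0 0) := by
  induction k with
  | zero =>
    have e : (fun y => vv E0 s0 P 0 y + EE E0 s0 0) = fun _ => 2 + E0 := by
      funext y; simp [vv, EE]
    have hpos := D.entry_pos 0 m
    rw [e] at hpos ⊢
    have hcont : Continuous fun x => Real.log (cocycle ω (SchrodingerCocycle (fun _ => 2 + E0)) m x 0 0) :=
      (entry_continuous ω _ (by fun_prop) m).log (fun x => (hpos x).ne')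
    have h1 : ∫ x in (0:ℝ)..1, (m * (κ + (1/2)^0) : ℝ) ≤ ∫ x in (0:ℝ)..1,
      Real.log (cocycle ω (SchrodingerCocycle (fun _ => 2 + E0)) m x 0 0) := by
      refine intervalIntegral.integral_mono_on (by norm_num) (by simp) (hcont.intervalIntegrable _ _) ?_
      intro x _
      have hE0 := D.hE0
      have hb := base_det ω (2 + E0) (by linarith) x m
      rw [Real.le_log_iff_exp_le (hpos x)]
      refine le_trans ?_ hb
      rw [pow_zero, Real.exp_nat_mul, ← hE]
      gcongr
      linarith
    simpa using h1
  | succ k ih =>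
    obtain ⟨θ, hc, hper, h0, hq, hsmall⟩ := D.theta k
    have hcomp := int_compare ω (fun x : ℝ => (F (k+1) x).re) (vv E0 s0 P (k+1))
      (fun x : ℝ => EE E0 s0 k * (P k x).re) (fun _ => EE E0 s0 (k+1)) θ
      (D.st (k+1)).st.fpos (D.vv_mul (k+1)) (fun x => (mul_pos (EE_pos D.hE0 k) (D.pos k x).1).le) h0 hq
      (D.vv_cont (k+1)).continuous (continuous_const.mul (D.p_cont k)) continuous_const hc hper m
    have e : (fun y : ℝ => vv E0 s0 P (k+1) y + EE E0 s0 k * (P k y).re) = fun y => vv E0 s0 P k y + EE E0 s0 k := by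
      funext y; simp only [vv, Finset.sum_range_succ]; ring
    rw [e] at hcomp
    have hm : (m:ℝ) * ∫ x in (0:ℝ)..1, θ x ≤ m * (1/2)^(k+1) := by gcongr
    refine le_trans ?_ hcomp
    have e2 : (1/2:ℝ)^k = (1/2)^(k+1) + (1/2)^(k+1) := by rw [pow_succ]; ring
    rw [e2] at ih
    linarith

theorem Fam.LEn_lower (D : Fam ω Λ E0 s0 F P) (κ : ℝ) (hE : E0 = Real.exp (κ + 1)) (m k : ℕ) (hm : 1 ≤ m) :
    κ ≤ LEn ω (SchrodingerCocycle (fun y => vv E0 s0 P k y + EE E0 s0 k)) m := by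
  refine LEn_ge_of_int ω _ ((D.vv_cont k).continuous.add continuous_const) m hm κ (D.entry_pos k m) ?_
  refine le_trans ?_ (D.int_lower κ hE m k)
  have : (0:ℝ) ≤ (1/2)^k := by positivity
  gcongr
  linarith

theorem EE_tendsto (h : 1000000 ≤ s0) : Tendsto (EE E0 s0) atTop (nhds 0) := by
  rw [← tendsto_add_atTop_iff_nat 1]
  refine squeeze_zero (g := fun k : ℕ => (1/2:ℝ)^k) (fun k => by simp only [EE]; positivity) ?_
    (tendsto_pow_atTop_nhds_zero_of_lt_one (by norm_num) (by norm_num))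
  intro k
  have h1 := sig_one h k
  have h2 : (0:ℝ) < 2^k := by positivity
  have h3 := pow_exp_le ((s0 ^ (16 ^ k) : ℕ) : ℝ) (by have := sig_big h k; linarith) 0
  simp only [EE]
  refine le_trans (by simpa using h3) ?_
  rw [one_div, inv_pow]
  exact inv_anti₀ h2 (by push_cast at h1; linarith)

end final


theorem schrodinger_positive_LE_not_Cinf_open_approx
    (ω : ℝ) (hω : Irrational ω)
    (M : ℝ) (hM : 1 ≤ M) (hbt : ∀ k : ℕ, cfDen ω (k + 1) ≤ M * cfDen ω k)
    (κ : ℝ) (hκ : 0 < κ) :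
    ∃ (v : ℝ → ℝ) (vseq : ℕ → ℝ → ℝ),
      Function.Periodic v 1 ∧ ContDiff ℝ (⊤ : ℕ∞) v ∧
      (∀ n, Function.Periodic (vseq n) 1 ∧ ContDiff ℝ (⊤ : ℕ∞) (vseq n)) ∧
      -- (i) L(S_v) ≥ κ
      (∃ L : ℝ, κ ≤ L ∧
        Tendsto (fun m => LEn ω (SchrodingerCocycle v) m) atTop (nhds L)) ∧
      -- (ii) L(S_{v_n}) = 0 for every n
      (∀ n, Tendsto (fun m => LEn ω (SchrodingerCocycle (vseq n)) m) atTop (nhds 0)) ∧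
      -- (iii) for every l, ‖v_n − v‖_{C^l} → 0
      (∀ l : ℕ, ∀ ε : ℝ, 0 < ε → ∃ N : ℕ, ∀ n ≥ N, ∀ j ≤ l, ∀ x : ℝ,
        |iteratedDeriv j (fun y => vseq n y - v y) x| ≤ ε) := by
  obtain ⟨c0, hc0, hc1, hdi⟩ := dioph_lower ω hω M hM hbt
  have hE1 : 1 ≤ Real.exp (κ + 1) := Real.one_le_exp (by linarith)
  obtain ⟨s0, hs0⟩ := exists_nat_ge (max 1000000 (max (20 / c0) (Real.exp (κ + 1) + 3)))
  have hs1 : (1000000:ℝ) ≤ s0 := (le_max_left _ _).trans hs0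
  have hs2 : 20 / c0 ≤ s0 := ((le_max_left _ _).trans (le_max_right _ _)).trans hs0
  have hs3 : Real.exp (κ + 1) + 3 ≤ s0 := ((le_max_right _ _).trans (le_max_right _ _)).trans hs0
  have hsn : 1000000 ≤ s0 := by exact_mod_cast hs1
  have hinv : 1 / (s0:ℝ) ≤ 1 := by
    rw [div_le_one (by linarith)]; linarith
  obtain ⟨F, P, D⟩ := fam_exists ω c0 (Real.exp (κ + 1) + 3) (Real.exp (κ + 1)) s0 hsn hc0 hdi hs2 hE1
    (by linarith) hs3
  set E0 := Real.exp (κ + 1) with hE0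
  obtain ⟨hsm, hsum, hconv⟩ := smooth_assembly (fun i (x : ℝ) => EE E0 s0 i * (1 - (P i x).re))
    (fun i => (D.u_bound i).1) _ (b_summable E0 s0 hsn) (fun j i x => (D.u_bound i).2 j x)
  have hvper : Function.Periodic (fun x : ℝ => 2 + ∑' i, EE E0 s0 i * (1 - (P i x).re)) 1 := by
    intro x
    simp only [D.p_per]
  refine ⟨fun x : ℝ => 2 + ∑' i, EE E0 s0 i * (1 - (P i x).re), vv E0 s0 P, hvper, hsm,
    fun n => ⟨D.vv_per n, D.vv_cont n⟩, ?_, ?_, hconv⟩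
  · obtain ⟨L, hL⟩ := LE_exists ω _ hsm.continuous hvper
    refine ⟨L, ge_of_tendsto hL ?_, hL⟩
    filter_upwards [eventually_ge_atTop 1] with m hm
    have hlim := LEn_limit ω (fun x : ℝ => 2 + ∑' i, EE E0 s0 i * (1 - (P i x).re))
      (fun k y => vv E0 s0 P k y + EE E0 s0 k)
      (fun k => (D.vv_cont k).continuous.add continuous_const)
      (fun x => by
        have h1 := ((hsum x).hasSum.tendsto_sum_nat.const_add 2).add (EE_tendsto (E0 := E0) hsn)
        simpa [vv] using h1)
      (E0 + 3 + 2)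
      (fun k x => by
        have hv := D.vv_eq k x
        have hS := (D.st k).st
        have hE := EE_pos (s0 := s0) D.hE0 k
        have h0 : 0 ≤ vv E0 s0 P k x := by
          rw [hv]
          exact div_nonneg (add_nonneg (hS.fpos _).le (hS.fpos _).le) (hS.fpos _).le
        rw [abs_of_nonneg (by linarith)]
        have hb := hS.vb x
        rw [← hv] at hb
        have : (0:ℝ) ≤ 1 / ((s0 ^ (16 ^ k) : ℕ) : ℝ) := by positivity
        linarith) m
    exact ge_of_tendsto' hlim (fun k => D.LEn_lower κ hE0 m k hm)
  · intro n
    exact zero_LE ω (vv E0 s0 P n) (fun x : ℝ => (F n x).re) _ 1 (Real.exp_pos _) (D.st n).st.fexp (D.st n).st.fle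
      (D.vv_mul n) (D.vv_cont n).continuous
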